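/- arXiv:1311.0335 — 3 statements merged into one kernel-verified Lean document; each statement's English description precedes it below -/
import Mathlib

section
/- The set of absolutely normal numbers is Π⁰₃-hard: for every set A ⊆ ℕ^ℕ that is Π⁰₃ in Baire space (i.e., A = ⋂_n ⋃_m C_{n,m} for closed sets C_{n,m} ⊆ ℕ^ℕ in the product topology), there is a continuous function g : ℕ^ℕ → ℝ such that for every f ∈ ℕ^ℕ: if f ∈ A then g(f) is absolutely normal, and if f ∉ A then g(f) is absolutely abnormal. In particular, f ∈ A iff g(f) is absolutely normal. -/
open Filter

/-- The `(i+1)`-st digit (for `i = 0, 1, 2, ...`) of the base-`b` expansion of the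
fractional part of a real `R`.  For `R ∈ [0,1)` this is the unique expansion of `R`
whose digits are not eventually all equal to `b - 1`; for general `R`, normality is
defined via the fractional part. -/
noncomputable def rdigit (b : ℕ) (R : ℝ) (i : ℕ) : ℕ :=
  (⌊Int.fract R * (b : ℝ) ^ (i + 1)⌋).toNat % b

/-- The block consisting of the first `n` digits of the base-`b` expansion of `R`. -/
noncomputable def rdigits (b : ℕ) (R : ℝ) (n : ℕ) : List ℕ := (List.range n).map (rdigit b R)

/-- `R` is simply normal to base `b`: every digit `d < b` occurs with limiting
frequency `1/b` in the base-`b` expansion of `R`. -/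
def SimplyNormal (b : ℕ) (R : ℝ) : Prop :=
  ∀ d < b, Tendsto (fun n => ((rdigits b R n).count d : ℝ) / n) atTop (nhds (1 / (b : ℝ)))

/-- `R` is normal to base `b`: it is simply normal to base `b ^ ℓ` for every `ℓ ≥ 1`. -/
def NormalBase (b : ℕ) (R : ℝ) : Prop := ∀ ℓ : ℕ, 1 ≤ ℓ → SimplyNormal (b ^ ℓ) R

/-- `R` is absolutely normal: normal to every base `b ≥ 2`. -/
def AbsolutelyNormal (R : ℝ) : Prop := ∀ b : ℕ, 2 ≤ b → NormalBase b R

/-- `R` is absolutely abnormal: normal to no base `b ≥ 2`. -/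
def AbsolutelyAbnormal (R : ℝ) : Prop := ∀ b : ℕ, 2 ≤ b → ¬ NormalBase b R

noncomputable def cnt (b d : ℕ) (y : ℝ) (n : ℕ) : ℝ :=
  ∑ i ∈ Finset.range n, if rdigit b y i = d then (1:ℝ) else 0

lemma cnt_eq (b d : ℕ) (y : ℝ) (n : ℕ) : ((rdigits b y n).count d : ℝ) = cnt b d y n := by
  unfold cnt rdigits
  induction n with
  | zero => simp
  | succ n ih =>
    rw [List.range_succ, List.map_append, List.count_append, Nat.cast_add, ih,
      Finset.sum_range_succ]
    simp [List.count_singleton]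

lemma rdigit_eq (b : ℕ) (hb : 1 ≤ b) (x : ℝ) (i : ℕ) :
    rdigit b x i = (⌊(b:ℝ) ^ (i+1) * x⌋ % (b:ℤ)).toNat := by
  unfold rdigit
  have h1 : Int.fract x * (b:ℝ)^(i+1) = (b:ℝ)^(i+1) * x - ((⌊x⌋ * (b:ℤ)^(i+1) : ℤ) : ℝ) := by
    push_cast
    rw [Int.fract]; ring
  have h0 : 0 ≤ ⌊Int.fract x * (b:ℝ)^(i+1)⌋ :=
    Int.floor_nonneg.mpr (mul_nonneg (Int.fract_nonneg x) (by positivity))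
  have h2 : ⌊Int.fract x * (b:ℝ)^(i+1)⌋ = ⌊(b:ℝ)^(i+1) * x⌋ - ⌊x⌋ * (b:ℤ)^(i+1) := by
    rw [h1, Int.floor_sub_intCast]
  have h3 : ⌊(b:ℝ)^(i+1) * x⌋ % (b:ℤ) = ⌊Int.fract x * (b:ℝ)^(i+1)⌋ % (b:ℤ) := by
    rw [h2, pow_succ (b:ℤ), ← mul_assoc, Int.sub_mul_emod_self_right]
  rw [h3]
  zify
  rw [Int.toNat_of_nonneg h0, Int.toNat_of_nonneg (Int.emod_nonneg _ (by omega))]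

lemma rdigit_congr (b : ℕ) (hb : 1 ≤ b) (x y : ℝ) (Q i : ℕ) (hi : i < Q)
    (h : ⌊(b:ℝ) ^ Q * x⌋ = ⌊(b:ℝ) ^ Q * y⌋) : rdigit b x i = rdigit b y i := by
  have key : ∀ z : ℝ, ⌊(b:ℝ) ^ (i+1) * z⌋ = ⌊(b:ℝ) ^ Q * z⌋ / ((b^(Q-(i+1)) : ℕ) : ℤ) := by
    intro z
    rw [← Int.floor_div_natCast]
    congr 1
    have : Q = (i+1) + (Q-(i+1)) := by omega
    have hb' : (b:ℝ) ≠ 0 := by positivity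
    rw [eq_div_iff (by positivity)]
    conv_rhs => rw [this, pow_add]
    push_cast; ring
  rw [rdigit_eq b hb, rdigit_eq b hb, key x, key y, h]

lemma rdigit_shift (b : ℕ) (hb : 1 ≤ b) (x : ℝ) (m i : ℕ) :
    rdigit b x (m+i) = rdigit b (Int.fract ((b:ℝ)^m * x)) i := by
  rw [rdigit_eq b hb, rdigit_eq b hb]
  have : (b:ℝ)^(i+1) * Int.fract ((b:ℝ)^m * x)
      = (b:ℝ)^(m+i+1) * x - ((⌊(b:ℝ)^m * x⌋ * (b:ℤ)^(i+1) : ℤ) : ℝ) := by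
    push_cast
    rw [Int.fract]; ring
  rw [this, Int.floor_sub_intCast, pow_succ (b:ℤ), ← mul_assoc, Int.sub_mul_emod_self_right]

lemma rdigit_zero_eq (b : ℕ) (hb : 1 ≤ b) (x : ℝ) (hx : x ∈ Set.Ico (0:ℝ) 1) :
    rdigit b x 0 = ⌊(b:ℝ) * x⌋₊ := by
  rw [rdigit_eq b hb]
  have hx' : 0 ≤ (b:ℝ) * x := mul_nonneg (by positivity) hx.1
  have h1 : ⌊(b:ℝ)*x⌋ = (⌊(b:ℝ)*x⌋₊ : ℤ) := (Int.natCast_floor_eq_floor hx').symm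
  have h2 : ⌊(b:ℝ)*x⌋₊ < b := by
    rw [Nat.floor_lt hx']
    have : (0:ℝ) < b := by positivity
    nlinarith [hx.2]
  simp only [zero_add, pow_one]
  rw [h1, ← Int.natCast_mod, Nat.mod_eq_of_lt h2]; simp

lemma cnt_add (b d : ℕ) (hb : 1 ≤ b) (x : ℝ) (m n : ℕ) :
    cnt b d x (m+n) = cnt b d x m + cnt b d (Int.fract ((b:ℝ)^m * x)) n := by
  unfold cnt
  rw [Finset.sum_range_add]
  simp [rdigit_shift b hb]

lemma cnt_nonneg (b d : ℕ) (x : ℝ) (n : ℕ) : 0 ≤ cnt b d x n :=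
  Finset.sum_nonneg (fun i _ => by split_ifs <;> norm_num)

lemma cnt_le (b d : ℕ) (x : ℝ) (n : ℕ) : cnt b d x n ≤ n := by
  calc cnt b d x n ≤ ∑ i ∈ Finset.range n, (1:ℝ) :=
        Finset.sum_le_sum (fun i _ => by split_ifs <;> norm_num)
    _ = n := by simp

lemma cnt_dev_le (b d : ℕ) (hb : 1 ≤ b) (x : ℝ) (n : ℕ) : |cnt b d x n - n / b| ≤ n := by
  have h1 := cnt_nonneg b d x n
  have h2 := cnt_le b d x n
  have hb' : (1:ℝ) ≤ b := by exact_mod_cast hb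
  have h3 : (n:ℝ) / b ≤ n := div_le_self (by positivity) hb'
  have h4 : (0:ℝ) ≤ n / b := by positivity
  rw [abs_le]; constructor <;> linarith

lemma cnt_congr (b d : ℕ) (hb : 1 ≤ b) (x y : ℝ) (Q n : ℕ) (hn : n ≤ Q)
    (h : ⌊(b:ℝ) ^ Q * x⌋ = ⌊(b:ℝ) ^ Q * y⌋) : cnt b d x n = cnt b d y n := by
  unfold cnt
  refine Finset.sum_congr rfl (fun i hi => ?_)
  rw [rdigit_congr b hb x y Q i (by have := Finset.mem_range.mp hi; omega) h]

open MeasureTheory ProbabilityTheory in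
lemma dig_measure (b : ℕ) (hb : 2 ≤ b) (d : ℕ) (hd : d < b) (B : Set ℝ) (hB : MeasurableSet B) :
    volume (({x | rdigit b x 0 = d} ∩ (fun x : ℝ => Int.fract ((b:ℝ) * x)) ⁻¹' B)
      ∩ Set.Ico (0:ℝ) 1) = ENNReal.ofReal ((b:ℝ)⁻¹) * volume (B ∩ Set.Ico (0:ℝ) 1) := by
  have hb0 : (0:ℝ) < b := by positivity
  have hset : (({x | rdigit b x 0 = d} ∩ (fun x : ℝ => Int.fract ((b:ℝ) * x)) ⁻¹' B)
      ∩ Set.Ico (0:ℝ) 1)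
      = (fun x => (b:ℝ) * x) ⁻¹' ((fun z => z + (-(d:ℝ))) ⁻¹' (B ∩ Set.Ico (0:ℝ) 1)) := by
    ext x
    simp only [Set.mem_inter_iff, Set.mem_ofPred_eq, Set.mem_preimage, ← sub_eq_add_neg]
    constructor
    · rintro ⟨⟨h1, h2⟩, hx⟩
      have hx' : 0 ≤ (b:ℝ) * x := mul_nonneg hb0.le hx.1
      rw [rdigit_zero_eq b (by omega) x hx] at h1
      have h3 : Int.fract ((b:ℝ)*x) = (b:ℝ)*x - d := by
        rw [Int.fract, ← Int.natCast_floor_eq_floor hx', h1]; simp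
      rw [← h3]
      exact ⟨h2, Int.fract_nonneg _, Int.fract_lt_one _⟩
    · rintro ⟨h1, h2, h3⟩
      have hd0 : (0:ℝ) ≤ d := by positivity
      have hd1 : (d:ℝ) + 1 ≤ b := by exact_mod_cast hd
      have hx : x ∈ Set.Ico (0:ℝ) 1 := by
        constructor
        · by_contra h; push Not at h; nlinarith
        · by_contra h; push Not at h; nlinarith
      have hx' : 0 ≤ (b:ℝ) * x := mul_nonneg hb0.le hx.1
      have h4 : ⌊(b:ℝ)*x⌋₊ = d := by
        rw [Nat.floor_eq_iff hx']; constructor <;> linarith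
      have h5 : Int.fract ((b:ℝ)*x) = (b:ℝ)*x - d := by
        rw [Int.fract, ← Int.natCast_floor_eq_floor hx', h4]; simp
      refine ⟨⟨?_, ?_⟩, hx⟩
      · rw [rdigit_zero_eq b (by omega) x hx, h4]
      · rw [h5]; exact h1
  rw [hset, Real.volume_preimage_mul_left hb0.ne', measure_preimage_add_right,
    abs_of_pos (inv_pos.mpr hb0)]

lemma measurable_rdigit (b : ℕ) (i : ℕ) : Measurable (fun x => rdigit b x i) := by
  unfold rdigit
  have h1 : Measurable (fun x : ℝ => ⌊Int.fract x * (b:ℝ)^(i+1)⌋) :=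
    Int.measurable_floor.comp (measurable_fract.mul_const _)
  exact (measurable_from_top (f := fun z : ℤ => z.toNat % b)).comp h1

lemma rdigit_lt (b : ℕ) (hb : 1 ≤ b) (x : ℝ) (i : ℕ) : rdigit b x i < b := Nat.mod_lt _ hb

open MeasureTheory in
lemma T_mp (b : ℕ) (hb : 2 ≤ b) : MeasurePreserving (fun x : ℝ => Int.fract ((b:ℝ) * x))
    (volume.restrict (Set.Ico (0:ℝ) 1)) (volume.restrict (Set.Ico (0:ℝ) 1)) := by
  have hT : Measurable (fun x : ℝ => Int.fract ((b:ℝ) * x)) :=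
    measurable_fract.comp (measurable_id.const_mul _)
  refine ⟨hT, ?_⟩
  ext B hB
  rw [Measure.map_apply hT hB, Measure.restrict_apply (hT hB), Measure.restrict_apply hB]
  have h1 : (fun x : ℝ => Int.fract ((b:ℝ) * x)) ⁻¹' B ∩ Set.Ico (0:ℝ) 1
      = ⋃ d ∈ Finset.range b, (({x | rdigit b x 0 = d} ∩ (fun x : ℝ => Int.fract ((b:ℝ) * x)) ⁻¹' B)
      ∩ Set.Ico (0:ℝ) 1) := by
    ext x
    have := rdigit_lt b (by omega) x 0
    simp only [Set.mem_inter_iff, Set.mem_iUnion, Finset.mem_range, Set.mem_ofPred_eq]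
    constructor
    · rintro ⟨h, h'⟩; exact ⟨_, this, ⟨rfl, h⟩, h'⟩
    · rintro ⟨d, hd, ⟨_, h⟩, h'⟩; exact ⟨h, h'⟩
  rw [h1, measure_biUnion_finset]
  · rw [Finset.sum_congr rfl (fun d hd => dig_measure b hb d (Finset.mem_range.mp hd) B hB)]
    rw [Finset.sum_const, Finset.card_range, nsmul_eq_mul, ← mul_assoc]
    have : (b:ENNReal) * ENNReal.ofReal ((b:ℝ)⁻¹) = 1 := by
      rw [← ENNReal.ofReal_natCast, ← ENNReal.ofReal_mul (by positivity), mul_inv_cancel₀ (by positivity)]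
      simp
    rw [this, one_mul]
  · intro d _ e _ hde
    rw [Function.onFun, Set.disjoint_left]
    rintro x ⟨⟨h, _⟩, _⟩ ⟨⟨h', _⟩, _⟩
    exact hde (h.symm.trans h')
  · intro d _
    exact (((measurable_rdigit b 0) (measurableSet_singleton d)).inter (hT hB)).inter measurableSet_Ico

lemma T_iter (b : ℕ) (hb : 1 ≤ b) (i : ℕ) (x : ℝ) :
    ∀ j, rdigit b ((fun x : ℝ => Int.fract ((b:ℝ) * x))^[i] x) j = rdigit b x (i + j) := by
  induction i with
  | zero => intro j; simp
  | succ i ih =>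
    intro j
    rw [Function.iterate_succ_apply']
    have := rdigit_shift b hb ((fun x : ℝ => Int.fract ((b:ℝ) * x))^[i] x) 1 j
    rw [pow_one] at this
    rw [← this, ih]; congr 1; omega

open MeasureTheory ProbabilityTheory in
lemma slln (b : ℕ) (hb : 2 ≤ b) (d : ℕ) (hd : d < b) :
    ∀ᵐ x ∂(volume.restrict (Set.Ico (0:ℝ) 1)),
      Tendsto (fun n : ℕ => cnt b d x n / n) atTop (nhds (1 / (b:ℝ))) := by
  set μ := volume.restrict (Set.Ico (0:ℝ) 1) with hμ
  have hprob : IsProbabilityMeasure μ := ⟨by simp [hμ]⟩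
  set T := (fun x : ℝ => Int.fract ((b:ℝ) * x)) with hT
  have hTm : MeasurePreserving T μ μ := T_mp b hb
  let φ : ℕ → ℝ := fun k => if k = d then 1 else 0
  have hφ : Measurable φ := measurable_from_top
  let X : ℕ → ℝ → ℝ := fun i x => φ (rdigit b x i)
  have hX : ∀ i, Measurable (X i) := fun i => hφ.comp (measurable_rdigit b i)
  have hXT : ∀ i j, X (i + j) = X j ∘ T^[i] := by
    intro i j; ext x
    simp only [X, Function.comp]
    rw [T_iter b (by omega)]
  have hA : ∀ B : Set ℝ, MeasurableSet B → μ ({x | rdigit b x 0 = d} ∩ T ⁻¹' B)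
      = ENNReal.ofReal ((b:ℝ)⁻¹) * μ B := by
    intro B hB
    have := dig_measure b hb d hd B hB
    rw [hμ, Measure.restrict_apply hB, ← this, Measure.restrict_apply]
    exact ((measurable_rdigit b 0) (measurableSet_singleton d)).inter (hTm.measurable hB)
  have hA0 : μ {x | rdigit b x 0 = d} = ENNReal.ofReal ((b:ℝ)⁻¹) := by
    have := hA Set.univ MeasurableSet.univ
    simpa using this
  have hmA : MeasurableSet {x | rdigit b x 0 = d} :=
    (measurable_rdigit b 0) (measurableSet_singleton d)
  have hX0 : X 0 = Set.indicator {x | rdigit b x 0 = d} (fun _ => (1:ℝ)) := by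
    ext x; simp [X, φ, Set.indicator]
  -- independence with the future
  have hind0 : ∀ Y : ℝ → ℝ, Measurable Y → IndepFun (X 0) (Y ∘ T) μ := by
    intro Y hY
    have hYT : Measurable (Y ∘ T) := hY.comp hTm.measurable
    have hI : Indep (MeasurableSpace.generateFrom {{x | rdigit b x 0 = d}})
        (MeasurableSpace.comap (Y ∘ T) inferInstance) μ := by
      have h2 : MeasurableSpace.comap (Y ∘ T) inferInstance
          = MeasurableSpace.generateFrom {s | MeasurableSet[MeasurableSpace.comap (Y ∘ T) inferInstance] s} :=
        (@MeasurableSpace.generateFrom_measurableSet _ (MeasurableSpace.comap (Y ∘ T) inferInstance)).symm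
      refine IndepSets.indep (p1 := {{x | rdigit b x 0 = d}})
        (p2 := {s | MeasurableSet[MeasurableSpace.comap (Y ∘ T) inferInstance] s}) ?_ ?_
        (IsPiSystem.singleton _) ?_ rfl h2 ?_
      · exact MeasurableSpace.generateFrom_le (by simpa using hmA)
      · exact hYT.comap_le
      · exact @MeasurableSpace.isPiSystem_measurableSet _ (MeasurableSpace.comap (Y ∘ T) inferInstance)
      · rw [IndepSets_iff]
        rintro s t hs ⟨u, hu, rfl⟩
        rw [Set.mem_singleton_iff] at hs
        subst hs
        rw [Set.preimage_comp, hA _ (hY hu), hTm.measure_preimage (hY hu).nullMeasurableSet, hA0]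
    have : MeasurableSpace.comap (X 0) inferInstance
        ≤ MeasurableSpace.generateFrom {{x | rdigit b x 0 = d}} := by
      rw [← measurable_iff_comap_le, hX0]
      exact Measurable.indicator (m := MeasurableSpace.generateFrom _) measurable_const
        (MeasurableSpace.measurableSet_generateFrom (by simp))
    exact indep_of_indep_of_le_left hI this
  have hlt : ∀ i j, i < j → IndepFun (X i) (X j) μ := by
    intro i j hij
    obtain ⟨k, rfl⟩ : ∃ k, j = i + (1 + k) := ⟨j - i - 1, by omega⟩
    have h1 := hind0 (X k) (hX k)
    have h2 : X (1 + k) = X k ∘ T := by rw [hXT]; rfl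
    rw [← h2] at h1
    have h3 : X i = X 0 ∘ T^[i] := by rw [← hXT]; rfl
    rw [h3, hXT i (1+k)]
    rw [indepFun_iff_measure_inter_preimage_eq_mul] at h1 ⊢
    intro s t hs ht
    have hp := hTm.iterate i
    rw [Set.preimage_comp, Set.preimage_comp, ← Set.preimage_inter,
      hp.measure_preimage ((hX _ hs).inter (hX _ ht)).nullMeasurableSet,
      hp.measure_preimage (hX _ hs).nullMeasurableSet,
      hp.measure_preimage (hX _ ht).nullMeasurableSet]
    exact h1 s t hs ht
  have hpair : Pairwise (Function.onFun (fun f g => IndepFun f g μ) X) := by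
    intro i j hij
    rcases lt_or_gt_of_ne hij with h | h
    · exact hlt i j h
    · exact (hlt j i h).symm
  have hident : ∀ i, IdentDistrib (X i) (X 0) μ μ := by
    intro i
    refine ⟨(hX i).aemeasurable, (hX 0).aemeasurable, ?_⟩
    have h3 : X i = X 0 ∘ T^[i] := by rw [← hXT]; rfl
    have hp := hTm.iterate i
    rw [h3, ← Measure.map_map (hX 0) hp.measurable, hp.map_eq]
  have hint : Integrable (X 0) μ := by
    rw [hX0]; exact (integrable_const _).indicator hmA
  have := strong_law_ae_real X hint hpair hident
  have hE : ∫ x, X 0 x ∂μ = 1 / (b:ℝ) := by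
    rw [hX0, integral_indicator_const _ hmA, Measure.real, hA0]
    rw [ENNReal.toReal_ofReal (by positivity)]; simp
  rw [hE] at this
  exact this

open MeasureTheory in
lemma goodset (b : ℕ) (hb : 2 ≤ b) (ε η : ℝ) (hε : 0 < ε) (hη : 0 < η) :
    ∃ (N : ℕ) (B : Set ℝ), volume (B ∩ Set.Ico (0:ℝ) 1) ≤ ENNReal.ofReal η ∧
      ∀ x ∈ Set.Ico (0:ℝ) 1, x ∉ B → ∀ n ≥ N, ∀ d < b, |cnt b d x n - n / b| ≤ ε * n := by
  have hb0 : (0:ℝ) < b := by positivity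
  have h1 : ∀ d : ℕ, ∃ (N : ℕ) (B : Set ℝ), d < b →
      volume (B ∩ Set.Ico (0:ℝ) 1) ≤ ENNReal.ofReal (η / b) ∧
      ∀ x ∉ B, ∀ n ≥ N, |cnt b d x n - n / b| ≤ ε * n := by
    intro d
    by_cases hd : d < b
    · have hm : ∀ n : ℕ, StronglyMeasurable (fun x => cnt b d x n / n) := by
        intro n
        apply Measurable.stronglyMeasurable
        apply Measurable.div_const
        unfold cnt
        refine Finset.measurable_sum _ (fun i _ => ?_)
        exact (measurable_from_top (f := fun k : ℕ => if k = d then (1:ℝ) else 0)).comp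
          (measurable_rdigit b i)
      obtain ⟨t, ht, htm, hu⟩ := tendstoUniformlyOn_of_ae_tendsto' hm
        (stronglyMeasurable_const (b := 1 / (b:ℝ))) (slln b hb d hd) (ε := η / b) (by positivity)
      rw [Metric.tendstoUniformlyOn_iff] at hu
      obtain ⟨N, hN⟩ := eventually_atTop.mp (hu ε hε)
      refine ⟨N + 1, t, fun _ => ⟨?_, ?_⟩⟩
      · rwa [Measure.restrict_apply ht] at htm
      · intro x hx n hn
        have h := hN n (by omega) x hx
        have hn0 : (0:ℝ) < n := by exact_mod_cast (by omega : 0 < n)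
        rw [dist_comm, Real.dist_eq] at h
        have e : cnt b d x n - n / b = (cnt b d x n / n - 1 / b) * n := by
          field_simp
        rw [e, abs_mul, abs_of_pos hn0]
        exact mul_le_mul_of_nonneg_right h.le hn0.le
    · exact ⟨0, ∅, fun h => absurd h hd⟩
  choose N B h using h1
  refine ⟨∑ d ∈ Finset.range b, N d, ⋃ d ∈ Finset.range b, B d, ?_, ?_⟩
  · rw [Set.iUnion₂_inter]
    calc volume (⋃ d ∈ Finset.range b, B d ∩ Set.Ico (0:ℝ) 1)
        ≤ ∑ d ∈ Finset.range b, volume (B d ∩ Set.Ico (0:ℝ) 1) := measure_biUnion_finset_le _ _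
      _ ≤ ∑ d ∈ Finset.range b, ENNReal.ofReal (η / b) :=
          Finset.sum_le_sum (fun d hd => (h d (Finset.mem_range.mp hd)).1)
      _ = ENNReal.ofReal η := by
          rw [Finset.sum_const, Finset.card_range, nsmul_eq_mul, ← ENNReal.ofReal_natCast,
            ← ENNReal.ofReal_mul (by positivity)]
          congr 1; field_simp
  · intro x _ hxB n hn d hd
    have hmem := Finset.mem_range.mpr hd
    refine (h d hd).2 x ?_ n ?_
    · intro hx; exact hxB (Set.mem_biUnion hmem hx)
    · exact le_trans (Finset.single_le_sum (f := N) (fun _ _ => Nat.zero_le _) hmem) hn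

open MeasureTheory in
lemma periodic_measure (B : Set ℝ) (η : ℝ) (hη : 0 ≤ η)
    (hB : volume (B ∩ Set.Ico (0:ℝ) 1) ≤ ENNReal.ofReal η) (M a δ : ℝ) (hM : 0 < M) (hδ : 0 < δ) :
    volume {x | x ∈ Set.Ico a (a+δ) ∧ Int.fract (M * x) ∈ B}
      ≤ ENNReal.ofReal ((δ + 2 / M) * η) := by
  set s := Finset.Icc ⌊M * a⌋ ⌊M * (a+δ)⌋
  have hsub : {x | x ∈ Set.Ico a (a+δ) ∧ Int.fract (M * x) ∈ B} ⊆
      ⋃ k ∈ s, (fun x => M * x) ⁻¹' ((fun z => z + (-(k:ℝ))) ⁻¹' (B ∩ Set.Ico (0:ℝ) 1)) := by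
    rintro x ⟨hx, hxB⟩
    have hk : ⌊M*x⌋ ∈ s := by
      rw [Finset.mem_Icc]
      exact ⟨Int.floor_le_floor (mul_le_mul_of_nonneg_left hx.1 hM.le),
        Int.floor_le_floor (mul_le_mul_of_nonneg_left hx.2.le hM.le)⟩
    refine Set.mem_biUnion (Finset.mem_coe.mpr hk) ?_
    show M * x + -(⌊M*x⌋:ℝ) ∈ B ∩ Set.Ico (0:ℝ) 1
    rw [← sub_eq_add_neg]
    exact ⟨hxB, Int.fract_nonneg _, Int.fract_lt_one _⟩
  refine (measure_mono hsub).trans ((measure_biUnion_finset_le _ _).trans ?_)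
  have hcard : (s.card : ℝ) ≤ M * δ + 2 := by
    have h1 : ((s.card : ℤ) : ℝ) = ⌊M * (a+δ)⌋ + 1 - ⌊M*a⌋ := by
      rw [Int.card_Icc, Int.toNat_of_nonneg]
      · push_cast; ring
      · have : ⌊M*a⌋ ≤ ⌊M*(a+δ)⌋ := Int.floor_le_floor (by nlinarith)
        omega
    have h2 := Int.floor_le (M*(a+δ))
    have h3 := Int.lt_floor_add_one (M*a)
    have h4 : (s.card : ℝ) = ((s.card : ℤ) : ℝ) := by push_cast; rfl
    rw [h4, h1]; linarith
  calc ∑ k ∈ s, volume ((fun x => M * x) ⁻¹' ((fun z => z + (-(k:ℝ))) ⁻¹' (B ∩ Set.Ico (0:ℝ) 1)))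
      ≤ ∑ k ∈ s, ENNReal.ofReal (M⁻¹ * η) := by
        refine Finset.sum_le_sum (fun k _ => ?_)
        rw [Real.volume_preimage_mul_left hM.ne', measure_preimage_add_right,
          abs_of_pos (inv_pos.mpr hM), ENNReal.ofReal_mul (by positivity)]
        gcongr
    _ = ENNReal.ofReal (s.card * (M⁻¹ * η)) := by
        rw [Finset.sum_const, nsmul_eq_mul, ENNReal.ofReal_mul (p := (s.card:ℝ)) (by positivity),
          ENNReal.ofReal_natCast]
    _ ≤ _ := by
        apply ENNReal.ofReal_le_ofReal
        calc (s.card:ℝ) * (M⁻¹ * η) ≤ (M * δ + 2) * (M⁻¹ * η) := by gcongr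
          _ = (δ + 2/M) * η := by field_simp

open MeasureTheory in
lemma extend (K : ℕ) (ε : ℝ) (hε : 0 < ε) : ∃ N0 : ℕ, ∀ (a : ℝ) (S : ℕ), 1 ≤ S → ∀ W0 : ℕ,
    ∃ (a' : ℝ) (S' : ℕ), W0 ≤ S' ∧ S ≤ S' ∧ a ≤ a' ∧ a' + 1 / S' < a + 1 / S ∧
    ∀ y ∈ Set.Ico a' (a' + 1 / S'), ∀ b, 2 ≤ b → b ≤ K → ∀ n, Nat.log b S ≤ n → n ≤ Nat.log b S' →
      ∀ d < b, |cnt b d y n - cnt b d y (Nat.log b S) - ((n:ℝ) - Nat.log b S) / b|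
        ≤ N0 + ε * ((n:ℝ) - Nat.log b S) := by
  set H : ℕ := 8 * (K+2)^2 with hH
  have hH0 : (0:ℝ) < H := by rw [hH]; positivity
  have hg : ∀ b : ℕ, ∃ (N : ℕ) (B : Set ℝ), 2 ≤ b →
      volume (B ∩ Set.Ico (0:ℝ) 1) ≤ ENNReal.ofReal (1 / H) ∧
      ∀ x ∈ Set.Ico (0:ℝ) 1, x ∉ B → ∀ n ≥ N, ∀ d < b, |cnt b d x n - n / b| ≤ ε * n := by
    intro b
    by_cases hb : 2 ≤ b
    · obtain ⟨N, B, h⟩ := goodset b hb ε (1/H) hε (by positivity)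
      exact ⟨N, B, fun _ => h⟩
    · exact ⟨0, ∅, fun h => absurd h hb⟩
  choose N B hNB using hg
  refine ⟨∑ b ∈ Finset.Icc 2 K, N b + H, ?_⟩
  intro a S hS W0
  set W : ℕ := W0 + 2 * S * (K+1) with hW
  have hS0 : (0:ℝ) < S := by exact_mod_cast hS
  have hWpos : 0 < W := by rw [hW]; positivity
  set δ : ℝ := 1 / (2 * S) with hδ
  have hδ0 : 0 < δ := by positivity
  let bad1 : ℕ → Set ℝ := fun b =>
    {x | x ∈ Set.Ico a (a+δ) ∧ Int.fract ((b:ℝ)^(Nat.log b S) * x) ∈ B b}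
  let bad2 : ℕ → Set ℝ := fun b =>
    {x | x ∈ Set.Ico a (a+δ) ∧ Int.fract ((b:ℝ)^(Nat.log b W) * x) ∈ Set.Ico (1 - 1/(H:ℝ)) 1}
  have hbad : ∀ b ∈ Finset.Icc 2 K, volume (bad1 b ∪ bad2 b)
      ≤ ENNReal.ofReal ((4 * K + 4) * δ / H) := by
    intro b hb
    rw [Finset.mem_Icc] at hb
    have hb0 : (0:ℝ) < b := by exact_mod_cast (by omega : 0 < b)
    have hbK : (b:ℝ) ≤ K := by exact_mod_cast hb.2
    have h1 : volume (bad1 b) ≤ ENNReal.ofReal ((δ + 2 / (b:ℝ)^(Nat.log b S)) * (1/H)) :=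
      periodic_measure (B b) (1/H) (by positivity) (hNB b hb.1).1 _ a δ (by positivity) hδ0
    have h2 : volume (bad2 b) ≤ ENNReal.ofReal ((δ + 2 / (b:ℝ)^(Nat.log b W)) * (1/H)) := by
      refine periodic_measure _ (1/H) (by positivity) ?_ _ a δ (by positivity) hδ0
      refine (measure_mono Set.inter_subset_left).trans ?_
      rw [Real.volume_Ico]
      apply ENNReal.ofReal_le_ofReal; linarith
    have h3 : 1 / (b:ℝ)^(Nat.log b S) ≤ 2 * K * δ := by
      have : (S:ℝ) < (b:ℝ)^(Nat.log b S + 1) := by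
        exact_mod_cast Nat.lt_pow_succ_log_self (by omega : 1 < b) S
      rw [div_le_iff₀ (by positivity), hδ]
      rw [pow_succ] at this
      have h5 : (0:ℝ) < (b:ℝ)^(Nat.log b S) := by positivity
      have : (S:ℝ) ≤ (b:ℝ)^(Nat.log b S) * K := by nlinarith
      have e : 2 * (K:ℝ) * (1 / (2 * S)) * (b:ℝ)^(Nat.log b S)
        = ((b:ℝ)^(Nat.log b S) * K) / S := by field_simp
      rw [e, le_div_iff₀ hS0]; linarith
    have h4 : 1 / (b:ℝ)^(Nat.log b W) ≤ δ := by
      have : (W:ℝ) < (b:ℝ)^(Nat.log b W + 1) := by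
        exact_mod_cast Nat.lt_pow_succ_log_self (by omega : 1 < b) W
      rw [pow_succ] at this
      have h5 : (0:ℝ) < (b:ℝ)^(Nat.log b W) := by positivity
      have h6 : (2:ℝ) * S * (K + 1) ≤ W := by rw [hW]; push_cast; nlinarith [(Nat.cast_nonneg W0 : (0:ℝ) ≤ W0)]
      have h7 : (b:ℝ)^(Nat.log b W) * b ≤ (b:ℝ)^(Nat.log b W) * (K+1) := by gcongr; linarith
      have h8 : (2:ℝ) * S ≤ (b:ℝ)^(Nat.log b W) := by
        have : (2:ℝ) * S * (K + 1) ≤ (b:ℝ)^(Nat.log b W) * (K+1) := by linarith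
        exact le_of_mul_le_mul_right this (by positivity)
      rw [hδ]
      exact one_div_le_one_div_of_le (by positivity) h8
    calc volume (bad1 b ∪ bad2 b) ≤ volume (bad1 b) + volume (bad2 b) := measure_union_le _ _
      _ ≤ _ := add_le_add h1 h2
      _ = ENNReal.ofReal ((δ + 2 / (b:ℝ)^(Nat.log b S)) * (1/H) + (δ + 2 / (b:ℝ)^(Nat.log b W)) * (1/H)) := by
          rw [ENNReal.ofReal_add (by positivity) (by positivity)]
      _ ≤ _ := by
          apply ENNReal.ofReal_le_ofReal
          rw [← add_mul, mul_one_div]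
          gcongr
          have e1 : 2 / (b:ℝ)^(Nat.log b S) = 2 * (1 / (b:ℝ)^(Nat.log b S)) := by ring
          have e2 : 2 / (b:ℝ)^(Nat.log b W) = 2 * (1 / (b:ℝ)^(Nat.log b W)) := by ring
          rw [e1, e2]
          nlinarith
  have htot : volume (⋃ b ∈ Finset.Icc 2 K, (bad1 b ∪ bad2 b)) < volume (Set.Ico a (a+δ)) := by
    calc volume (⋃ b ∈ Finset.Icc 2 K, (bad1 b ∪ bad2 b))
        ≤ ∑ b ∈ Finset.Icc 2 K, volume (bad1 b ∪ bad2 b) := measure_biUnion_finset_le _ _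
      _ ≤ ∑ b ∈ Finset.Icc 2 K, ENNReal.ofReal ((4 * K + 4) * δ / H) := Finset.sum_le_sum hbad
      _ = ENNReal.ofReal ((Finset.Icc 2 K).card * ((4 * K + 4) * δ / H)) := by
          rw [Finset.sum_const, nsmul_eq_mul, ENNReal.ofReal_mul (by positivity),
            ENNReal.ofReal_natCast]
      _ < _ := by
          rw [Real.volume_Ico, ENNReal.ofReal_lt_ofReal_iff (by linarith)]
          have hc : ((Finset.Icc 2 K).card : ℝ) ≤ K := by
            rw [Nat.card_Icc]; exact_mod_cast (by omega)
          have hK0 : (0:ℝ) ≤ K := by positivity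
          calc ((Finset.Icc 2 K).card:ℝ) * ((4 * K + 4) * δ / H)
              ≤ K * ((4 * K + 4) * δ / H) := by gcongr
            _ = (K * (4 * K + 4) / H) * δ := by ring
            _ < 1 * δ := by
                gcongr
                rw [div_lt_one hH0, hH]; push_cast; nlinarith
            _ = _ := by ring
  obtain ⟨x, hx, hxb⟩ : ∃ x ∈ Set.Ico a (a+δ), x ∉ ⋃ b ∈ Finset.Icc 2 K, (bad1 b ∪ bad2 b) := by
    by_contra hcon
    push Not at hcon
    exact absurd (measure_mono (μ := volume) (fun x hx => hcon x hx)) (not_le.mpr htot)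
  have hS'pos : (0:ℝ) < ((H * W : ℕ) : ℝ) := by push_cast; positivity
  have hH8 : 1 ≤ H := by rw [hH]; nlinarith [Nat.zero_le K]
  have hWS : 2 * S ≤ W := by rw [hW]; nlinarith [Nat.zero_le K, Nat.zero_le W0, Nat.zero_le (S*K)]
  refine ⟨x, H * W, ?_, ?_, hx.1, ?_, ?_⟩
  · have : W0 ≤ W := by omega
    nlinarith
  · nlinarith
  · have h1 : 1 / ((H * W : ℕ):ℝ) ≤ δ := by
      rw [hδ]
      apply one_div_le_one_div_of_le (by positivity)
      exact_mod_cast (by nlinarith : 2 * S ≤ H * W)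
    have h2 : 1 / (S:ℝ) = δ + δ := by rw [hδ]; field_simp; norm_num
    rw [h2]; linarith [hx.2]
  · intro y hy b hb2 hbK n hn1 hn2 d hd
    have hmem : b ∈ Finset.Icc 2 K := Finset.mem_Icc.mpr ⟨hb2, hbK⟩
    have hb0 : (0:ℝ) < b := by exact_mod_cast (by omega : 0 < b)
    have hnb : x ∉ bad1 b ∧ x ∉ bad2 b := by
      constructor
      · intro h; exact hxb (Set.mem_biUnion (Finset.mem_coe.mpr hmem) (Or.inl h))
      · intro h; exact hxb (Set.mem_biUnion (Finset.mem_coe.mpr hmem) (Or.inr h))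
    set L := Nat.log b S with hL
    set Q := Nat.log b W with hQ
    have hLQ : L ≤ Q := Nat.log_mono_right (by omega)
    have hnQ : n ≤ Q + H := by
      refine hn2.trans (Nat.lt_succ_iff.mp (Nat.log_lt_of_lt_pow (by positivity) ?_))
      have h1 : W < b ^ (Q+1) := Nat.lt_pow_succ_log_self (by omega) W
      have h2 : H < b ^ H := Nat.lt_pow_self (by omega)
      calc H * W < b^H * b^(Q+1) := Nat.mul_lt_mul'' h2 h1
        _ = b ^ (Q + H).succ := by rw [← pow_add]; congr 1; omega
    have hfl : ⌊(b:ℝ)^Q * y⌋ = ⌊(b:ℝ)^Q * x⌋ := by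
      have hf : Int.fract ((b:ℝ)^Q * x) < 1 - 1/(H:ℝ) := by
        by_contra h
        push Not at h
        exact hnb.2 ⟨hx, h, Int.fract_lt_one _⟩
      have hbp : (0:ℝ) < (b:ℝ)^Q := by positivity
      have hbW : (b:ℝ)^Q ≤ W := by exact_mod_cast Nat.pow_log_le_self b hWpos.ne'
      have h1 : (b:ℝ)^Q * (1 / ((H*W:ℕ):ℝ)) ≤ 1 / H := by
        push_cast
        rw [mul_one_div, div_le_div_iff₀ (by positivity) hH0]
        nlinarith
      have h2 : (b:ℝ)^Q * y < (b:ℝ)^Q * x + (b:ℝ)^Q * (1 / ((H*W:ℕ):ℝ)) := by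
        rw [← mul_add]; exact mul_lt_mul_of_pos_left hy.2 hbp
      have h3 : (b:ℝ)^Q * x ≤ (b:ℝ)^Q * y := mul_le_mul_of_nonneg_left hy.1 hbp.le
      rw [Int.floor_eq_iff]
      have h4 := Int.floor_add_fract ((b:ℝ)^Q * x)
      have h5 := Int.fract_nonneg ((b:ℝ)^Q * x)
      constructor <;> linarith
    have hx1 : ∀ k, k ≤ Q → cnt b d y k = cnt b d x k := fun k hk =>
      cnt_congr b d (by omega) y x Q k hk hfl
    set NN := ∑ b ∈ Finset.Icc 2 K, N b with hNN
    have hNle : N b ≤ NN :=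
      Finset.single_le_sum (f := N) (fun _ _ => Nat.zero_le _) hmem
    have hmain : ∀ k, L + k ≤ Q → |cnt b d y (L+k) - cnt b d y L - (k:ℝ) / b| ≤ NN + ε * k := by
      intro k hk
      rw [hx1 _ hk, hx1 _ hLQ, cnt_add b d (by omega), add_sub_cancel_left]
      by_cases hkN : N b ≤ k
      · have := (hNB b hb2).2 (Int.fract ((b:ℝ)^L * x)) ⟨Int.fract_nonneg _, Int.fract_lt_one _⟩
          (fun h => hnb.1 ⟨hx, h⟩) k hkN d hd
        have h0 : (0:ℝ) ≤ NN := by positivity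
        linarith
      · have h1 := cnt_dev_le b d (by omega) (Int.fract ((b:ℝ)^L * x)) k
        have h2 : (k:ℝ) ≤ NN := by exact_mod_cast (by omega : k ≤ NN)
        have h3 : 0 ≤ ε * k := by positivity
        linarith
    obtain ⟨k, rfl⟩ := Nat.exists_eq_add_of_le hn1
    have hkk : ((L + k : ℕ) : ℝ) - L = k := by push_cast; ring
    rw [hkk]
    push_cast
    by_cases hk : L + k ≤ Q
    · have := hmain k hk
      linarith
    · obtain ⟨q, hq⟩ := Nat.exists_eq_add_of_le hLQ
      obtain ⟨j, hj⟩ := Nat.exists_eq_add_of_le (by omega : q ≤ k)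
      have h1 := hmain q (by omega)
      have h2 := cnt_dev_le b d (by omega) (Int.fract ((b:ℝ)^(L+q) * y)) j
      have h3 : cnt b d y (L + k) = cnt b d y (L+q) + cnt b d (Int.fract ((b:ℝ)^(L+q) * y)) j := by
        rw [← cnt_add b d (by omega)]; congr 1; omega
      have h4 : (j:ℝ) ≤ H := by exact_mod_cast (by omega : j ≤ H)
      have h5 : (k:ℝ) = q + j := by exact_mod_cast hj
      have h6 : 0 ≤ ε * j := by positivity
      rw [h3, h5]
      have e : cnt b d y (L+q) + cnt b d (Int.fract ((b:ℝ)^(L+q) * y)) j - cnt b d y L - ((q:ℝ) + j) / b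
        = (cnt b d y (L+q) - cnt b d y L - (q:ℝ)/b) + (cnt b d (Int.fract ((b:ℝ)^(L+q) * y)) j - j / b) := by
        ring
      rw [e]
      refine (abs_add_le _ _).trans ?_
      linarith

lemma zrun (β p : ℕ) (hβ : 2 ≤ β) (hp : 1 ≤ p) (a : ℝ) (S : ℕ) (hS : 1 ≤ S) :
    ∃ (a' : ℝ) (S' : ℕ), S ≤ S' ∧ a ≤ a' ∧ a' + 1 / S' < a + 1 / S ∧
      S' ^ p ≤ (β ^ 2 * S) ^ (p+1) ∧
      ∀ y ∈ Set.Ico a' (a' + 1 / S'), ∀ i, Nat.log β S + 2 ≤ i →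
        i < Nat.log β S + 2 + (Nat.log β S + 2) / p → rdigit β y i = 0 := by
  set n := Nat.log β S + 2 with hn
  set r := n / p with hr
  have hS0 : (0:ℝ) < S := by exact_mod_cast hS
  have hβ0 : (0:ℝ) < β := by exact_mod_cast (by omega : 0 < β)
  have hlt : S < β ^ (Nat.log β S + 1) := Nat.lt_pow_succ_log_self (by omega) S
  have h2S : 2 * S < β ^ n := by
    have : β ^ n = β ^ (Nat.log β S + 1) * β := by rw [hn, ← pow_succ]
    rw [this]; nlinarith
  have hnr : β ^ n ≤ β ^ (n+r) := Nat.pow_le_pow_right (by omega) (Nat.le_add_right _ _)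
  have hbn : (0:ℝ) < (β:ℝ)^n := by positivity
  have h2SR : (2:ℝ) * S < (β:ℝ)^n := by exact_mod_cast h2S
  have hinv : 1 / (β:ℝ)^n < 1 / (2 * S) := one_div_lt_one_div_of_lt (by positivity) h2SR
  have hhalf : 1 / (S:ℝ) = 1 / (2*S) + 1/(2*S) := by field_simp; norm_num
  refine ⟨⌈(β:ℝ)^n * a⌉ / (β:ℝ)^n, β ^ (n+r), by omega, ?_, ?_, ?_, ?_⟩
  · rw [le_div_iff₀ hbn, mul_comm]; exact Int.le_ceil _
  · have h1 : (⌈(β:ℝ)^n * a⌉:ℝ) / (β:ℝ)^n < a + 1 / (β:ℝ)^n := by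
      rw [div_lt_iff₀ hbn, add_mul, one_div, inv_mul_cancel₀ hbn.ne', mul_comm a]
      exact Int.ceil_lt_add_one _
    have h2 : 1 / ((β^(n+r) : ℕ):ℝ) ≤ 1 / (β:ℝ)^n := by
      apply one_div_le_one_div_of_le hbn
      exact_mod_cast hnr
    linarith
  · have h1 : β ^ n ≤ β^2 * S := by
      have := Nat.pow_log_le_self β (by omega : S ≠ 0)
      rw [hn, pow_add, mul_comm]; gcongr
    have h2 : r * p ≤ n := Nat.div_mul_le_self n p
    calc (β ^ (n+r))^p = (β^n)^p * β ^ (r*p) := by rw [pow_add, mul_pow, ← pow_mul β r p]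
      _ ≤ (β^n)^p * β^n := by gcongr; omega
      _ = (β^n)^(p+1) := (pow_succ _ _).symm
      _ ≤ _ := by gcongr
  · intro y hy i hi1 hi2
    rw [rdigit_eq β (by omega)]
    obtain ⟨j, hj⟩ := Nat.exists_eq_add_of_le hi1
    have hfl : ⌊(β:ℝ)^(i+1) * y⌋ = ⌈(β:ℝ)^n * a⌉ * (β:ℤ)^(j+1) := by
      have hbi : (0:ℝ) < (β:ℝ)^(i+1) := by positivity
      have e : (β:ℝ)^(i+1) = (β:ℝ)^n * (β:ℝ)^(j+1) := by rw [← pow_add]; congr 1; omega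
      have e2 : (β:ℝ)^(i+1) * (⌈(β:ℝ)^n * a⌉ / (β:ℝ)^n) = ⌈(β:ℝ)^n * a⌉ * (β:ℝ)^(j+1) := by
        rw [e]; field_simp
      have h1 := mul_le_mul_of_nonneg_left hy.1 hbi.le
      have h2 := mul_lt_mul_of_pos_left hy.2 hbi
      rw [mul_add, e2] at h2
      rw [e2] at h1
      have h3 : (β:ℝ)^(i+1) * (1 / ((β^(n+r):ℕ):ℝ)) ≤ 1 := by
        push_cast
        rw [mul_one_div, div_le_one (by positivity)]
        apply pow_le_pow_right₀ _ (by omega)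
        exact_mod_cast (by omega : 1 ≤ β)
      rw [Int.floor_eq_iff]
      push_cast
      constructor <;> linarith
    rw [hfl, pow_succ (β:ℤ), ← mul_assoc, Int.mul_emod_left]; rfl

noncomputable def NZ (t : ℕ) : ℕ :=
  (extend (t+2) (1 / (2 * ((t:ℝ)+2))) (by positivity)).choose

def Qual (β : ℕ → ℕ) (t : ℕ) (a : ℝ) (S : ℕ) : Prop :=
  1 ≤ S ∧ t ≤ S ∧ ∀ b, 2 ≤ b → b ≤ t + 1 →
    2 * (1 + 2 * β t) * (t+1) ≤ Nat.log b S ∧ NZ t * (t+1) ≤ Nat.log b S ∧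
    ∀ y ∈ Set.Ico a (a + 1 / S), ∀ d < b,
      |cnt b d y (Nat.log b S) - (Nat.log b S : ℝ) / b| ≤ 1 / ((t:ℝ)+1) * Nat.log b S

open Classical in
lemma pre_step (β p : ℕ) (hβ : 2 ≤ β) (hp : 1 ≤ p) (e : Prop) (a : ℝ) (S : ℕ) (hS : 1 ≤ S) :
    ∃ (a' : ℝ) (S' : ℕ), S ≤ S' ∧ a ≤ a' ∧ a' + 1 / S' ≤ a + 1 / S ∧
      (∀ b, 2 ≤ b → (Nat.log b S' : ℝ) ≤ Nat.log b S + (if e then 1 / (p:ℝ) else 0) * Nat.log b S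
        + 2 * (1 + 2 * β)) ∧
      (e → ∀ y ∈ Set.Ico a' (a' + 1 / S'), ∀ i, Nat.log β S + 2 ≤ i →
        i < Nat.log β S + 2 + (Nat.log β S + 2) / p → rdigit β y i = 0) := by
  by_cases he : e
  · obtain ⟨a', S', h1, h2, h3, h4, h5⟩ := zrun β p hβ hp a S hS
    refine ⟨a', S', h1, h2, h3.le, ?_, fun _ => h5⟩
    intro b hb
    rw [if_pos he]
    have k1 : p * Nat.log b S' < (p+1) * (Nat.log b S + 1 + 2 * β) := by
      rw [← Nat.pow_lt_pow_iff_right (a := b) (by omega)]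
      calc b ^ (p * Nat.log b S') = (b ^ Nat.log b S') ^ p := by rw [← pow_mul, mul_comm]
        _ ≤ S' ^ p := by gcongr; exact Nat.pow_log_le_self b (by omega)
        _ ≤ (β ^ 2 * S) ^ (p+1) := h4
        _ < (b ^ (2 * β) * b ^ (Nat.log b S + 1)) ^ (p+1) := by
            apply Nat.pow_lt_pow_left _ (by omega)
            have m1 : β < b ^ β := Nat.lt_pow_self (by omega)
            have m2 : β ^ 2 ≤ b ^ (2 * β) := by
              rw [mul_comm 2, pow_mul]; gcongr
            have m3 : S < b ^ (Nat.log b S + 1) := Nat.lt_pow_succ_log_self (by omega) S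
            exact Nat.mul_lt_mul_of_le_of_lt m2 m3 (by positivity)
        _ = b ^ ((p+1) * (Nat.log b S + 1 + 2 * β)) := by
            rw [← pow_add, ← pow_mul]; congr 1; ring
    have k2 : (p:ℝ) * Nat.log b S' ≤ (p+1) * (Nat.log b S + 1 + 2 * β) := by exact_mod_cast k1.le
    have hp0 : (1:ℝ) ≤ p := by exact_mod_cast hp
    have k3 : (Nat.log b S' : ℝ) ≤ (p+1) * (Nat.log b S + 1 + 2 * β) / p := by
      rw [le_div_iff₀ (by linarith)]; linarith
    have k4 : 1 / (p:ℝ) ≤ 1 := by rw [div_le_one (by linarith)]; exact hp0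
    have k5 : ((p:ℝ)+1) * (Nat.log b S + 1 + 2 * β) / p
        = Nat.log b S + 1 / p * Nat.log b S + (1 + 1/p) * (1 + 2 * β) := by field_simp; ring
    have hβ0 : (0:ℝ) ≤ β := by positivity
    rw [k5] at k3
    nlinarith
  · refine ⟨a, S, le_rfl, le_rfl, le_rfl, ?_, fun h => absurd h he⟩
    intro b _
    rw [if_neg he]
    have hβ0 : (0:ℝ) ≤ β := by positivity
    linarith

open Classical in
lemma step (β p : ℕ → ℕ) (hβ : ∀ t, 2 ≤ β t) (hp : ∀ t, 1 ≤ p t) (t : ℕ) (e : Prop)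
    (a : ℝ) (S : ℕ) (hQ : Qual β t a S) :
    ∃ (a' : ℝ) (S' : ℕ), Qual β (t+1) a' S' ∧ S ≤ S' ∧ a ≤ a' ∧ a' + 1 / S' < a + 1 / S ∧
      (∀ y ∈ Set.Ico a' (a' + 1 / S'), ∀ b, 2 ≤ b → b ≤ t + 1 → ∀ n, Nat.log b S ≤ n →
        n ≤ Nat.log b S' → ∀ d < b, |cnt b d y n - (n:ℝ) / b|
          ≤ (3 * (1 / ((t:ℝ)+1)) + (if e then 1 / (p t:ℝ) else 0)) * n) ∧
      (e → ∀ y ∈ Set.Ico a' (a' + 1 / S'), ∀ i, Nat.log (β t) S + 2 ≤ i →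
        i < Nat.log (β t) S + 2 + (Nat.log (β t) S + 2) / p t → rdigit (β t) y i = 0) := by
  obtain ⟨hS, htS, hq⟩ := hQ
  obtain ⟨a1, S1, p1, p2, p3, p4, p5⟩ := pre_step (β t) (p t) (hβ t) (hp t) e a S hS
  set G : ℕ := 2 * (t+2) * (S1 + NZ t) + 2 * (1 + 2 * β (t+1)) * (t+2) + NZ (t+1) * (t+2) with hG
  obtain ⟨a2, S2, q1, q2, q3, q4, q5⟩ :=
    (extend (t+2) (1 / (2 * ((t:ℝ)+2))) (by positivity)).choose_spec a1 S1 (by omega)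
      ((t+2)^G + t + 1)
  change ∀ y ∈ Set.Ico a2 (a2 + 1 / S2), ∀ b, 2 ≤ b → b ≤ t+2 → ∀ n, Nat.log b S1 ≤ n →
      n ≤ Nat.log b S2 → ∀ d < b, |cnt b d y n - cnt b d y (Nat.log b S1)
        - ((n:ℝ) - Nat.log b S1) / b| ≤ (NZ t : ℝ) + 1 / (2 * ((t:ℝ)+2)) * ((n:ℝ) - Nat.log b S1) at q5
  have hsub1 : ∀ y ∈ Set.Ico a2 (a2 + 1 / (S2:ℝ)), y ∈ Set.Ico a1 (a1 + 1 / (S1:ℝ)) :=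
    fun y hy => ⟨q3.trans hy.1, hy.2.trans q4⟩
  have hsub : ∀ y ∈ Set.Ico a2 (a2 + 1 / (S2:ℝ)), y ∈ Set.Ico a (a + 1 / (S:ℝ)) :=
    fun y hy => ⟨p2.trans (hsub1 y hy).1, (hsub1 y hy).2.trans_le p3⟩
  have hS2G : ∀ b, 2 ≤ b → b ≤ t + 2 → G ≤ Nat.log b S2 := by
    intro b hb hbt
    apply Nat.le_log_of_pow_le (by omega)
    calc b ^ G ≤ (t+2)^G := by gcongr
      _ ≤ S2 := by omega
  have ht0 : (0:ℝ) ≤ t := by positivity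
  refine ⟨a2, S2, ⟨by omega, by omega, ?_⟩, by omega, p2.trans q3, q4.trans_le p3, ?_, ?_⟩
  · intro b hb hbt
    have hg := hS2G b hb hbt
    refine ⟨?_, ?_, ?_⟩
    · have : t + 1 + 1 = t + 2 := rfl
      rw [this]
      exact le_trans (by rw [hG]; omega) hg
    · have : t + 1 + 1 = t + 2 := rfl
      rw [this]
      exact le_trans (by rw [hG]; omega) hg
    · intro y hy d hd
      have hlog : Nat.log b S1 ≤ Nat.log b S2 := Nat.log_mono_right q2
      have h1 := q5 y hy b hb hbt (Nat.log b S2) hlog le_rfl d hd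
      have h2 := cnt_dev_le b d (by omega) y (Nat.log b S1)
      have h3 : (Nat.log b S1 : ℝ) ≤ S1 := by exact_mod_cast Nat.log_le_self b S1
      have h4 : 2 * ((t:ℝ)+2) * (S1 + NZ t) ≤ Nat.log b S2 := by
        exact_mod_cast le_trans (by rw [hG]; omega) hg
      have h5 : (S1:ℝ) + NZ t ≤ 1 / (2 * ((t:ℝ)+2)) * Nat.log b S2 := by
        rw [one_div, inv_mul_eq_div, le_div_iff₀ (by positivity)]; linarith
      have e1 : cnt b d y (Nat.log b S2) - (Nat.log b S2:ℝ) / b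
        = (cnt b d y (Nat.log b S1) - (Nat.log b S1:ℝ) / b) + (cnt b d y (Nat.log b S2)
          - cnt b d y (Nat.log b S1) - ((Nat.log b S2:ℝ) - Nat.log b S1) / b) := by ring
      have e2 : 1 / (((t+1:ℕ):ℝ)+1) = 2 * (1 / (2 * ((t:ℝ)+2))) := by
        push_cast; field_simp; ring
      have h6 : 0 ≤ 1 / (2 * ((t:ℝ)+2)) * (Nat.log b S1:ℝ) := by positivity
      rw [e1, e2]
      refine (abs_add_le _ _).trans ?_
      rw [mul_sub] at h1
      linarith
  · intro y hy b hb hbt n hn1 hn2 d hd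
    obtain ⟨r1, r2, r3⟩ := hq b hb hbt
    set ε : ℝ := 1 / ((t:ℝ)+1) with hε
    have hε0 : 0 < ε := by positivity
    set θ : ℝ := (if e then 1 / (p t:ℝ) else 0) with hθ
    have hθ0 : 0 ≤ θ := by rw [hθ]; split_ifs <;> positivity
    set L := Nat.log b S with hL
    set L1 := Nat.log b S1 with hL1
    have c1 : 2 * (1 + 2 * (β t:ℝ)) ≤ ε * L := by
      rw [hε, one_div, inv_mul_eq_div, le_div_iff₀ (by positivity)]
      exact_mod_cast r1
    have c2 : (NZ t:ℝ) ≤ ε * L := by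
      rw [hε, one_div, inv_mul_eq_div, le_div_iff₀ (by positivity)]
      exact_mod_cast r2
    have hLL1 : L ≤ L1 := Nat.log_mono_right p1
    have c3 := p4 b hb
    have c4 := r3 y (hsub y hy) d hd
    have first : ∀ n, L ≤ n → n ≤ L1 → |cnt b d y n - (n:ℝ)/b| ≤ (2 * ε + θ) * n := by
      intro n h1 h2
      obtain ⟨k, rfl⟩ := Nat.exists_eq_add_of_le h1
      rw [cnt_add b d (by omega)]
      have h3 := cnt_dev_le b d (by omega) (Int.fract ((b:ℝ)^L * y)) k
      have e1 : cnt b d y L + cnt b d (Int.fract ((b:ℝ)^L * y)) k - ((L+k:ℕ):ℝ)/b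
        = (cnt b d y L - (L:ℝ)/b) + (cnt b d (Int.fract ((b:ℝ)^L * y)) k - k/b) := by
        push_cast; ring
      rw [e1]
      refine (abs_add_le _ _).trans ?_
      have h4 : ((L+k:ℕ):ℝ) ≤ L1 := by exact_mod_cast h2
      have h5 : 0 ≤ (2 * ε + θ) * k := by positivity
      push_cast at h4 ⊢
      nlinarith
    have hLr : (L:ℝ) ≤ L1 := by exact_mod_cast hLL1
    by_cases hn : n ≤ L1
    · have h1 := first n hn1 hn
      have h2 : 0 ≤ ε * n := by positivity
      nlinarith
    · have h1 := first L1 hLL1 le_rfl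
      have h2 := q5 y hy b hb (by omega) n (by omega) hn2 d hd
      have e1 : cnt b d y n - (n:ℝ)/b = (cnt b d y L1 - (L1:ℝ)/b)
        + (cnt b d y n - cnt b d y L1 - ((n:ℝ) - L1)/b) := by ring
      rw [e1]
      refine (abs_add_le _ _).trans ?_
      have h3 : (L1:ℝ) ≤ n := by exact_mod_cast (by omega : L1 ≤ n)
      have h4 : 1 / (2 * ((t:ℝ)+2)) ≤ ε := by
        rw [hε]; apply one_div_le_one_div_of_le <;> linarith
      have h5 : 1 / (2 * ((t:ℝ)+2)) * ((n:ℝ) - L1) ≤ ε * ((n:ℝ) - L1) :=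
        mul_le_mul_of_nonneg_right h4 (by linarith)
      have h6 : (NZ t:ℝ) ≤ ε * L1 := c2.trans (mul_le_mul_of_nonneg_left hLr hε0.le)
      have h7 : (2 * ε + θ) * L1 ≤ (2*ε+θ) * n := mul_le_mul_of_nonneg_left h3 (by positivity)
      nlinarith
  · intro he y hy
    exact p5 he y (hsub1 y hy)

open Classical in
def StepRel (β p : ℕ → ℕ) (t : ℕ) (e : Prop) (σ σ' : ℝ × ℕ) : Prop :=
  Qual β (t+1) σ'.1 σ'.2 ∧ σ.2 ≤ σ'.2 ∧ σ.1 ≤ σ'.1 ∧ σ'.1 + 1 / σ'.2 < σ.1 + 1 / σ.2 ∧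
      (∀ y ∈ Set.Ico σ'.1 (σ'.1 + 1 / σ'.2), ∀ b, 2 ≤ b → b ≤ t + 1 → ∀ n, Nat.log b σ.2 ≤ n →
        n ≤ Nat.log b σ'.2 → ∀ d < b, |cnt b d y n - (n:ℝ) / b|
          ≤ (3 * (1 / ((t:ℝ)+1)) + (if e then 1 / (p t:ℝ) else 0)) * n) ∧
      (e → ∀ y ∈ Set.Ico σ'.1 (σ'.1 + 1 / σ'.2), ∀ i, Nat.log (β t) σ.2 + 2 ≤ i →
        i < Nat.log (β t) σ.2 + 2 + (Nat.log (β t) σ.2 + 2) / p t → rdigit (β t) y i = 0)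

lemma exists_run (β p : ℕ → ℕ) (hβ : ∀ t, 2 ≤ β t) (hp : ∀ t, 1 ≤ p t) :
    ∃ run : (ℕ → Prop) → ℕ → ℝ × ℕ,
      (∀ E, run E 0 = (0, 1)) ∧
      (∀ E t, StepRel β p t (E t) (run E t) (run E (t+1))) ∧
      (∀ E E' t, (∀ s < t, E s ↔ E' s) → run E t = run E' t) := by
  have hstep : ∀ (t : ℕ) (e : Prop) (σ : ℝ × ℕ), ∃ σ', Qual β t σ.1 σ.2 → StepRel β p t e σ σ' := by
    intro t e σ
    by_cases h : Qual β t σ.1 σ.2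
    · obtain ⟨a', S', h'⟩ := step β p hβ hp t e σ.1 σ.2 h
      exact ⟨(a', S'), fun _ => h'⟩
    · exact ⟨σ, fun h' => absurd h' h⟩
  choose F hF using hstep
  let run : (ℕ → Prop) → ℕ → ℝ × ℕ := fun E t =>
    Nat.rec (motive := fun _ => ℝ × ℕ) (0, 1) (fun s σ => F s (E s) σ) t
  have h0 : ∀ E, run E 0 = (0, 1) := fun _ => rfl
  have hs : ∀ E t, run E (t+1) = F t (E t) (run E t) := fun _ _ => rfl
  have hQ : ∀ E t, Qual β t (run E t).1 (run E t).2 := by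
    intro E t
    induction t with
    | zero =>
      rw [h0]
      exact ⟨le_rfl, by omega, fun b h1 h2 => by omega⟩
    | succ t ih =>
      rw [hs]; exact (hF t (E t) _ ih).1
  refine ⟨run, h0, fun E t => ?_, ?_⟩
  · rw [hs]; exact hF t (E t) _ (hQ E t)
  · intro E E' t
    induction t with
    | zero => intro _; rw [h0, h0]
    | succ t ih =>
      intro h
      rw [hs, hs, ih (fun s hs => h s (by omega)), propext (h t (by omega))]

open Classical in
lemma abstract_main (β p : ℕ → ℕ) (hβ : ∀ t, 2 ≤ β t) (hp : ∀ t, 1 ≤ p t) :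
    ∃ g : (ℕ → Prop) → ℝ,
      (∀ E E', ∀ t : ℕ, 1 ≤ t → (∀ s < t, E s ↔ E' s) → |g E - g E'| ≤ 1 / (t:ℝ)) ∧
      (∀ E, (∀ q, ∀ᶠ t in atTop, E t → q ≤ p t) → ∀ b, 2 ≤ b → SimplyNormal b (g E)) ∧
      (∀ E b q, (∃ᶠ t in atTop, E t ∧ β t = b ∧ p t = q) → ¬ SimplyNormal b (g E)) := by
  obtain ⟨run, h0, hstep, hcongr⟩ := exists_run β p hβ hp
  have hmono : ∀ E, Monotone (fun t => (run E t).1) := fun E =>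
    monotone_nat_of_le_succ (fun t => (hstep E t).2.2.1)
  have hanti : ∀ E, StrictAnti (fun t => (run E t).1 + 1 / ((run E t).2:ℝ)) := fun E =>
    strictAnti_nat_of_succ_lt (fun t => (hstep E t).2.2.2.1)
  have hSmono : ∀ E, Monotone (fun t => (run E t).2) := fun E =>
    monotone_nat_of_le_succ (fun t => (hstep E t).2.1)
  have hSge : ∀ E t, t ≤ (run E t).2 := by
    intro E t
    cases t with
    | zero => omega
    | succ t => exact (hstep E t).1.2.1
  have hle : ∀ E s t, (run E s).1 ≤ (run E t).1 + 1 / ((run E t).2:ℝ) := by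
    intro E s t
    have h1 : (run E s).1 ≤ (run E (max s t)).1 := hmono E (le_max_left _ _)
    have h2 : (run E (max s t)).1 + 1 / ((run E (max s t)).2:ℝ)
      ≤ (run E t).1 + 1 / ((run E t).2:ℝ) := (hanti E).antitone (le_max_right _ _)
    have h3 : (0:ℝ) ≤ 1 / ((run E (max s t)).2:ℝ) := by positivity
    linarith
  let g : (ℕ → Prop) → ℝ := fun E => ⨆ t, (run E t).1
  have hbdd : ∀ E, BddAbove (Set.range (fun t => (run E t).1)) := by
    intro E
    refine ⟨(run E 0).1 + 1 / ((run E 0).2:ℝ), ?_⟩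
    rintro _ ⟨s, rfl⟩
    exact hle E s 0
  have hg1 : ∀ E t, (run E t).1 ≤ g E := fun E t => le_ciSup (hbdd E) t
  have hg2 : ∀ E t, g E ≤ (run E t).1 + 1 / ((run E t).2:ℝ) := fun E t =>
    ciSup_le (fun s => hle E s t)
  have hmem : ∀ E t, g E ∈ Set.Ico (run E t).1 ((run E t).1 + 1 / ((run E t).2:ℝ)) := fun E t =>
    ⟨hg1 E t, (hg2 E (t+1)).trans_lt (hanti E (Nat.lt_succ_self t))⟩
  have hlog : ∀ E b, 2 ≤ b → ∀ k, ∃ t0, ∀ t ≥ t0, k ≤ Nat.log b (run E t).2 := by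
    intro E b hb k
    refine ⟨b ^ k, fun t ht => Nat.le_log_of_pow_le (by omega) (ht.trans (hSge E t))⟩
  refine ⟨g, ?_, ?_, ?_⟩
  · intro E E' t ht hEE
    have h1 := hg1 E t
    have h2 := hg2 E t
    have h3 := hg1 E' t
    have h4 := hg2 E' t
    rw [← hcongr E E' t hEE] at h3 h4
    have h5 : 1 / ((run E t).2:ℝ) ≤ 1 / t := by
      apply one_div_le_one_div_of_le (by exact_mod_cast ht)
      exact_mod_cast hSge E t
    rw [abs_le]; constructor <;> linarith
  · intro E hE b hb d hd
    simp only [cnt_eq]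
    rw [Metric.tendsto_atTop]
    intro ε hε
    obtain ⟨q, hq⟩ := exists_nat_gt (8 / ε)
    have hq0 : (0:ℝ) < q := lt_trans (by positivity) hq
    have hqε : 4 / (q:ℝ) < ε / 2 := by
      rw [div_lt_iff₀ hε] at hq
      rw [div_lt_iff₀ hq0]; linarith
    obtain ⟨t0, ht0⟩ := eventually_atTop.mp (hE q)
    set t1 := max t0 (q + b) with ht1
    refine ⟨Nat.log b (run E t1).2 + 1, fun n hn => ?_⟩
    -- find the stage
    have hex : ∃ t, t1 ≤ t ∧ Nat.log b (run E t).2 ≤ n ∧ n ≤ Nat.log b (run E (t+1)).2 := by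
      by_contra hcon
      push Not at hcon
      have : ∀ k, Nat.log b (run E (t1 + k)).2 ≤ n := by
        intro k
        induction k with
        | zero => simp; omega
        | succ k ih => exact (hcon (t1+k) (by omega) ih).le
      obtain ⟨T, hT⟩ := hlog E b hb (n+1)
      have h1 := hT (t1 + T) (by omega)
      have h2 := this T
      omega
    obtain ⟨t, htt, hn1, hn2⟩ := hex
    have key := (hstep E t).2.2.2.2.1 (g E) (hmem E (t+1)) b hb (by omega) n hn1 hn2 d hd
    have hn0 : (0:ℝ) < n := by exact_mod_cast (by omega : 0 < n)
    have b1 : 1 / ((t:ℝ)+1) ≤ 1 / q := by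
      apply one_div_le_one_div_of_le hq0
      have : (q:ℝ) ≤ t := by exact_mod_cast (by omega : q ≤ t)
      linarith
    have b2 : (if E t then 1 / (p t:ℝ) else 0) ≤ 1 / (q:ℝ) := by
      split_ifs with h
      · apply one_div_le_one_div_of_le hq0
        exact_mod_cast ht0 t (by omega) h
      · positivity
    have e1 : cnt b d (g E) n / n - 1 / b = (cnt b d (g E) n - n / b) / n := by field_simp
    rw [Real.dist_eq, e1, abs_div, abs_of_pos hn0, div_lt_iff₀ hn0]
    refine key.trans_lt ?_
    apply mul_lt_mul_of_pos_right _ hn0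
    have : 4 / (q:ℝ) = 4 * (1 / q) := by ring
    linarith
  · intro E b q hfr hN
    have hq1 : 1 ≤ q ∧ 2 ≤ b := by
      obtain ⟨t, _, rfl, rfl⟩ := hfr.exists
      exact ⟨hp t, hβ t⟩
    have hq0 : (1:ℝ) ≤ q := by exact_mod_cast hq1.1
    have hb2 : (2:ℝ) ≤ b := by exact_mod_cast hq1.2
    have h := hN 0 (by omega)
    simp only [cnt_eq] at h
    rw [Metric.tendsto_atTop] at h
    obtain ⟨k0, hk0⟩ := h (1 / (16 * q)) (by positivity)
    have hk : ∀ k ≥ k0 + 1, |cnt b 0 (g E) k - (k:ℝ)/b| ≤ 1 / (16*q) * k := by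
      intro k hk
      have h1 := hk0 k (by omega)
      have hn0 : (0:ℝ) < k := by exact_mod_cast (by omega : 0 < k)
      have e1 : cnt b 0 (g E) k - (k:ℝ)/b = (cnt b 0 (g E) k / k - 1 / b) * k := by field_simp
      rw [e1, abs_mul, abs_of_pos hn0]
      rw [Real.dist_eq] at h1
      exact mul_le_mul_of_nonneg_right h1.le hn0.le
    obtain ⟨T, hT⟩ := hlog E b hq1.2 (k0 + 1 + 2 * q)
    obtain ⟨t, ⟨hEt, hbt, hpt⟩, htT⟩ := (hfr.and_eventually (eventually_ge_atTop T)).exists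
    have hz := (hstep E t).2.2.2.2.2 hEt (g E) (hmem E (t+1))
    rw [hbt, hpt] at hz
    have hlarge := hT t htT
    set n := Nat.log b (run E t).2 + 2 with hn
    set r := n / q with hr
    have hc : cnt b 0 (g E) (n + r) = cnt b 0 (g E) n + r := by
      unfold cnt
      rw [Finset.sum_range_add]
      congr 1
      rw [Finset.sum_congr rfl (fun i hi => if_pos (hz (n+i) (by omega)
        (by have := Finset.mem_range.mp hi; omega)))]
      simp
    have h1 := hk n (by omega)
    have h2 := hk (n + r) (le_trans (by omega : k0 + 1 ≤ n) (Nat.le_add_right _ _))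
    rw [hc] at h2
    have hrn : r ≤ n := Nat.div_le_self n q
    have hrq : n < (r + 1) * q := by
      have := Nat.lt_succ_iff.mpr (le_refl (n / q))
      rwa [Nat.div_lt_iff_lt_mul (by omega)] at this
    have hrqR : (n:ℝ) < (r + 1) * q := by exact_mod_cast hrq
    have hrnR : (r:ℝ) ≤ n := by exact_mod_cast hrn
    have hn2q : (2:ℝ) * q ≤ n := by exact_mod_cast (by omega : 2 * q ≤ n)
    rw [abs_le] at h1 h2
    push_cast at h2
    have h3 : ((n:ℝ) + r) / b = n / b + r / b := by ring
    have h4 : (r:ℝ) / b ≤ r / 2 := by gcongr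
    -- r/2 ≤ (1/(16 q)) * (2n + r) ≤ 3n/(16 q)
    have h5 : (r:ℝ) / 2 ≤ 1 / (16 * q) * (3 * n) := by
      have h6 : 1 / (16 * (q:ℝ)) * (n + (n + r)) ≤ 1 / (16 * q) * (3 * n) := by
        gcongr; linarith
      rw [mul_add] at h6
      linarith [h1.1, h1.2, h2.1, h2.2]
    have h7 : (r:ℝ) * q * 8 ≤ 3 * n := by
      have e : 1 / (16 * (q:ℝ)) * (3 * n) = (3 * n) / (16 * q) := by ring
      rw [e, le_div_iff₀ (by positivity)] at h5
      linarith
    nlinarith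

def Vis (C : ℕ → Set (ℕ → ℕ)) (s : ℕ) (f : ℕ → ℕ) (m : ℕ) : Prop :=
  (∃ h ∈ C m, ∀ i < s, h i = f i) ∨ s ≤ m

noncomputable def ctr (C : ℕ → Set (ℕ → ℕ)) (s : ℕ) (f : ℕ → ℕ) : ℕ := sInf {m | Vis C s f m}

lemma ctr_vis (C : ℕ → Set (ℕ → ℕ)) (s : ℕ) (f : ℕ → ℕ) : Vis C s f (ctr C s f) :=
  Nat.sInf_mem (s := {m | Vis C s f m}) ⟨s, Or.inr le_rfl⟩

lemma ctr_mono (C : ℕ → Set (ℕ → ℕ)) (f : ℕ → ℕ) : Monotone (fun s => ctr C s f) := by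
  intro s s' hss
  apply Nat.sInf_le
  rcases ctr_vis C s' f with ⟨h, hC, hi⟩ | h
  · exact Or.inl ⟨h, hC, fun i his => hi i (by omega)⟩
  · exact Or.inr (hss.trans h)

lemma ctr_congr (C : ℕ → Set (ℕ → ℕ)) (s : ℕ) (f f' : ℕ → ℕ) (h : ∀ i < s, f i = f' i) :
    ctr C s f = ctr C s f' := by
  unfold ctr
  congr 1
  ext m
  show Vis C s f m ↔ Vis C s f' m
  unfold Vis
  refine or_congr (exists_congr fun k => and_congr Iff.rfl ?_) Iff.rfl
  exact forall₂_congr (fun i hi => by rw [h i hi])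

lemma closed_escape (D : Set (ℕ → ℕ)) (hD : IsClosed D) (f : ℕ → ℕ) (hf : f ∉ D) :
    ∃ s, ∀ h ∈ D, ¬ ∀ i < s, h i = f i := by
  by_contra hcon
  push Not at hcon
  choose h hh hi using hcon
  refine hf (hD.mem_of_tendsto (b := atTop) (f := h) ?_ (Eventually.of_forall hh))
  rw [tendsto_pi_nhds]
  intro i
  apply tendsto_const_nhds.congr'
  filter_upwards [eventually_gt_atTop i] with s hs
  exact (hi s i hs).symm

lemma ctr_finite (C : ℕ → Set (ℕ → ℕ)) (f : ℕ → ℕ) (hf : f ∈ ⋃ m, C m) :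
    ∀ᶠ s in atTop, ctr C s f = ctr C (s+1) f := by
  obtain ⟨m, hm⟩ := Set.mem_iUnion.mp hf
  have hb : ∀ s, ctr C s f ≤ m := fun s => Nat.sInf_le (Or.inl ⟨f, hm, fun _ _ => rfl⟩)
  have : ∃ n, ∀ s ≥ n, ctr C s f = ctr C n f := by
    by_contra hcon
    push Not at hcon
    have : ∀ k, ∃ s, k ≤ ctr C s f := by
      intro k
      induction k with
      | zero => exact ⟨0, Nat.zero_le _⟩
      | succ k ih =>
        obtain ⟨s, hs⟩ := ih
        obtain ⟨s', hs', hne⟩ := hcon s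
        have := ctr_mono C f hs'
        simp only at this
        exact ⟨s', by omega⟩
    obtain ⟨s, hs⟩ := this (m+1)
    have := hb s
    omega
  obtain ⟨n, hn⟩ := this
  filter_upwards [eventually_ge_atTop n] with s hs
  rw [hn s hs, hn (s+1) (by omega)]

lemma ctr_infinite (C : ℕ → Set (ℕ → ℕ)) (hC : ∀ m, IsClosed (C m)) (f : ℕ → ℕ)
    (hf : f ∉ ⋃ m, C m) : ∃ᶠ s in atTop, ctr C s f ≠ ctr C (s+1) f := by
  intro hev
  simp only [not_not] at hev
  obtain ⟨n, hn⟩ := eventually_atTop.mp hev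
  have hconst : ∀ k, ctr C (n+k) f = ctr C n f := by
    intro k
    induction k with
    | zero => rfl
    | succ k ih => rw [← add_assoc, ← hn (n+k) (by omega), ih]
  set m := ctr C n f
  obtain ⟨s, hs⟩ := closed_escape (C m) (hC m) f (fun h => hf (Set.mem_iUnion.mpr ⟨m, h⟩))
  have hv := ctr_vis C (n + (s + m + 1)) f
  rw [hconst] at hv
  rcases hv with ⟨h, hh, hi⟩ | h
  · exact hs h hh (fun i his => hi i (by omega))
  · omega

/-- The set of absolutely normal numbers is `Π⁰₃`-hard: for every `Π⁰₃` subset `A` of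
Baire space `ℕ^ℕ` (a countable intersection of countable unions of closed sets in the
product topology) there is a continuous `g : ℕ^ℕ → ℝ` such that `g` maps members of `A`
to absolutely normal reals and non-members to absolutely abnormal reals; in particular
`f ∈ A` iff `g f` is absolutely normal. -/
theorem absolutelyNormal_pi03_hard
    (A : Set (ℕ → ℕ)) (C : ℕ → ℕ → Set (ℕ → ℕ))
    (hC : ∀ n m, IsClosed (C n m)) (hA : A = ⋂ n, ⋃ m, C n m) :
    ∃ g : (ℕ → ℕ) → ℝ, Continuous g ∧ ∀ f : ℕ → ℕ,
      (f ∈ A → AbsolutelyNormal (g f)) ∧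
      (f ∉ A → AbsolutelyAbnormal (g f)) ∧
      (f ∈ A ↔ AbsolutelyNormal (g f)) := by
  let nn : ℕ → ℕ := fun t => t.unpair.1
  let bb : ℕ → ℕ := fun t => t.unpair.2.unpair.1
  let aa : ℕ → ℕ := fun t => t.unpair.2.unpair.2
  obtain ⟨G, hcont, hnorm, habn⟩ := abstract_main (fun t => bb t + 2) (fun t => nn t + bb t + 1)
    (fun t => by omega) (fun t => by omega)
  let E : (ℕ → ℕ) → ℕ → Prop := fun f t => ctr (C (nn t)) (aa t) f ≠ ctr (C (nn t)) (aa t + 1) f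
  have hN : ∀ f, f ∈ A → AbsolutelyNormal (G (E f)) := by
    intro f hf b hb ℓ hℓ
    refine hnorm (E f) ?_ _ (hb.trans (Nat.le_self_pow (by omega) b))
    intro q
    have hfin : ∀ n, ∃ s0, ∀ s ≥ s0, ctr (C n) s f = ctr (C n) (s+1) f := by
      intro n
      rw [hA] at hf
      exact eventually_atTop.mp (ctr_finite (C n) f (Set.mem_iInter.mp hf n))
    choose s0 hs0 using hfin
    have hsub : {t | ¬ (E f t → q ≤ nn t + bb t + 1)} ⊆
        (fun z : ℕ × ℕ × ℕ => Nat.pair z.1 (Nat.pair z.2.1 z.2.2)) ''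
          ((Finset.range q ×ˢ Finset.range q ×ˢ Finset.range (∑ n ∈ Finset.range q, s0 n) :
            Finset (ℕ × ℕ × ℕ)) : Set (ℕ × ℕ × ℕ)) := by
      intro t ht
      have ht' : ¬ (E f t → q ≤ nn t + bb t + 1) := ht
      push Not at ht'
      obtain ⟨h1, h2⟩ := ht'
      refine ⟨(nn t, bb t, aa t), ?_, by simp [nn, bb, aa]⟩
      have h3 : aa t < s0 (nn t) := by
        by_contra h; push Not at h
        exact h1 (hs0 _ _ h)
      have h4 : s0 (nn t) ≤ ∑ n ∈ Finset.range q, s0 n :=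
        Finset.single_le_sum (f := s0) (fun _ _ => Nat.zero_le _) (Finset.mem_range.mpr (by omega))
      simp only [Finset.coe_product, Set.mem_prod, Finset.mem_coe, Finset.mem_range]
      omega
    have hfinite := (Finset.finite_toSet _).image _ |>.subset hsub
    have := hfinite.compl_mem_cofinite
    rw [Nat.cofinite_eq_atTop] at this
    filter_upwards [this] with t ht
    exact not_not.mp ht
  have hB : ∀ f, f ∉ A → AbsolutelyAbnormal (G (E f)) := by
    intro f hf b hb hnb
    have hsn : SimplyNormal b (G (E f)) := by simpa using hnb 1 le_rfl
    rw [hA, Set.mem_iInter, not_forall] at hf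
    obtain ⟨n, hn⟩ := hf
    refine habn (E f) b (n + (b - 2) + 1) ?_ hsn
    have hinf := ctr_infinite (C n) (hC n) f hn
    rw [frequently_atTop] at hinf ⊢
    intro T
    obtain ⟨s, hs, hne⟩ := hinf T
    refine ⟨Nat.pair n (Nat.pair (b-2) s), ?_, ?_, ?_, ?_⟩
    · exact hs.trans ((Nat.right_le_pair _ _).trans (Nat.right_le_pair _ _))
    · simpa [E, nn, aa] using hne
    · simp [bb]; omega
    · simp [nn, bb]
  refine ⟨fun f => G (E f), ?_, fun f => ⟨hN f, hB f, hN f, ?_⟩⟩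
  · rw [continuous_iff_continuousAt]
    intro f
    rw [ContinuousAt, Metric.tendsto_nhds]
    intro ε hε
    obtain ⟨t, ht⟩ := exists_nat_one_div_lt hε
    have hnb : ∀ᶠ f' in nhds f, ∀ i ∈ Finset.range (t + 2), f' i = f i := by
      rw [Filter.eventually_all_finset]
      intro i _
      have : ContinuousAt (fun f' : ℕ → ℕ => f' i) f := (continuous_apply i).continuousAt
      exact this.eventually_mem (isOpen_discrete {f i} |>.mem_nhds rfl)
    filter_upwards [hnb] with f' hf'
    have hcl := hcont (E f') (E f) (t+1) (by omega) ?_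
    · rw [Real.dist_eq]
      refine hcl.trans_lt ?_
      push_cast; exact ht
    · intro s hs
      have ha : aa s ≤ s := (Nat.unpair_right_le _).trans (Nat.unpair_right_le _)
      show _ ≠ _ ↔ _ ≠ _
      rw [ctr_congr _ _ f' f (fun i hi => hf' i (Finset.mem_range.mpr (by omega))),
        ctr_congr _ (aa s + 1) f' f (fun i hi => hf' i (Finset.mem_range.mpr (by omega)))]
  · intro h
    by_contra hf
    exact hB f hf 2 le_rfl (h 2 le_rfl)
end

section
/- For every base b ≥ 2, the set of numbers normal to base b is Π⁰₃-hard: for every set A ⊆ ℕ^ℕ that is Π⁰₃ in Baire space (i.e., A = ⋂_n ⋃_m C_{n,m} for closed sets C_{n,m} ⊆ ℕ^ℕ in the product topology), there is a continuous function g : ℕ^ℕ → ℝ such that for every f ∈ ℕ^ℕ, f ∈ A if and only if g(f) is normal to base b. -/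
open Filter

namespace NPi

open Topology MeasureTheory ProbabilityTheory

/-- value of the block of length `l` starting at `s` -/
def W {b : ℕ} (y : ℕ → Fin b) (s : ℕ) : ℕ → ℕ
  | 0 => 0
  | l + 1 => b * W y s l + (y (s + l)).val

lemma W_lt {b : ℕ} (y : ℕ → Fin b) (s l : ℕ) : W y s l < b ^ l := by
  induction l with
  | zero => simp [W]
  | succ l ih =>
    simp only [W, pow_succ]
    have := (y (s + l)).2
    nlinarith

lemma W_add {b : ℕ} (y : ℕ → Fin b) (n l : ℕ) :
    W y 0 (n + l) = b ^ l * W y 0 n + W y n l := by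
  induction l with
  | zero => simp [W]
  | succ l ih =>
    rw [← add_assoc]
    simp only [W, ih, pow_succ, zero_add]
    ring

lemma W_congr {b : ℕ} (y z : ℕ → Fin b) (s l : ℕ) (h : ∀ j < l, y (s + j) = z (s + j)) :
    W y s l = W z s l := by
  induction l with
  | zero => simp [W]
  | succ l ih =>
    simp only [W]
    rw [ih (fun j hj => h j (by omega)), h l (by omega)]

lemma W_pattern {b : ℕ} (hb : 0 < b) (l : ℕ) : ∀ d < b ^ l, ∃ p : ℕ → Fin b,
    ∀ (y : ℕ → Fin b) (s : ℕ), W y s l = d ↔ ∀ j < l, y (s + j) = p j := by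
  induction l with
  | zero =>
    intro d hd
    refine ⟨fun _ => ⟨0, hb⟩, fun y s => ?_⟩
    simp [W] at hd ⊢; omega
  | succ l ih =>
    intro d hd
    have hq : d / b < b ^ l := by
      rw [Nat.div_lt_iff_lt_mul hb]; rwa [pow_succ] at hd
    obtain ⟨p, hp⟩ := ih (d / b) hq
    refine ⟨fun j => if j = l then ⟨d % b, Nat.mod_lt _ hb⟩ else p j, fun y s => ?_⟩
    have key : W y s (l + 1) = d ↔ W y s l = d / b ∧ (y (s + l)).val = d % b := by
      simp only [W]
      have h1 := (y (s + l)).2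
      constructor
      · intro h
        subst h
        constructor
        · rw [Nat.mul_add_div hb, Nat.div_eq_of_lt h1, add_zero]
        · rw [Nat.mul_add_mod, Nat.mod_eq_of_lt h1]
      · rintro ⟨h, h'⟩
        rw [h, h']; exact Nat.div_add_mod d b
    rw [key, hp]
    constructor
    · rintro ⟨h, h'⟩ j hj
      by_cases hjl : j = l
      · subst hjl; simp [Fin.ext_iff, h']
      · simp only [hjl, if_false]; exact h j (by omega)
    · intro h
      constructor
      · intro j hj
        have := h j (by omega)
        simpa [show j ≠ l by omega] using this
      · have := h l (by omega)
        simpa [Fin.ext_iff] using this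

lemma indep_ind {Ω : Type*} [MeasurableSpace Ω] (μ : Measure Ω) (E F : Set Ω)
    (h : IndepSet E F μ) :
    IndepFun (E.indicator (fun _ => (1 : ℝ))) (F.indicator (fun _ => (1 : ℝ))) μ := by
  have aux : ∀ G : Set Ω, MeasurableSpace.comap (G.indicator (fun _ => (1 : ℝ))) inferInstance
      ≤ MeasurableSpace.generateFrom {G} := by
    intro G
    rw [← measurable_iff_comap_le]
    exact Measurable.indicator measurable_const (MeasurableSpace.measurableSet_generateFrom rfl)
  exact indep_of_indep_of_le_left (indep_of_indep_of_le_right h (aux F)) (aux E)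

lemma ident_ind {Ω : Type*} [MeasurableSpace Ω] (μ : Measure Ω) [IsProbabilityMeasure μ]
    (E F : Set Ω) (hE : MeasurableSet E) (hF : MeasurableSet F) (h : μ E = μ F) :
    IdentDistrib (E.indicator (fun _ => (1 : ℝ))) (F.indicator (fun _ => (1 : ℝ))) μ μ := by
  have mE : Measurable (E.indicator (fun _ => (1 : ℝ))) := measurable_const.indicator hE
  have mF : Measurable (F.indicator (fun _ => (1 : ℝ))) := measurable_const.indicator hF
  refine ⟨mE.aemeasurable, mF.aemeasurable, ?_⟩
  ext s hs
  rw [Measure.map_apply mE hs, Measure.map_apply mF hs]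
  classical
  rw [Set.indicator_const_preimage_eq_union, Set.indicator_const_preimage_eq_union]
  by_cases h1 : (1 : ℝ) ∈ s <;> by_cases h0 : (0 : ℝ) ∈ s <;>
    simp [h1, h0, h, prob_compl_eq_one_sub, hE, hF]

lemma normal_exists (b : ℕ) (hb : 2 ≤ b) : ∃ x : ℕ → Fin b, ∀ l, 1 ≤ l → ∀ d < b ^ l,
    Tendsto (fun n : ℕ => (((Finset.range n).filter (fun i => W x (l * i) l = d)).card : ℝ) / n)
      atTop (𝓝 (1 / (b : ℝ) ^ l)) := by
  have : NeZero b := ⟨by omega⟩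
  let ν : Measure (Fin b) := (PMF.uniformOfFintype (Fin b)).toMeasure
  have : IsProbabilityMeasure ν := PMF.toMeasure.isProbabilityMeasure _
  have hν : ∀ a, ν {a} = (b : ENNReal)⁻¹ := by
    intro a
    rw [PMF.toMeasure_apply_singleton _ _ (MeasurableSet.singleton a)]
    simp
  let μ : Measure (ℕ → Fin b) := Measure.infinitePi (fun _ => ν)
  suffices H : ∀ᵐ x ∂μ, ∀ l, 1 ≤ l → ∀ d < b ^ l,
    Tendsto (fun n : ℕ => (((Finset.range n).filter (fun i => W x (l * i) l = d)).card : ℝ) / n)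
      atTop (𝓝 (1 / (b : ℝ) ^ l)) by
    exact H.exists
  rw [ae_all_iff]; intro l
  rw [ae_all_iff]; intro hl
  rw [ae_all_iff]; intro d
  rw [ae_all_iff]; intro hd
  obtain ⟨p, hp⟩ := W_pattern (by omega : 0 < b) l d hd
  let t : ℕ → Set (Fin b) := fun n => {p (n % l)}
  let I : ℕ → Finset ℕ := fun i => Finset.Ico (l * i) (l * i + l)
  let E : ℕ → Set (ℕ → Fin b) := fun i => Set.pi (I i : Set ℕ) t
  have hWE : ∀ x i, W x (l * i) l = d ↔ x ∈ E i := by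
    intro x i
    rw [hp]
    simp only [E, I, t, Set.mem_pi, Finset.coe_Ico, Set.mem_Ico, Set.mem_singleton_iff]
    constructor
    · rintro h n ⟨h1, h2⟩
      obtain ⟨j, rfl⟩ := Nat.exists_eq_add_of_le h1
      rw [h j (by omega), Nat.mul_add_mod, Nat.mod_eq_of_lt (by omega)]
    · intro h j hj
      rw [h _ ⟨by omega, by omega⟩, Nat.mul_add_mod, Nat.mod_eq_of_lt hj]
  have hpi : ∀ s : Finset ℕ, μ (Set.pi (s : Set ℕ) t) = ((b : ENNReal)⁻¹) ^ s.card := by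
    intro s
    rw [Measure.infinitePi_pi _ (fun i _ => MeasurableSet.singleton _)]
    simp [hν]
  have hEm : ∀ i, MeasurableSet (E i) := fun i =>
    MeasurableSet.pi (Finset.countable_toSet _) (fun i _ => MeasurableSet.singleton _)
  have hEμ : ∀ i, μ (E i) = ((b : ENNReal)⁻¹) ^ l := by
    intro i
    simp only [E]
    rw [hpi]; simp [I]
  have hind : ∀ i j, i ≠ j → IndepSet (E i) (E j) μ := by
    intro i j hij
    rw [indepSet_iff_measure_inter_eq_mul (hEm i) (hEm j) μ]
    have hd : Disjoint (I i) (I j) := by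
      rw [Finset.disjoint_left]
      intro n hn hn'
      simp only [I, Finset.mem_Ico] at hn hn'
      apply hij
      have h1 : n / l = i := by
        rw [Nat.div_eq_iff (by omega), mul_comm]; omega
      have h2 : n / l = j := by
        rw [Nat.div_eq_iff (by omega), mul_comm]; omega
      omega
    have : E i ∩ E j = Set.pi ((I i ∪ I j : Finset ℕ) : Set ℕ) t := by
      rw [Finset.coe_union, Set.union_pi]
    rw [this, hpi, Finset.card_union_of_disjoint hd, pow_add]
    simp only [E]
    rw [hpi, hpi]
  have := strong_law_ae_real (μ := μ) (fun i => (E i).indicator (fun _ => (1 : ℝ)))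
    ((integrable_const (1 : ℝ)).indicator (hEm 0))
    (fun i j hij => indep_ind μ _ _ (hind i j hij))
    (fun i => ident_ind μ _ _ (hEm i) (hEm 0) (by rw [hEμ, hEμ]))
  filter_upwards [this] with x hx
  have hint : ∫ a, (E 0).indicator (fun _ => (1 : ℝ)) a ∂μ = 1 / (b : ℝ) ^ l := by
    rw [integral_indicator_const _ (hEm 0), Measure.real, hEμ]
    simp
  rw [hint] at hx
  refine hx.congr fun n => ?_
  congr 1
  classical
  rw [Finset.card_filter]
  push_cast
  refine Finset.sum_congr rfl fun i _ => ?_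
  simp only [hWE, Set.indicator_apply]


lemma ofDigits_lt_one {b : ℕ} (hb : 2 ≤ b) (y : ℕ → Fin b) (i : ℕ) (hi : (y i).val = 0) :
    Real.ofDigits y < 1 := by
  let y' : ℕ → Fin b := Function.update y i ⟨1, by omega⟩
  refine lt_of_lt_of_le ?_ (Real.ofDigits_le_one y')
  unfold Real.ofDigits
  have hpos : (0 : ℝ) < ((b : ℝ) ^ (i + 1))⁻¹ := by
    have : (0 : ℝ) < b := by exact_mod_cast (by omega : 0 < b)
    positivity
  refine Summable.tsum_lt_tsum (i := i) ?_ ?_ Real.summable_ofDigitsTerm Real.summable_ofDigitsTerm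
  · intro j
    by_cases h : j = i
    · subst h
      simp only [Real.ofDigitsTerm, hi, y', Function.update_self]
      simp
    · simp [Real.ofDigitsTerm, y', Function.update_of_ne h]
  · simp only [Real.ofDigitsTerm, hi, y', Function.update_self]
    simpa using hpos

lemma pow_mul_sum {b : ℕ} (hb : 2 ≤ b) (y : ℕ → Fin b) (n : ℕ) :
    (b : ℝ) ^ n * ∑ i ∈ Finset.range n, Real.ofDigitsTerm y i = (W y 0 n : ℝ) := by
  have hb0 : (b : ℝ) ≠ 0 := by exact_mod_cast (by omega : b ≠ 0)
  induction n with
  | zero => simp [W]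
  | succ n ih =>
    rw [Finset.sum_range_succ, mul_add, pow_succ', mul_assoc, ih, Real.ofDigitsTerm]
    simp only [W, zero_add]
    push_cast
    field_simp
    ring

lemma rdigit_ofDigits {b : ℕ} (hb : 2 ≤ b) (y : ℕ → Fin b)
    (hz : ∀ N, ∃ i, N ≤ i ∧ (y i).val = 0) (l : ℕ) (i : ℕ) :
    rdigit (b ^ l) (Real.ofDigits y) i = W y (l * i) l := by
  have hb0 : (b : ℝ) ≠ 0 := by exact_mod_cast (by omega : b ≠ 0)
  have hlt : ∀ n, Real.ofDigits (fun i => y (i + n)) < 1 := by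
    intro n
    obtain ⟨j, hj, hj'⟩ := hz n
    exact ofDigits_lt_one hb _ (j - n) (by simpa [Nat.sub_add_cancel hj] using hj')
  have hfr : Int.fract (Real.ofDigits y) = Real.ofDigits y := by
    rw [Int.fract_eq_self]
    exact ⟨Real.ofDigits_nonneg _, by simpa using hlt 0⟩
  have hfl : ∀ n, ⌊Real.ofDigits y * (b : ℝ) ^ n⌋ = (W y 0 n : ℤ) := by
    intro n
    rw [Int.floor_eq_iff]
    have : Real.ofDigits y * (b : ℝ) ^ n = W y 0 n + Real.ofDigits (fun i => y (i + n)) := by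
      rw [Real.ofDigits_eq_sum_add_ofDigits y n, ← pow_mul_sum hb]
      field_simp
    rw [this]
    have h0 := Real.ofDigits_nonneg (fun i => y (i + n))
    have h1 := hlt n
    push_cast
    constructor <;> linarith
  unfold rdigit
  rw [hfr]
  push_cast
  rw [← pow_mul, hfl, Int.toNat_natCast, mul_add, mul_one, W_add, Nat.mul_add_mod,
    Nat.mod_eq_of_lt (W_lt _ _ _)]

lemma rdigits_count (b : ℕ) (R : ℝ) (n d : ℕ) :
    (rdigits b R n).count d = ((Finset.range n).filter (fun i => rdigit b R i = d)).card := by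
  unfold rdigits
  induction n with
  | zero => simp
  | succ n ih =>
    rw [List.range_succ, List.map_append, List.count_append, ih, Finset.range_add_one,
      Finset.filter_insert]
    split_ifs with h
    · rw [Finset.card_insert_of_notMem (by simp)]; simp [h]
    · simp [h]

lemma normal_iff {b : ℕ} (hb : 2 ≤ b) (y : ℕ → Fin b)
    (hz : ∀ N, ∃ i, N ≤ i ∧ (y i).val = 0) :
    NormalBase b (Real.ofDigits y) ↔ ∀ l, 1 ≤ l → ∀ d < b ^ l,
    Tendsto (fun n : ℕ => (((Finset.range n).filter (fun i => W y (l * i) l = d)).card : ℝ) / n)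
      atTop (𝓝 (1 / (b : ℝ) ^ l)) := by
  unfold NormalBase SimplyNormal
  simp only [rdigits_count, rdigit_ofDigits hb y hz, Nat.cast_pow]

/-- overwritten positions -/
def S (L : ℕ → ℕ) (i : ℕ) : Prop := i < 2 ^ (Nat.log 2 i) + 2 ^ (Nat.log 2 i - L (Nat.log 2 i))

instance (L : ℕ → ℕ) : DecidablePred (S L) := fun i => by unfold S; infer_instance

/-- number of overwritten positions below `n` -/
def sc (L : ℕ → ℕ) (n : ℕ) : ℕ := ((Finset.range n).filter (S L)).card

lemma sc_mono (L : ℕ → ℕ) : Monotone (sc L) := by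
  intro m n h
  exact Finset.card_le_card (Finset.filter_subset_filter _ (Finset.range_subset_range.2 h))

lemma sc_step (L : ℕ → ℕ) (k q : ℕ) (h : q ≤ L k) :
    sc L (2 ^ (k + 1)) ≤ sc L (2 ^ k) + 2 ^ (k - q) := by
  unfold sc
  have : (Finset.range (2 ^ (k + 1))).filter (S L) ⊆
      (Finset.range (2 ^ k)).filter (S L) ∪ Finset.Ico (2 ^ k) (2 ^ k + 2 ^ (k - q)) := by
    intro i hi
    simp only [Finset.mem_filter, Finset.mem_range, Finset.mem_union, Finset.mem_Ico] at hi ⊢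
    by_cases h' : i < 2 ^ k
    · exact Or.inl ⟨h', hi.2⟩
    · right
      refine ⟨by omega, ?_⟩
      have hl : Nat.log 2 i = k := Nat.log_eq_of_pow_le_of_lt_pow (by omega) hi.1
      have := hi.2
      unfold S at this
      rw [hl] at this
      have : 2 ^ (k - L k) ≤ 2 ^ (k - q) := Nat.pow_le_pow_right (by norm_num) (by omega)
      omega
  refine (Finset.card_le_card this).trans ((Finset.card_union_le _ _).trans ?_)
  simp

lemma sc_bound (L : ℕ → ℕ) (hL : Tendsto L atTop atTop) (q : ℕ) :
    ∃ C, ∀ n, sc L n * 2 ^ q ≤ C + 2 * n := by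
  obtain ⟨K0, hK0⟩ := Filter.eventually_atTop.1 (hL.eventually_ge_atTop q)
  let K := max K0 q
  have hk : ∀ k, K ≤ k → sc L (2 ^ k) * 2 ^ q ≤ sc L (2 ^ K) * 2 ^ q + 2 ^ k := by
    intro k hk
    induction k, hk using Nat.le_induction with
    | base => exact Nat.le_add_right _ _
    | succ k hk ih =>
      have h1 := sc_step L k q (hK0 k (le_trans (le_max_left _ _) hk))
      have h2 : 2 ^ (k - q) * 2 ^ q = 2 ^ k := by
        rw [← pow_add, Nat.sub_add_cancel (le_trans (le_max_right _ _) hk)]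
      calc _ ≤ (sc L (2 ^ k) + 2 ^ (k - q)) * 2 ^ q := Nat.mul_le_mul_right _ h1
        _ = sc L (2 ^ k) * 2 ^ q + 2 ^ k := by rw [add_mul, h2]
        _ ≤ _ := by rw [pow_succ]; omega
  refine ⟨sc L (2 ^ K) * 2 ^ q + 2 ^ K, fun n => ?_⟩
  rcases Nat.eq_zero_or_pos n with rfl | hn
  · simp [sc]
  by_cases h : n ≤ 2 ^ K
  · have := Nat.mul_le_mul_right (2 ^ q) (sc_mono L h)
    omega
  · have h1 : n < 2 ^ (Nat.log 2 n + 1) := Nat.lt_pow_succ_log_self (by norm_num) n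
    have h2 : 2 ^ (Nat.log 2 n) ≤ n := Nat.pow_log_le_self 2 (by omega)
    have h3 : K ≤ Nat.log 2 n := Nat.le_log_of_pow_le (by norm_num) (by omega)
    have h4 := hk (Nat.log 2 n + 1) (by omega)
    have := Nat.mul_le_mul_right (2 ^ q) (sc_mono L h1.le)
    have h5 : 2 ^ (Nat.log 2 n + 1) ≤ 2 * n := by rw [pow_succ]; omega
    have h6 : 0 ≤ 2 ^ K := Nat.zero_le _
    linarith

lemma sc_tendsto (L : ℕ → ℕ) (hL : Tendsto L atTop atTop) (l : ℕ) :
    Tendsto (fun n : ℕ => (sc L (l * n) : ℝ) / n) atTop (𝓝 0) := by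
  rw [Metric.tendsto_atTop]
  intro ε hε
  obtain ⟨q, hq⟩ := pow_unbounded_of_one_lt ((2 * l + 1 : ℝ) / ε) (by norm_num : (1 : ℝ) < 2)
  obtain ⟨C, hC⟩ := sc_bound L hL q
  refine ⟨C + 1, fun n hn => ?_⟩
  have hn0 : (0 : ℝ) < n := by exact_mod_cast (by omega : 0 < n)
  rw [Real.dist_eq, sub_zero, abs_of_nonneg (by positivity), div_lt_iff₀ hn0]
  have h1 : (sc L (l * n) : ℝ) * 2 ^ q ≤ C + 2 * (l * n) := by exact_mod_cast hC (l * n)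
  have h2 : (C : ℝ) < n := by exact_mod_cast hn
  rw [div_lt_iff₀ hε] at hq
  have h3 : (sc L (l * n) : ℝ) * 2 ^ q < (ε * n) * 2 ^ q := by nlinarith
  exact lt_of_mul_lt_mul_right h3 (by positivity)

/-- the modified sequence -/
def Y {b : ℕ} (x : ℕ → Fin b) (z : Fin b) (L : ℕ → ℕ) (i : ℕ) : Fin b :=
  if S L i then z else x i

lemma card_le_sc {b : ℕ} (y y' : ℕ → Fin b) (L : ℕ → ℕ) (h : ∀ i, ¬ S L i → y i = y' i)
    (l d n : ℕ) :
    ((Finset.range n).filter (fun i => W y (l * i) l = d)).card ≤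
    ((Finset.range n).filter (fun i => W y' (l * i) l = d)).card + sc L (l * n) := by
  have : (Finset.range n).filter (fun i => W y (l * i) l = d) ⊆
      (Finset.range n).filter (fun i => W y' (l * i) l = d) ∪
        ((Finset.range (l * n)).filter (S L)).image (· / l) := by
    intro i hi
    simp only [Finset.mem_filter, Finset.mem_range, Finset.mem_union, Finset.mem_image] at hi ⊢
    by_cases h' : ∃ j < l, S L (l * i + j)
    · obtain ⟨j, hj, hS⟩ := h'
      right
      refine ⟨l * i + j, ⟨?_, hS⟩, ?_⟩
      · have : l * (i + 1) ≤ l * n := Nat.mul_le_mul_left _ hi.1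
        rw [mul_add, mul_one] at this
        omega
      · rw [Nat.mul_add_div (by omega), Nat.div_eq_of_lt hj, add_zero]
    · push Not at h'
      left
      refine ⟨hi.1, ?_⟩
      rw [← hi.2]
      exact W_congr _ _ _ _ fun j hj => (h _ (h' j hj)).symm
  refine (Finset.card_le_card this).trans ((Finset.card_union_le _ _).trans ?_)
  exact Nat.add_le_add_left Finset.card_image_le _

lemma Y_normal {b : ℕ} (x : ℕ → Fin b) (z : Fin b) (L : ℕ → ℕ) (hL : Tendsto L atTop atTop)
    (l d : ℕ) (c : ℝ)
    (hx : Tendsto (fun n : ℕ =>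
      (((Finset.range n).filter (fun i => W x (l * i) l = d)).card : ℝ) / n) atTop (𝓝 c)) :
    Tendsto (fun n : ℕ =>
      (((Finset.range n).filter (fun i => W (Y x z L) (l * i) l = d)).card : ℝ) / n)
      atTop (𝓝 c) := by
  have hs := sc_tendsto L hL l
  have h1 := hx.sub hs
  have h2 := hx.add hs
  rw [sub_zero] at h1
  rw [add_zero] at h2
  refine tendsto_of_tendsto_of_tendsto_of_le_of_le h1 h2 (fun n => ?_) (fun n => ?_)
  · have := card_le_sc x (Y x z L) L (fun i hi => by simp [Y, hi]) l d n
    have : (((Finset.range n).filter (fun i => W x (l * i) l = d)).card : ℝ) ≤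
      ((Finset.range n).filter (fun i => W (Y x z L) (l * i) l = d)).card + sc L (l * n) := by
      exact_mod_cast this
    simp only
    rw [← sub_div]
    gcongr
    linarith
  · have := card_le_sc (Y x z L) x L (fun i hi => by simp [Y, hi]) l d n
    simp only
    rw [← add_div]
    gcongr
    exact_mod_cast this

lemma Y_zero {b : ℕ} (x : ℕ → Fin b) (z : Fin b) (L : ℕ → ℕ) (k q i : ℕ) (hq : L k ≤ q)
    (h1 : 2 ^ k ≤ i) (h2 : i < 2 ^ k + 2 ^ (k - q)) : Y x z L i = z := by
  have h3 : 2 ^ (k - q) ≤ 2 ^ k := Nat.pow_le_pow_right (by norm_num) (by omega)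
  have hl : Nat.log 2 i = k := Nat.log_eq_of_pow_le_of_lt_pow h1 (by rw [pow_succ]; omega)
  have h4 : 2 ^ (k - q) ≤ 2 ^ (k - L k) := Nat.pow_le_pow_right (by norm_num) (by omega)
  have : S L i := by unfold S; rw [hl]; omega
  simp [Y, this]

lemma Y_inf {b : ℕ} (x : ℕ → Fin b) (z : Fin b) (hz : z.val = 0) (L : ℕ → ℕ) (N : ℕ) :
    ∃ i, N ≤ i ∧ (Y x z L i).val = 0 := by
  refine ⟨2 ^ N, Nat.lt_two_pow_self.le, ?_⟩
  rw [Y_zero x z L N (L N) _ le_rfl le_rfl (by simp), hz]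

lemma Y_not_normal {b : ℕ} (hb : 2 ≤ b) (x : ℕ → Fin b) (z : Fin b) (hz : z.val = 0)
    (L : ℕ → ℕ)
    (hx : Tendsto (fun n : ℕ =>
      (((Finset.range n).filter (fun i => W (Y x z L) (1 * i) 1 = 0)).card : ℝ) / n) atTop
        (𝓝 (1 / (b : ℝ) ^ 1))) : Tendsto L atTop atTop := by
  by_contra hL
  rw [Filter.tendsto_atTop] at hL
  push Not at hL
  obtain ⟨q, hq⟩ := hL
  set c : ℕ → ℕ := fun n =>
    ((Finset.range n).filter (fun i => W (Y x z L) (1 * i) 1 = 0)).card with hc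
  let ε : ℝ := 1 / (8 * 2 ^ q)
  have hε : 0 < ε := by positivity
  obtain ⟨N, hN⟩ := Metric.tendsto_atTop.1 hx ε hε
  have hN' : ∀ n, N ≤ n → 0 < n → |(c n : ℝ) - n / b| < ε * n := by
    intro n hn h0
    have h0' : (0 : ℝ) < n := by exact_mod_cast h0
    have := hN n hn
    rw [Real.dist_eq, pow_one] at this
    have h2 : (c n : ℝ) - n / b = ((c n : ℝ) / n - 1 / b) * n := by field_simp
    rw [h2, abs_mul, abs_of_pos h0']
    exact mul_lt_mul_of_pos_right this h0'
  obtain ⟨k, hkq, hk⟩ := (Filter.frequently_atTop.1 hq) (N + q)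
  set M := 2 ^ k with hM
  set D := 2 ^ (k - q) with hD
  have hMD : M = D * 2 ^ q := by rw [hM, hD, ← pow_add, Nat.sub_add_cancel (by omega)]
  have hkM : k < M := Nat.lt_two_pow_self
  have hD0 : 0 < D := by positivity
  have hDM : D ≤ M := Nat.pow_le_pow_right (by norm_num) (by omega)
  have hcc : c M + D ≤ c (M + D) := by
    have hsub : (Finset.range M).filter (fun i => W (Y x z L) (1 * i) 1 = 0) ∪
        Finset.Ico M (M + D) ⊆
        (Finset.range (M + D)).filter (fun i => W (Y x z L) (1 * i) 1 = 0) := by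
      intro i hi
      simp only [Finset.mem_filter, Finset.mem_range, Finset.mem_union, Finset.mem_Ico] at hi ⊢
      rcases hi with hi | hi
      · exact ⟨by omega, hi.2⟩
      · refine ⟨hi.2, ?_⟩
        simp [W, Y_zero x z L k q i (by omega) hi.1 hi.2, hz]
    have := Finset.card_le_card hsub
    rw [Finset.card_union_of_disjoint] at this
    · simpa [hc] using this
    · rw [Finset.disjoint_left]
      intro i hi
      simp only [Finset.mem_filter, Finset.mem_range, Finset.mem_Ico] at hi ⊢
      omega
  have h1 := abs_lt.1 (hN' M (by omega) (by omega))
  have h2 := abs_lt.1 (hN' (M + D) (by omega) (by omega))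
  have hcc' : (c M : ℝ) + D ≤ c (M + D) := by exact_mod_cast hcc
  have hεM : ε * M = D / 8 := by
    rw [hMD]; simp only [ε]; push_cast; field_simp
  have hDM' : ε * (D : ℝ) ≤ ε * M := by
    have : (D : ℝ) ≤ M := by exact_mod_cast hDM
    gcongr
  have hDb : (D : ℝ) / b ≤ D / 2 := by
    have : (2 : ℝ) ≤ b := by exact_mod_cast hb
    gcongr
  have hD0' : (0 : ℝ) < D := by exact_mod_cast hD0
  have h3 := h1.1
  have h4 := h2.2
  push_cast at h4
  rw [add_div, mul_add] at h4
  linarith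

lemma cont_of_finite {X : Type*} [TopologicalSpace X] (F : (ℕ → ℕ) → X) (K : ℕ)
    (h : ∀ f f' : ℕ → ℕ, (∀ i < K, f i = f' i) → F f = F f') : Continuous F := by
  have : F = (fun r : Fin K → ℕ => F (fun i => if hi : i < K then r ⟨i, hi⟩ else 0)) ∘
      (fun f i => f i.val) := by
    funext f
    exact h _ _ (fun i hi => by simp [hi])
  rw [this]
  exact continuous_of_discreteTopology.comp (by fun_prop)

section red
variable (C : ℕ → ℕ → Set (ℕ → ℕ))

/-- the cylinder of `f` of length `k` meets `C n m` -/
def Meets (f : ℕ → ℕ) (k n m : ℕ) : Prop := ∃ h ∈ C n m, ∀ i < k, h i = f i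

open Classical in
/-- current guess -/
noncomputable def mm (n : ℕ) (f : ℕ → ℕ) (k : ℕ) : ℕ :=
  Nat.find (p := fun m => Meets C f k n m ∨ m = k) ⟨k, Or.inr rfl⟩

open Classical in
/-- least index of a guess that changes -/
noncomputable def LL (f : ℕ → ℕ) (k : ℕ) : ℕ :=
  Nat.find (p := fun n => mm C n f (k + 1) ≠ mm C n f k ∨ n = k) ⟨k, Or.inr rfl⟩

lemma Meets_congr {f f' : ℕ → ℕ} {k : ℕ} (h : ∀ i < k, f i = f' i) (n m : ℕ) :
    Meets C f k n m ↔ Meets C f' k n m := by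
  unfold Meets
  constructor
  · rintro ⟨g, hg, h'⟩; exact ⟨g, hg, fun i hi => by rw [h' i hi, h i hi]⟩
  · rintro ⟨g, hg, h'⟩; exact ⟨g, hg, fun i hi => by rw [h' i hi, h i hi]⟩

lemma mm_congr {f f' : ℕ → ℕ} {k : ℕ} (h : ∀ i < k, f i = f' i) (n : ℕ) :
    mm C n f k = mm C n f' k := by
  unfold mm
  congr 1
  funext m
  rw [Meets_congr C h]

lemma LL_cont (k : ℕ) : Continuous (fun f => LL C f k) := by
  refine cont_of_finite _ (k + 1) fun f f' h => ?_
  have h1 : ∀ n, mm C n f (k + 1) = mm C n f' (k + 1) := mm_congr C h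
  have h2 : ∀ n, mm C n f k = mm C n f' k := mm_congr C (fun i hi => h i (by omega))
  unfold LL
  simp only [h1, h2]

lemma mm_le (n : ℕ) (f : ℕ → ℕ) (k : ℕ) : mm C n f k ≤ k := by
  classical
  exact Nat.find_min' _ (Or.inr rfl)

lemma mm_mono (n : ℕ) (f : ℕ → ℕ) : Monotone (mm C n f) := by
  classical
  refine monotone_nat_of_le_succ fun k => ?_
  rcases Nat.find_spec (p := fun m => Meets C f (k + 1) n m ∨ m = k + 1) ⟨k + 1, Or.inr rfl⟩
    with h | h
  · refine Nat.find_min' _ (Or.inl ?_)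
    obtain ⟨g, hg, h'⟩ := h
    exact ⟨g, hg, fun i hi => h' i (by omega)⟩
  · refine (mm_le C n f k).trans ?_
    have : mm C n f (k + 1) = k + 1 := h
    omega

lemma red (hC : ∀ n m, IsClosed (C n m)) (f : ℕ → ℕ) :
    f ∈ (⋂ n, ⋃ m, C n m) ↔ Tendsto (LL C f) atTop atTop := by
  classical
  simp only [Set.mem_iInter, Set.mem_iUnion]
  constructor
  · intro h
    have hev : ∀ n, ∀ᶠ k in atTop, mm C n f (k + 1) = mm C n f k := by
      intro n
      obtain ⟨m, hm⟩ := h n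
      have hbd : ∀ k, mm C n f k ≤ m := fun k => Nat.find_min' _ (Or.inl ⟨f, hm, fun _ _ => rfl⟩)
      have hbdd : BddAbove (Set.range (mm C n f)) := ⟨m, by rintro _ ⟨k, rfl⟩; exact hbd k⟩
      have ht := tendsto_atTop_ciSup (mm_mono C n f) hbdd
      rw [nhds_discrete, tendsto_pure] at ht
      filter_upwards [ht, (tendsto_add_atTop_nat 1).eventually ht] with k h1 h2
      rw [h1, h2]
    rw [tendsto_atTop]
    intro N
    have : ∀ᶠ k in atTop, ∀ n ∈ Finset.range N, mm C n f (k + 1) = mm C n f k :=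
      (Filter.eventually_all_finset _).2 fun n _ => hev n
    filter_upwards [this, eventually_ge_atTop N] with k hk hkN
    refine (Nat.le_find_iff _ _).2 fun n hn => ?_
    push Not
    exact ⟨hk n (Finset.mem_range.2 hn), by omega⟩
  · intro h n
    obtain ⟨K, hK⟩ := Filter.eventually_atTop.1 (h.eventually_gt_atTop n)
    have hst : ∀ k, K ≤ k → mm C n f (k + 1) = mm C n f k := by
      intro k hk
      have := Nat.find_min (p := fun n => mm C n f (k + 1) ≠ mm C n f k ∨ n = k) _ (hK k hk)
      push Not at this
      exact this.1
    have hcon : ∀ k, K ≤ k → mm C n f k = mm C n f K := by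
      intro k hk
      induction k, hk using Nat.le_induction with
      | base => rfl
      | succ k hk ih => rw [hst k hk, ih]
    set m := mm C n f K with hm
    refine ⟨m, ?_⟩
    have hmeet : ∀ k, Meets C f (k + K + m + 1) n m := by
      intro k
      have h1 := hcon (k + K + m + 1) (by omega)
      have h2 := Nat.find_spec (p := fun m' => Meets C f (k + K + m + 1) n m' ∨ m' = k + K + m + 1)
        ⟨_, Or.inr rfl⟩
      change Meets C f (k + K + m + 1) n (mm C n f (k + K + m + 1)) ∨
        mm C n f (k + K + m + 1) = k + K + m + 1 at h2
      rw [h1] at h2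
      rcases h2 with h2 | h2
      · exact h2
      · omega
    choose g hg hgf using hmeet
    refine (hC n m).mem_of_tendsto (f := g) (b := atTop) ?_ (Filter.Eventually.of_forall hg)
    rw [tendsto_pi_nhds]
    intro i
    refine tendsto_const_nhds.congr' ?_
    filter_upwards [eventually_ge_atTop i] with k hk
    exact (hgf k i (by omega)).symm

end red

end NPi

/-- For every base `b ≥ 2`, the set of numbers normal to base `b` is `Π⁰₃`-hard: for
every `Π⁰₃` subset `A` of Baire space `ℕ^ℕ` (a countable intersection of countable
unions of closed sets in the product topology) there is a continuous `g : ℕ^ℕ → ℝ`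
such that `f ∈ A` iff `g f` is normal to base `b`. -/
theorem normalBase_pi03_hard (b : ℕ) (hb : 2 ≤ b)
    (A : Set (ℕ → ℕ)) (C : ℕ → ℕ → Set (ℕ → ℕ))
    (hC : ∀ n m, IsClosed (C n m)) (hA : A = ⋂ n, ⋃ m, C n m) :
    ∃ g : (ℕ → ℕ) → ℝ, Continuous g ∧ ∀ f : ℕ → ℕ, f ∈ A ↔ NormalBase b (g f) := by
  classical
  obtain ⟨x, hx⟩ := NPi.normal_exists b hb
  let z : Fin b := ⟨0, by omega⟩
  refine ⟨fun f => Real.ofDigits (NPi.Y x z (NPi.LL C f)), ?_, fun f => ?_⟩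
  · refine Real.continuous_ofDigits.comp (continuous_pi fun i => ?_)
    exact (continuous_of_discreteTopology (f := fun v : ℕ =>
      if i < 2 ^ (Nat.log 2 i) + 2 ^ (Nat.log 2 i - v) then z else x i)).comp
      (NPi.LL_cont C (Nat.log 2 i))
  · rw [hA, NPi.red C hC, NPi.normal_iff hb _ (NPi.Y_inf x z rfl _)]
    constructor
    · intro hL l hl d hd
      exact NPi.Y_normal x z _ hL l d _ (hx l hl d hd)
    · intro h
      exact NPi.Y_not_normal hb x z rfl _ (h 1 le_rfl 0 (by simp; omega))
end

section
/- The set of absolutely abnormal real numbers is Σ⁰₃-hard: for every set A ⊆ ℕ^ℕ that is Σ⁰₃ in Baire space (i.e., A = ⋃_n ⋂_m U_{n,m} for open sets U_{n,m} ⊆ ℕ^ℕ in the product topology), there is a continuous function g : ℕ^ℕ → ℝ such that for every f ∈ ℕ^ℕ: if f ∈ A then g(f) is absolutely abnormal, and if f ∉ A then g(f) is absolutely normal. -/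
open Filter

/-! ### Weyl criterion -/

lemma weyl_cont (u : ℕ → AddCircle (1:ℝ))
    (hu : ∀ h : ℕ, 1 ≤ h → Tendsto (fun n : ℕ => (∑ i ∈ Finset.range n, fourier (h:ℤ) (u i)) / (n:ℂ))
      atTop (nhds 0)) (f : C(AddCircle (1:ℝ), ℂ)) :
    Tendsto (fun n : ℕ => (∑ i ∈ Finset.range n, f (u i)) / (n:ℂ)) atTop
      (nhds (∫ x, f x ∂AddCircle.haarAddCircle)) := by
  have hint : ∀ g : C(AddCircle (1:ℝ), ℂ), MeasureTheory.Integrable g AddCircle.haarAddCircle :=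
    fun g => g.continuous.integrable_of_hasCompactSupport (HasCompactSupport.of_compactSpace _)
  have hspan : ∀ g ∈ Submodule.span ℂ (Set.range (@fourier (1:ℝ))),
      Tendsto (fun n : ℕ => (∑ i ∈ Finset.range n, g (u i)) / (n:ℂ)) atTop
      (nhds (∫ x, g x ∂AddCircle.haarAddCircle)) := by
    intro g hg
    induction hg using Submodule.span_induction with
    | mem g hg =>
      obtain ⟨m, rfl⟩ := hg
      have hI : ∫ x, (fourier m) x ∂(@AddCircle.haarAddCircle 1 _) = if m = 0 then 1 else 0 := by
        have := congrFun (fourierCoeff_fourier (T := 1) m) 0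
        simp [fourierCoeff, Pi.single_apply] at this
        simpa [eq_comm] using this
      rw [hI]
      rcases lt_trichotomy m 0 with hm | hm | hm
      · obtain ⟨h, rfl⟩ : ∃ h : ℕ, m = -(h:ℤ) := ⟨m.natAbs, by omega⟩
        have := (hu h (by omega))
        have h2 := (Complex.continuous_conj.tendsto 0).comp this
        rw [if_neg (by omega)]
        simp only [map_zero] at h2
        refine h2.congr ?_
        intro n
        simp only [Function.comp, map_div₀, map_sum, Complex.conj_natCast, fourier_neg]
      · subst hm
        simp only [fourier_zero, if_true]
        refine tendsto_const_nhds.congr' ?_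
        filter_upwards [eventually_gt_atTop 0] with n hn
        have : (n:ℂ) ≠ 0 := by exact_mod_cast hn.ne'
        simp [this]
      · obtain ⟨h, rfl⟩ : ∃ h : ℕ, m = (h:ℤ) := ⟨m.natAbs, by omega⟩
        rw [if_neg (by omega)]
        exact hu h (by omega)
    | zero => simp
    | add g1 g2 _ _ h1 h2 =>
      have := h1.add h2
      rw [← MeasureTheory.integral_add (hint g1) (hint g2)] at this
      refine this.congr ?_
      intro n
      simp [Finset.sum_add_distrib, add_div]
    | smul a g _ h1 =>
      have := h1.const_mul a
      rw [← MeasureTheory.integral_const_mul] at this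
      refine this.congr ?_
      intro n
      simp only [ContinuousMap.smul_apply, smul_eq_mul]
      rw [← Finset.mul_sum, mul_div_assoc]
  rw [Metric.tendsto_atTop]
  intro ε hε
  have hmem : f ∈ (Submodule.span ℂ (Set.range (@fourier (1:ℝ)))).topologicalClosure := by
    rw [span_fourier_closure_eq_top]; trivial
  rw [← SetLike.mem_coe, Submodule.topologicalClosure_coe, Metric.mem_closure_iff] at hmem
  obtain ⟨g, hg, hfg⟩ := hmem (ε/3) (by positivity)
  obtain ⟨N, hN⟩ := Metric.tendsto_atTop.1 (hspan g hg) (ε/3) (by positivity)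
  have hd : ∀ x, ‖f x - g x‖ ≤ ε/3 := by
    intro x
    rw [← dist_eq_norm]
    exact (ContinuousMap.dist_apply_le_dist x).trans hfg.le
  refine ⟨max N 1, fun n hn => ?_⟩
  have hn1 : 0 < n := by have := le_max_right N 1; omega
  have h1 := hN n ((le_max_left _ _).trans hn)
  have h2 : ‖(∑ i ∈ Finset.range n, f (u i)) / (n:ℂ) - (∑ i ∈ Finset.range n, g (u i)) / (n:ℂ)‖ ≤ ε/3 := by
    rw [← sub_div, ← Finset.sum_sub_distrib, norm_div, Complex.norm_natCast,
      div_le_iff₀ (by exact_mod_cast hn1)]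
    refine (norm_sum_le _ _).trans ((Finset.sum_le_sum (fun i _ => hd (u i))).trans ?_)
    simp [mul_comm]
  have h3 : ‖(∫ x, f x ∂(@AddCircle.haarAddCircle 1 _)) - ∫ x, g x ∂AddCircle.haarAddCircle‖ ≤ ε/3 := by
    rw [← MeasureTheory.integral_sub (hint f) (hint g)]
    have := MeasureTheory.norm_integral_le_of_norm_le_const (μ := @AddCircle.haarAddCircle 1 _)
      (Eventually.of_forall hd)
    simpa using this
  rw [dist_eq_norm] at h1 ⊢
  have e : (∑ i ∈ Finset.range n, f (u i)) / (n:ℂ) - ∫ x, f x ∂(@AddCircle.haarAddCircle 1 _) =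
    ((∑ i ∈ Finset.range n, f (u i)) / (n:ℂ) - (∑ i ∈ Finset.range n, g (u i)) / (n:ℂ)) +
    ((∑ i ∈ Finset.range n, g (u i)) / (n:ℂ) - ∫ x, g x ∂(@AddCircle.haarAddCircle 1 _)) -
    ((∫ x, f x ∂(@AddCircle.haarAddCircle 1 _)) - ∫ x, g x ∂AddCircle.haarAddCircle) := by ring
  rw [e]
  refine lt_of_le_of_lt (norm_sub_le _ _) ?_
  have := norm_add_le ((∑ i ∈ Finset.range n, f (u i)) / (n:ℂ) - (∑ i ∈ Finset.range n, g (u i)) / (n:ℂ))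
    ((∑ i ∈ Finset.range n, g (u i)) / (n:ℂ) - ∫ x, g x ∂(@AddCircle.haarAddCircle 1 _))
  linarith

lemma weyl_real (u : ℕ → AddCircle (1:ℝ))
    (hu : ∀ h : ℕ, 1 ≤ h → Tendsto (fun n : ℕ => (∑ i ∈ Finset.range n, fourier (h:ℤ) (u i)) / (n:ℂ))
      atTop (nhds 0)) (f : AddCircle (1:ℝ) → ℝ) (hf : Continuous f) :
    Tendsto (fun n : ℕ => (∑ i ∈ Finset.range n, f (u i)) / (n:ℝ)) atTop
      (nhds (∫ x, f x ∂MeasureTheory.volume)) := by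
  have := weyl_cont u hu ⟨fun x => (f x : ℂ), by fun_prop⟩
  have h2 := (Complex.continuous_re.tendsto _).comp this
  simp only [ContinuousMap.coe_mk] at h2
  have h3 : (∫ x, (f x : ℂ) ∂(@AddCircle.haarAddCircle 1 _)) = ((∫ x, f x ∂MeasureTheory.volume : ℝ) : ℂ) := by
    rw [AddCircle.integral_haarAddCircle, ← integral_complex_ofReal]
    simp
  rw [h3, Complex.ofReal_re] at h2
  refine h2.congr ?_
  intro n
  simp only [Function.comp]
  rw [← Complex.ofReal_sum, ← Complex.ofReal_natCast, ← Complex.ofReal_div, Complex.ofReal_re]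

/-- trapezoid -/
noncomputable def trap (z : AddCircle (1:ℝ)) (r ε : ℝ) (x : AddCircle (1:ℝ)) : ℝ :=
  max 0 (min 1 (1 - (‖x - z‖ - r) / ε))

lemma trap_cont (z r ε) : Continuous (trap z r ε) := by
  unfold trap; fun_prop

lemma trap_ge (z r ε x) (hε : 0 < ε) :
    (Metric.closedBall z r).indicator 1 x ≤ trap z r ε x := by
  unfold trap
  by_cases h : x ∈ Metric.closedBall z r
  · rw [Set.indicator_of_mem h]
    rw [Metric.mem_closedBall, dist_eq_norm] at h
    have : (‖x - z‖ - r)/ε ≤ 0 := div_nonpos_of_nonpos_of_nonneg (by linarith) hε.le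
    simp; right; linarith
  · rw [Set.indicator_of_notMem h]; simp

lemma trap_le (z r ε x) (hε : 0 < ε) :
    trap z r ε x ≤ (Metric.ball z (r+ε)).indicator 1 x := by
  unfold trap
  by_cases h : x ∈ Metric.ball z (r+ε)
  · rw [Set.indicator_of_mem h]; simp
  · rw [Set.indicator_of_notMem h]
    rw [Metric.mem_ball, dist_eq_norm, not_lt] at h
    have : 1 ≤ (‖x - z‖ - r)/ε := by rw [le_div_iff₀ hε]; linarith
    simp; right; linarith

lemma vol_closedBall_real (z : AddCircle (1:ℝ)) (r : ℝ) (h0 : 0 ≤ r) (h1 : 2 * r ≤ 1) :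
    MeasureTheory.volume.real (Metric.closedBall z r) = 2 * r := by
  rw [MeasureTheory.measureReal_def, AddCircle.volume_closedBall, min_eq_right h1,
    ENNReal.toReal_ofReal (by linarith)]

lemma trap_int_ge (z r ε) (hε : 0 < ε) (h0 : 0 ≤ r) (h1 : 2 * r ≤ 1) :
    2 * r ≤ ∫ x, trap z r ε x ∂MeasureTheory.volume := by
  rw [← vol_closedBall_real z r h0 h1, ← MeasureTheory.integral_indicator_one Metric.isClosed_closedBall.measurableSet]
  apply MeasureTheory.integral_mono
  · exact (MeasureTheory.integrable_const (1:ℝ)).indicator Metric.isClosed_closedBall.measurableSet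
  · exact (trap_cont z r ε).integrable_of_hasCompactSupport (HasCompactSupport.of_compactSpace _)
  · intro x; exact trap_ge z r ε x hε

lemma trap_int_le (z r ε) (hε : 0 < ε) (h0 : 0 ≤ r) :
    ∫ x, trap z r ε x ∂MeasureTheory.volume ≤ 2 * (r + ε) := by
  have h : ∫ x, trap z r ε x ∂MeasureTheory.volume ≤
      ∫ x, (Metric.closedBall z (r+ε)).indicator 1 x ∂MeasureTheory.volume := by
    apply MeasureTheory.integral_mono
    · exact (trap_cont z r ε).integrable_of_hasCompactSupport (HasCompactSupport.of_compactSpace _)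
    · exact (MeasureTheory.integrable_const (1:ℝ)).indicator Metric.isClosed_closedBall.measurableSet
    · intro x
      refine (trap_le z r ε x hε).trans ?_
      apply Set.indicator_le_indicator_of_subset Metric.ball_subset_closedBall
      intro _; exact zero_le_one
  refine h.trans ?_
  rw [MeasureTheory.integral_indicator_one Metric.isClosed_closedBall.measurableSet, 
    MeasureTheory.measureReal_def, AddCircle.volume_closedBall, ENNReal.toReal_ofReal (by
      apply le_min <;> linarith)]
  exact min_le_right _ _

/-- The exponential. -/
noncomputable def ee (h c i : ℕ) (x : ℝ) : ℂ := Complex.exp (Complex.I * ((2 * Real.pi * h * (c:ℝ)^i * x : ℝ) : ℂ))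

lemma ee_eq_fourier (h c i : ℕ) (x : ℝ) :
    ee h c i x = fourier (h:ℤ) (((c:ℝ)^i * x : ℝ) : AddCircle (1:ℝ)) := by
  rw [fourier_coe_apply, ee]
  congr 1
  push_cast
  simp
  ring

lemma rdigit_iff (c d : ℕ) (hc : 2 ≤ c) (x : ℝ) (i : ℕ) :
    rdigit c x i = d ↔ (d:ℝ) / c ≤ Int.fract ((c:ℝ)^i * x) ∧ Int.fract ((c:ℝ)^i * x) < (d+1)/c := by
  have hc0 : (0:ℝ) < c := by positivity
  have key : (rdigit c x i : ℤ) = ⌊(c:ℝ) * Int.fract ((c:ℝ)^i * x)⌋ := by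
    unfold rdigit
    have hnn : 0 ≤ ⌊Int.fract x * (c:ℝ)^(i+1)⌋ := Int.floor_nonneg.2 (mul_nonneg (Int.fract_nonneg _) (by positivity))
    push_cast
    rw [Int.toNat_of_nonneg hnn]
    have e1 : Int.fract x * (c:ℝ)^(i+1) = (c:ℝ) * Int.fract ((c:ℝ)^i * x) + 
        ((c * (⌊(c:ℝ)^i * x⌋ - c^i * ⌊x⌋) : ℤ) : ℝ) := by
      unfold Int.fract
      push_cast
      ring
    rw [e1, Int.floor_add_intCast, Int.add_mul_emod_self_left]
    apply Int.emod_eq_of_lt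
    · exact Int.floor_nonneg.2 (mul_nonneg hc0.le (Int.fract_nonneg _))
    · rw [Int.floor_lt]
      have := Int.fract_lt_one ((c:ℝ)^i * x)
      push_cast
      nlinarith
  rw [← Nat.cast_inj (R := ℤ), key, Int.floor_eq_iff, div_le_iff₀ hc0, lt_div_iff₀ hc0]
  push_cast
  rw [mul_comm]

lemma simplyNormal_of_weyl (c : ℕ) (hc : 2 ≤ c) (x : ℝ)
    (hu : ∀ h : ℕ, 1 ≤ h → Tendsto (fun n : ℕ => (∑ i ∈ Finset.range n, ee h c i x) / (n:ℂ))
      atTop (nhds 0)) : SimplyNormal c x := by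
  intro d hd
  have hc0 : (0:ℝ) < c := by positivity
  have hc2 : (2:ℝ) ≤ c := by exact_mod_cast hc
  set u : ℕ → AddCircle (1:ℝ) := fun i => (((c:ℝ)^i * x : ℝ) : AddCircle (1:ℝ)) with hudef
  have hu' : ∀ h : ℕ, 1 ≤ h → Tendsto (fun n : ℕ => (∑ i ∈ Finset.range n, fourier (h:ℤ) (u i)) / (n:ℂ))
      atTop (nhds 0) := by
    intro h hh
    simpa only [ee_eq_fourier] using hu h hh
  set z : AddCircle (1:ℝ) := (((d:ℝ)/c + 1/(2*c) : ℝ) : AddCircle (1:ℝ)) with hz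
  have hcount : ∀ n, ((rdigits c x n).count d : ℝ) = ∑ i ∈ Finset.range n, if rdigit c x i = d then (1:ℝ) else 0 := by
    intro n
    unfold rdigits
    induction n with
    | zero => simp
    | succ n ih =>
      rw [Finset.sum_range_succ, ← ih, List.range_succ, List.map_append, List.count_append]
      push_cast
      simp [List.count_singleton]
  have hup : ∀ i, (if rdigit c x i = d then (1:ℝ) else 0) ≤ (Metric.closedBall z (1/(2*c))).indicator 1 (u i) := by
    intro i
    split_ifs with h
    · rw [Set.indicator_of_mem]; · simp
      rw [rdigit_iff c d hc] at h
      rw [Metric.mem_closedBall, dist_eq_norm, hz, hudef]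
      simp only
      have : (((c:ℝ)^i * x : ℝ) : AddCircle (1:ℝ)) = ((Int.fract ((c:ℝ)^i * x) : ℝ) : AddCircle (1:ℝ)) := 
        (AddCircle.coe_fract _).symm
      rw [this, ← AddCircle.coe_sub]
      refine (QuotientAddGroup.norm_mk_le_norm).trans ?_
      rw [Real.norm_eq_abs, abs_le]
      have : (1:ℝ)/c = 1/(2*c) + 1/(2*c) := by field_simp; norm_num
      rw [add_div] at h
      constructor <;> linarith
    · exact Set.indicator_nonneg (by simp) _
  have hlow : ∀ i, (Metric.ball z (1/(2*c))).indicator 1 (u i) ≤ (if rdigit c x i = d then (1:ℝ) else 0) := by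
    intro i
    by_cases h : u i ∈ Metric.ball z (1/(2*c))
    · rw [Set.indicator_of_mem h, if_pos]; · simp
      rw [Metric.mem_ball, dist_eq_norm, hz, hudef] at h
      simp only at h
      rw [← AddCircle.coe_sub, UnitAddCircle.norm_eq] at h
      rw [abs_lt] at h
      set m := round ((c:ℝ)^i * x - ((d:ℝ)/c + 1/(2*c))) with hm
      have h2 : (1:ℝ)/c = 1/(2*c) + 1/(2*c) := by field_simp; norm_num
      have h3 : (0:ℝ) ≤ d / c := by positivity
      have h4 : (d:ℝ)/c + 1/c ≤ 1 := by
        rw [← add_div, div_le_one hc0]; exact_mod_cast hd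
      have hfl : ⌊(c:ℝ)^i * x⌋ = m := by
        rw [Int.floor_eq_iff]; constructor <;> linarith
      rw [rdigit_iff c d hc, Int.fract, hfl, add_div]
      constructor <;> linarith
    · rw [Set.indicator_of_notMem h]; split_ifs <;> simp
  rw [tendsto_order]
  constructor
  · intro a ha
    obtain ⟨ε, hε, hε1, hε2⟩ : ∃ ε : ℝ, 0 < ε ∧ ε < 1/(2*c) ∧ a < 2 * (1/(2*c) - ε) := by
      have h2 : (1:ℝ)/c = 2 * (1/(2*c)) := by field_simp
      refine ⟨min (1/(4*c)) ((1/c - a)/4), by apply lt_min; · positivity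
                                              linarith, ?_, ?_⟩
      · refine (min_le_left _ _).trans_lt ?_
        apply one_div_lt_one_div_of_lt <;> linarith
      · have := min_le_right ((1:ℝ)/(4*c)) ((1/c - a)/4)
        linarith
    have ht := weyl_real u hu' _ (trap_cont z (1/(2*c) - ε) ε)
    have hge := trap_int_ge z (1/(2*c) - ε) ε hε (by linarith) (by
      have : (1:ℝ)/(2*c) ≤ 1/2 := by apply one_div_le_one_div_of_le <;> linarith
      linarith)
    filter_upwards [(tendsto_order.1 ht).1 a (by linarith)] with n hn
    refine hn.trans_le ?_
    rw [hcount]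
    apply div_le_div_of_nonneg_right _ (Nat.cast_nonneg n)
    apply Finset.sum_le_sum
    intro i _
    refine (trap_le z _ ε (u i) hε).trans ?_
    simpa using hlow i
  · intro a ha
    obtain ⟨ε, hε, hε2⟩ : ∃ ε : ℝ, 0 < ε ∧ 2 * (1/(2*c) + ε) < a := by
      have h2 : (1:ℝ)/c = 2 * (1/(2*c)) := by field_simp
      refine ⟨(a - 1/c)/4, by linarith, by linarith⟩
    have ht := weyl_real u hu' _ (trap_cont z (1/(2*c)) ε)
    have hle := trap_int_le z (1/(2*c)) ε hε (by positivity)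
    filter_upwards [(tendsto_order.1 ht).2 a (by linarith)] with n hn
    refine lt_of_le_of_lt ?_ hn
    rw [hcount]
    apply div_le_div_of_nonneg_right _ (Nat.cast_nonneg n)
    apply Finset.sum_le_sum
    intro i _
    exact (hup i).trans (trap_ge z _ ε (u i) hε)

/-! ### Second moment estimate -/

lemma int_exp_bound (w a b : ℝ) (hw : w ≠ 0) :
    ‖∫ y in a..b, Complex.exp (Complex.I * ((w * y : ℝ) : ℂ))‖ ≤ 2 / |w| := by
  have hc : (Complex.I * w : ℂ) ≠ 0 := by simp [hw]
  have e : ∀ y : ℝ, Complex.exp (Complex.I * ((w * y : ℝ) : ℂ)) = Complex.exp ((Complex.I * w) * y) := by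
    intro y; push_cast; ring_nf
  simp_rw [e]
  rw [integral_exp_mul_complex hc, ← e, ← e, norm_div, norm_mul, Complex.norm_I, one_mul,
    Complex.norm_real, Real.norm_eq_abs]
  apply div_le_div_of_nonneg_right _ (abs_nonneg w)
  refine (norm_sub_le _ _).trans ?_
  rw [Complex.norm_exp_I_mul_ofReal, Complex.norm_exp_I_mul_ofReal]; norm_num

lemma ee_cont (h c i : ℕ) : Continuous (ee h c i) := by
  unfold ee; fun_prop

lemma ee_norm (h c i : ℕ) (x : ℝ) : ‖ee h c i x‖ = 1 := by
  unfold ee; rw [Complex.norm_exp_I_mul_ofReal]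

lemma ee_mul_conj (h c i j : ℕ) (y : ℝ) :
    ee h c i y * (starRingEnd ℂ) (ee h c j y) =
      Complex.exp (Complex.I * (((2 * Real.pi * h * ((c:ℝ)^i - (c:ℝ)^j)) * y : ℝ) : ℂ)) := by
  unfold ee
  rw [← Complex.exp_conj, ← Complex.exp_add]
  congr 1
  rw [map_mul, Complex.conj_I, Complex.conj_ofReal]
  push_cast; ring

lemma ee_corr_lt (h c i j : ℕ) (hh : 1 ≤ h) (hc : 2 ≤ c) (hij : i < j) (r a : ℝ) (hr : 0 < r)
    (hi : 1 / r ≤ (c:ℝ)^i) :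
    2 / |2 * Real.pi * h * ((c:ℝ)^i - (c:ℝ)^j)| ≤ 2 * r * (1/2)^(j-i) := by
  obtain ⟨d, rfl⟩ : ∃ d, j = i + (d + 1) := ⟨j - i - 1, by omega⟩
  have hc2 : (2:ℝ) ≤ c := by exact_mod_cast hc
  have hh1 : (1:ℝ) ≤ h := by exact_mod_cast hh
  have hpos : (0:ℝ) < (c:ℝ)^i := by positivity
  have hpow : (2:ℝ)^(d+1) ≤ (c:ℝ)^(d+1) := pow_le_pow_left₀ (by norm_num) hc2 _
  have h2 : (2:ℝ) ≤ 2^(d+1) := by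
    have : (1:ℝ) ≤ 2^d := one_le_pow₀ (by norm_num)
    rw [pow_succ]; linarith
  have key : 2^(d+1) / r ≤ |2 * Real.pi * h * ((c:ℝ)^i - (c:ℝ)^(i+(d+1)))| := by
    rw [abs_mul, abs_of_pos (by positivity), abs_sub_comm, pow_add (c:ℝ) i (d+1), abs_of_nonneg (by nlinarith)]
    have e1 : (2:ℝ)^(d+1)/2 * (1/r) ≤ (c:ℝ)^i * (c:ℝ)^(d+1) - (c:ℝ)^i := by
      calc (2:ℝ)^(d+1)/2 * (1/r) ≤ (2:ℝ)^(d+1)/2 * (c:ℝ)^i := by gcongr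
        _ ≤ _ := by nlinarith
    have e2 : (2:ℝ) ≤ 2 * Real.pi * h := by nlinarith [Real.pi_gt_three]
    have e0 : 0 ≤ (2:ℝ)^(d+1)/2 * (1/r) := by positivity
    calc (2:ℝ)^(d+1) / r = 2 * ((2:ℝ)^(d+1)/2 * (1/r)) := by field_simp
      _ ≤ _ := by gcongr
  have : i + (d+1) - i = d + 1 := by omega
  rw [this]
  calc _ ≤ 2 / (2^(d+1) / r) := by gcongr
    _ = _ := by rw [one_div, inv_pow]; field_simp

lemma ee_corr (h c i j : ℕ) (hh : 1 ≤ h) (hc : 2 ≤ c) (r a : ℝ) (hr : 0 < r)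
    (hi : 1 / r ≤ (c:ℝ)^i) (hj : 1 / r ≤ (c:ℝ)^j) :
    ‖∫ y in a..(a + r/2), ee h c i y * (starRingEnd ℂ) (ee h c j y)‖ ≤ 2 * r * (1/2)^((i-j)+(j-i)) := by
  have hc2 : (2:ℝ) ≤ c := by exact_mod_cast hc
  have hh1 : (1:ℝ) ≤ h := by exact_mod_cast hh
  rcases lt_trichotomy i j with hij | hij | hij
  · simp_rw [ee_mul_conj]
    refine (int_exp_bound _ _ _ ?_).trans ?_
    · have : (c:ℝ)^i < (c:ℝ)^j := pow_lt_pow_right₀ (by linarith) hij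
      have : (c:ℝ)^i - (c:ℝ)^j ≠ 0 := by linarith
      have := Real.pi_pos
      positivity
    · have := ee_corr_lt h c i j hh hc hij r a hr hi
      rwa [show (i - j) + (j - i) = j - i by omega]
  · subst hij
    have := intervalIntegral.norm_integral_le_of_norm_le_const (a := a) (b := a + r/2) (C := 1)
      (f := fun y => ee h c i y * (starRingEnd ℂ) (ee h c i y)) (by
        intro x _; simp [ee_norm])
    simp only [add_sub_cancel_left] at this
    rw [abs_of_pos (by linarith)] at this
    simp
    linarith
  · simp_rw [ee_mul_conj]
    refine (int_exp_bound _ _ _ ?_).trans ?_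
    · have : (c:ℝ)^j < (c:ℝ)^i := pow_lt_pow_right₀ (by linarith) hij
      have : (c:ℝ)^i - (c:ℝ)^j ≠ 0 := by linarith
      have := Real.pi_pos
      positivity
    · have := ee_corr_lt h c j i hh hc hij r a hr hj
      rw [show (i - j) + (j - i) = i - j by omega]
      have e : |2 * Real.pi * h * ((c:ℝ)^i - (c:ℝ)^j)| = |2 * Real.pi * h * ((c:ℝ)^j - (c:ℝ)^i)| := by
        rw [← abs_neg]; congr 1; ring
      rw [e]; exact this

lemma geom_sum_aux1 (i n : ℕ) (hn : n ≤ i + 1) :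
    ∑ j ∈ Finset.range n, (1/2:ℝ)^((i-j)+(j-i)) ≤ 2 * (1/2)^(i+1-n) := by
  induction n with
  | zero => simp
  | succ n ih =>
    rw [Finset.sum_range_succ]
    have := ih (by omega)
    have e1 : i + 1 - n = (i - n) + 1 := by omega
    have e2 : (i - n) + (n - i) = i - n := by omega
    have e3 : i + 1 - (n+1) = i - n := by omega
    rw [e1, pow_succ] at this
    rw [e2, e3]
    linarith

lemma geom_sum_aux (i n : ℕ) :
    ∑ j ∈ Finset.range n, (1/2:ℝ)^((i-j)+(j-i)) ≤ 3 := by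
  rcases le_total n (i+1) with hn | hn
  · refine (geom_sum_aux1 i n hn).trans ?_
    have : (1/2:ℝ)^(i+1-n) ≤ 1 := pow_le_one₀ (by norm_num) (by norm_num)
    linarith
  · have : ∑ j ∈ Finset.range n, (1/2:ℝ)^((i-j)+(j-i)) ≤ 3 - (1/2)^(n-1-i) := by
      induction n, hn using Nat.le_induction with
      | base =>
        have := geom_sum_aux1 i (i+1) le_rfl
        simp at this ⊢
        linarith
      | succ n hn ih =>
        rw [Finset.sum_range_succ]
        have e1 : (i - n) + (n - i) = (n - 1 - i) + 1 := by omega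
        have e2 : n + 1 - 1 - i = (n-1-i) + 1 := by omega
        rw [e1, e2, pow_succ]
        linarith
    have h2 : (0:ℝ) ≤ (1/2)^(n-1-i) := by positivity
    linarith

lemma second_moment (h c i0 i1 : ℕ) (hh : 1 ≤ h) (hc : 2 ≤ c) (r a : ℝ) (hr : 0 < r)
    (hi : 1 / r ≤ (c:ℝ)^i0) :
    ∫ y in a..(a + r/2), ‖∑ i ∈ Finset.Ico i0 i1, ee h c i y‖^2 ≤ 6 * r * (i1 - i0 : ℕ) := by
  have hc1 : (1:ℝ) ≤ c := by exact_mod_cast (by omega : 1 ≤ c)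
  have hi' : ∀ i ∈ Finset.Ico i0 i1, 1 / r ≤ (c:ℝ)^i := fun i hi2 =>
    hi.trans (pow_le_pow_right₀ hc1 (Finset.mem_Ico.1 hi2).1)
  have e : ∀ y : ℝ, ((‖∑ i ∈ Finset.Ico i0 i1, ee h c i y‖^2 : ℝ) : ℂ) =
      ∑ i ∈ Finset.Ico i0 i1, ∑ j ∈ Finset.Ico i0 i1, ee h c i y * (starRingEnd ℂ) (ee h c j y) := by
    intro y
    rw [← Finset.sum_mul_sum, ← map_sum, Complex.mul_conj, Complex.normSq_eq_norm_sq]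
  have hcont : ∀ i j, Continuous fun y => ee h c i y * (starRingEnd ℂ) (ee h c j y) := fun i j =>
    (ee_cont h c i).mul (Complex.continuous_conj.comp (ee_cont h c j))
  have e2 : ((∫ y in a..(a + r/2), ‖∑ i ∈ Finset.Ico i0 i1, ee h c i y‖^2 : ℝ) : ℂ) =
      ∑ i ∈ Finset.Ico i0 i1, ∑ j ∈ Finset.Ico i0 i1,
        ∫ y in a..(a + r/2), ee h c i y * (starRingEnd ℂ) (ee h c j y) := by
    rw [← intervalIntegral.integral_ofReal]
    simp_rw [e]
    rw [intervalIntegral.integral_finsetSum]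
    · refine Finset.sum_congr rfl fun i _ => ?_
      rw [intervalIntegral.integral_finsetSum]
      intro j _
      exact (hcont i j).intervalIntegrable _ _
    · intro i _
      exact (continuous_finsetSum _ fun j _ => hcont i j).intervalIntegrable _ _
  refine (le_abs_self _).trans ?_
  rw [← Real.norm_eq_abs, ← Complex.norm_real, e2]
  refine (norm_sum_le _ _).trans ?_
  have : ∀ i ∈ Finset.Ico i0 i1, ‖∑ j ∈ Finset.Ico i0 i1,
        ∫ y in a..(a + r/2), ee h c i y * (starRingEnd ℂ) (ee h c j y)‖ ≤ 6 * r := by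
    intro i hmi
    refine (norm_sum_le _ _).trans ?_
    calc _ ≤ ∑ j ∈ Finset.Ico i0 i1, 2 * r * (1/2)^((i-j)+(j-i)) :=
          Finset.sum_le_sum fun j hmj => ee_corr h c i j hh hc r a hr (hi' i hmi) (hi' j hmj)
      _ ≤ ∑ j ∈ Finset.range i1, 2 * r * (1/2)^((i-j)+(j-i)) := by
          apply Finset.sum_le_sum_of_subset_of_nonneg
          · intro j hj; simp at hj ⊢; exact hj.2
          · intro j _ _; positivity
      _ = 2 * r * ∑ j ∈ Finset.range i1, (1/2)^((i-j)+(j-i)) := by rw [Finset.mul_sum]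
      _ ≤ 2 * r * 3 := by gcongr; exact geom_sum_aux i i1
      _ = 6 * r := by ring
  refine (Finset.sum_le_sum this).trans ?_
  simp
  linarith

lemma exists_le_of_integral_le (F : ℝ → ℝ) (hF : Continuous F) (a ρ B : ℝ) (hρ : 0 < ρ)
    (hI : ∫ y in a..(a+ρ), F y ≤ ρ * B) : ∃ y ∈ Set.Icc a (a+ρ), F y ≤ B := by
  by_contra hcon
  push Not at hcon
  have hlt : ∫ y in a..(a+ρ), B < ∫ y in a..(a+ρ), F y := by
    apply intervalIntegral.integral_lt_integral_of_continuousOn_of_le_of_exists_lt (by linarith)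
      continuousOn_const hF.continuousOn
    · intro x hx; exact (hcon x ⟨hx.1.le, hx.2⟩).le
    · exact ⟨a, ⟨le_rfl, by linarith⟩, hcon a ⟨le_rfl, by linarith⟩⟩
  simp at hlt
  linarith

/-- a common good point -/
lemma exists_good_point (s : ℕ) (i0 i1 : ℕ → ℕ) (r a B M : ℝ) (hr : 0 < r)
    (hi : ∀ c : ℕ, 2 ≤ c → 1 / r ≤ (c:ℝ)^(i0 c)) (hM : ∀ c : ℕ, 2 ≤ c → ((i1 c - i0 c : ℕ) : ℝ) ≤ M)
    (hB : 0 ≤ B) (hsB : 12 * (s:ℝ)^2 * M ≤ B^2) :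
    ∃ y ∈ Set.Icc a (a + r/2), ∀ c ∈ Finset.Icc 2 (s+1), ∀ h ∈ Finset.Icc 1 s,
      ‖∑ i ∈ Finset.Ico (i0 c) (i1 c), ee h c i y‖ ≤ B := by
  set F : ℝ → ℝ := fun y => ∑ c ∈ Finset.Icc 2 (s+1), ∑ h ∈ Finset.Icc 1 s,
    ‖∑ i ∈ Finset.Ico (i0 c) (i1 c), ee h c i y‖^2 with hF
  have hc1 : ∀ h c, Continuous fun y => ‖∑ i ∈ Finset.Ico (i0 c) (i1 c), ee h c i y‖^2 := fun h c =>
    ((continuous_finsetSum _ fun i _ => ee_cont h c i).norm).pow 2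
  have hc2 : ∀ c, Continuous fun y => ∑ h ∈ Finset.Icc 1 s,
    ‖∑ i ∈ Finset.Ico (i0 c) (i1 c), ee h c i y‖^2 := fun c => continuous_finsetSum _ fun h _ => hc1 h c
  have hc3 : Continuous F := continuous_finsetSum _ fun c _ => hc2 c
  obtain ⟨y, hy, hFy⟩ := exists_le_of_integral_le F hc3 a (r/2) (B^2) (by linarith) (by
    rw [hF, intervalIntegral.integral_finsetSum (fun c _ => (hc2 c).intervalIntegrable _ _)]
    have : ∀ c ∈ Finset.Icc 2 (s+1), ∫ y in a..(a+r/2), ∑ h ∈ Finset.Icc 1 s,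
        ‖∑ i ∈ Finset.Ico (i0 c) (i1 c), ee h c i y‖^2 ≤ s * (6 * r * M) := by
      intro c hc
      have hc' := (Finset.mem_Icc.1 hc).1
      rw [intervalIntegral.integral_finsetSum (fun h _ => (hc1 h c).intervalIntegrable _ _)]
      refine (Finset.sum_le_sum (g := fun _ => 6 * r * M) fun h hh => ?_).trans ?_
      · refine (second_moment h c (i0 c) (i1 c) (Finset.mem_Icc.1 hh).1 hc' r a hr (hi c hc')).trans ?_
        have := hM c hc'
        gcongr
      · simp
    refine (Finset.sum_le_sum this).trans ?_
    simp
    nlinarith)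
  refine ⟨y, hy, fun c hc h hh => ?_⟩
  apply le_of_sq_le_sq _ hB
  refine le_trans ?_ hFy
  rw [hF]
  refine le_trans ?_ (Finset.single_le_sum (f := fun c => ∑ h ∈ Finset.Icc 1 s,
    ‖∑ i ∈ Finset.Ico (i0 c) (i1 c), ee h c i y‖^2) (fun _ _ => by positivity) hc)
  exact Finset.single_le_sum (f := fun h => ‖∑ i ∈ Finset.Ico (i0 c) (i1 c), ee h c i y‖^2) (fun _ _ => by positivity) hh

/-! ### One step of the construction -/

/-- index of scale `T` in base `c` -/
noncomputable def idx (c : ℕ) (T : ℝ) : ℕ := ⌈T / Real.log c⌉₊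

lemma log_ge_half (c : ℕ) (hc : 2 ≤ c) : (2/3:ℝ) ≤ Real.log c := by
  have h1 : Real.log 2 ≤ Real.log c := Real.log_le_log (by norm_num) (by exact_mod_cast hc)
  have := Real.log_two_gt_d9
  linarith

lemma log_le_nat (c : ℕ) (hc : 2 ≤ c) : Real.log c ≤ c := by
  have := Real.log_le_sub_one_of_pos (x := (c:ℝ)) (by positivity)
  linarith

lemma pow_eq_exp (c : ℕ) (hc : 2 ≤ c) (i : ℕ) : (c:ℝ)^i = Real.exp (i * Real.log c) := by
  rw [Real.exp_nat_mul, Real.exp_log (by positivity)]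

lemma exp_le_pow_idx (c : ℕ) (hc : 2 ≤ c) (T : ℝ) : Real.exp T ≤ (c:ℝ)^(idx c T) := by
  have hl := log_ge_half c hc
  rw [pow_eq_exp c hc, Real.exp_le_exp]
  have := Nat.le_ceil (T / Real.log c)
  rw [div_le_iff₀ (by linarith)] at this
  exact this

lemma idx_lt (c : ℕ) (hc : 2 ≤ c) (T : ℝ) (hT : 0 ≤ T) : (idx c T : ℝ) < T / Real.log c + 1 := by
  have hl := log_ge_half c hc
  exact Nat.ceil_lt_add_one (div_nonneg hT (by linarith))

lemma idx_ge (c : ℕ) (T : ℝ) : T / Real.log c ≤ (idx c T : ℝ) := Nat.le_ceil _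

lemma idx_mono (c : ℕ) (hc : 2 ≤ c) {T T' : ℝ} (h : T ≤ T') : idx c T ≤ idx c T' := by
  have hl := log_ge_half c hc
  unfold idx
  gcongr

lemma pow_idx_le (c : ℕ) (hc : 2 ≤ c) (T : ℝ) (hT : 0 ≤ T) : (c:ℝ)^(idx c T) ≤ c * Real.exp T := by
  have hl := log_ge_half c hc
  rw [pow_eq_exp c hc]
  have := idx_lt c hc T hT
  have h2 : (idx c T : ℝ) * Real.log c ≤ T + Real.log c := by
    calc _ ≤ (T / Real.log c + 1) * Real.log c := by gcongr
      _ = _ := by field_simp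
  calc _ ≤ Real.exp (T + Real.log c) := Real.exp_le_exp.2 h2
    _ = _ := by rw [Real.exp_add, Real.exp_log (by positivity), mul_comm]

lemma idx_sub_le (c : ℕ) (hc : 2 ≤ c) (T T' : ℝ) (hT : T ≤ T') (h0 : 0 ≤ T) :
    ((idx c T' - idx c T : ℕ) : ℝ) ≤ 3/2 * (T' - T) + 1 := by
  have hl := log_ge_half c hc
  rw [Nat.cast_sub (idx_mono c hc hT)]
  have h1 := idx_lt c hc T' (h0.trans hT)
  have h2 := idx_ge c T
  have h3 : (T' - T) / Real.log c ≤ 3/2 * (T' - T) := by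
    rw [div_le_iff₀ (by linarith)]
    nlinarith
  rw [sub_div] at h3
  linarith

lemma ee_lip (h c i : ℕ) (x y : ℝ) : ‖ee h c i x - ee h c i y‖ ≤ 2 * Real.pi * h * (c:ℝ)^i * |x - y| := by
  have e : ee h c i x - ee h c i y = ee h c i y *
      (Complex.exp (Complex.I * ((2 * Real.pi * h * (c:ℝ)^i * (x - y) : ℝ) : ℂ)) - 1) := by
    unfold ee
    rw [mul_sub, ← Complex.exp_add, mul_one]
    congr 2
    push_cast; ring
  rw [e, norm_mul, ee_norm, one_mul]
  refine Real.norm_exp_I_mul_ofReal_sub_one_le.trans ?_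
  rw [Real.norm_eq_abs, abs_mul, abs_of_nonneg (by positivity : 0 ≤ 2 * Real.pi * h * (c:ℝ)^i)]

lemma geom_pow_le (c : ℕ) (hc : 2 ≤ c) (m : ℕ) : ∑ i ∈ Finset.range m, (c:ℝ)^i ≤ (c:ℝ)^m := by
  have hc2 : (2:ℝ) ≤ c := by exact_mod_cast hc
  induction m with
  | zero => simp
  | succ m ih =>
    rw [Finset.sum_range_succ, pow_succ]
    have : 0 ≤ (c:ℝ)^m := by positivity
    nlinarith

lemma sum_ee_lip (h c i0 i1 : ℕ) (hc : 2 ≤ c) (x y : ℝ) :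
    ‖∑ i ∈ Finset.Ico i0 i1, ee h c i x‖ ≤ ‖∑ i ∈ Finset.Ico i0 i1, ee h c i y‖ +
      2 * Real.pi * h * (c:ℝ)^i1 * |x - y| := by
  have h1 : ‖∑ i ∈ Finset.Ico i0 i1, ee h c i x - ∑ i ∈ Finset.Ico i0 i1, ee h c i y‖ ≤
      2 * Real.pi * h * (c:ℝ)^i1 * |x - y| := by
    rw [← Finset.sum_sub_distrib]
    refine (norm_sum_le _ _).trans ?_
    calc _ ≤ ∑ i ∈ Finset.Ico i0 i1, 2 * Real.pi * h * |x - y| * (c:ℝ)^i := by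
          apply Finset.sum_le_sum; intro i _
          refine (ee_lip h c i x y).trans (le_of_eq (by ring))
      _ ≤ ∑ i ∈ Finset.range i1, 2 * Real.pi * h * |x - y| * (c:ℝ)^i := by
          apply Finset.sum_le_sum_of_subset_of_nonneg
          · intro j hj; simp at hj ⊢; exact hj.2
          · intro j _ _; positivity
      _ = 2 * Real.pi * h * |x - y| * ∑ i ∈ Finset.range i1, (c:ℝ)^i := by rw [Finset.mul_sum]
      _ ≤ 2 * Real.pi * h * |x - y| * (c:ℝ)^i1 := by gcongr; exact geom_pow_le c hc i1
      _ = _ := by ring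
  have := norm_le_norm_add_norm_sub' (∑ i ∈ Finset.Ico i0 i1, ee h c i x) (∑ i ∈ Finset.Ico i0 i1, ee h c i y)
  linarith

lemma rdigit_zero_run (b : ℕ) (hb : 2 ≤ b) (p : ℤ) (N i : ℕ) (hi : N ≤ i) (t T x : ℝ) (h0 : 0 ≤ t)
    (ht : t ≤ Real.exp (-T)) (hiT : (i + 1 : ℕ) < T / Real.log b) (hx : x = p / (b:ℝ)^N + t) :
    rdigit b x i = 0 := by
  have hl := log_ge_half b hb
  have hb0 : (0:ℝ) < b := by positivity
  have hb2 : (2:ℝ) ≤ b := by exact_mod_cast hb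
  rw [rdigit_iff b 0 hb]
  have h1 : (b:ℝ)^i * t < 1 / b := by
    rw [lt_div_iff₀ hb0]
    rw [lt_div_iff₀ (by linarith)] at hiT
    calc (b:ℝ)^i * t * b = (b:ℝ)^(i+1) * t := by ring
      _ ≤ (b:ℝ)^(i+1) * Real.exp (-T) := by gcongr
      _ < Real.exp T * Real.exp (-T) := by
        rw [pow_eq_exp b hb]; gcongr
      _ = 1 := by rw [← Real.exp_add]; simp
  have h2 : (1:ℝ)/b ≤ 1 := by rw [div_le_one hb0]; linarith
  have h3 : 0 ≤ (b:ℝ)^i * t := by positivity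
  have e : (b:ℝ)^i * x = (b:ℝ)^i * t + ((p * (b:ℤ)^(i-N) : ℤ) : ℝ) := by
    obtain ⟨d, rfl⟩ := Nat.exists_eq_add_of_le hi
    rw [hx, Nat.add_sub_cancel_left, pow_add]
    push_cast
    field_simp
    ring
  rw [e, Int.fract_add_intCast, Int.fract_eq_self.2 ⟨h3, by linarith⟩]
  simpa using And.intro h3 (by simpa using h1)

/-- The new scale. -/
noncomputable def nextT (n : ℕ) (T : ℝ) : ℝ := T + T / n + T / (n:ℝ)^2

set_option maxHeartbeats 1000000 in
lemma step_s11 (s n b : ℕ) (hs : 1 ≤ s) (hn : 1 ≤ n) (hns : n ≤ s) (hb : 2 ≤ b) (hbs : b ≤ s + 1)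
    (a T : ℝ) (hT : 100 * (s:ℝ)^6 ≤ T) :
    ∃ a', a ≤ a' ∧ a' + Real.exp (-(nextT n T)) ≤ a + Real.exp (-T) ∧
      (∃ N N' : ℕ, T ≤ N * b ∧ (N:ℝ) + N' / (6 * (n:ℝ)^2) ≤ N' ∧
        ∀ x ∈ Set.Icc a' (a' + Real.exp (-(nextT n T))), ∀ i, N ≤ i → i < N' → rdigit b x i = 0) ∧
      ∀ x ∈ Set.Icc a' (a' + Real.exp (-(nextT n T))), ∀ c ∈ Finset.Icc 2 (s+1), ∀ h ∈ Finset.Icc 1 s,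
        ‖∑ i ∈ Finset.Ico (idx c T) (idx c (nextT n T)), ee h c i x‖ ≤ 5 * (T / (n:ℝ)^2) := by
  have hs1 : (1:ℝ) ≤ s := by exact_mod_cast hs
  have hn1 : (1:ℝ) ≤ n := by exact_mod_cast hn
  have hns1 : (n:ℝ) ≤ s := by exact_mod_cast hns
  have hbs1 : (b:ℝ) ≤ s + 1 := by exact_mod_cast hbs
  have hp : ∀ k ≤ 6, (s:ℝ)^k ≤ (s:ℝ)^6 := fun k hk => pow_le_pow_right₀ hs1 hk
  have hp0 := hp 0 (by norm_num)
  have hp1 := hp 1 (by norm_num)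
  have hp2 := hp 2 (by norm_num)
  have hp3 := hp 3 (by norm_num)
  have hp4 := hp 4 (by norm_num)
  have hnn : (n:ℝ)^2 ≤ (s:ℝ)^2 := by gcongr
  have hn2 : (1:ℝ) ≤ (n:ℝ)^2 := one_le_pow₀ hn1
  rw [pow_zero] at hp0
  rw [pow_one] at hp1
  have hTpos : 0 < T := by linarith
  set D := T / (n:ℝ)^2 with hD
  set δ := T / (n:ℝ) with hδ
  have hDpos : 0 < D := by positivity
  have hδpos : 0 < δ := by positivity
  have hDT : D ≤ T := div_le_self hTpos.le hn2
  have hδT : δ ≤ T := div_le_self hTpos.le hn1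
  have hδ100 : 100 ≤ δ := by rw [hδ, le_div_iff₀ (by linarith)]; linarith
  have hD100 : 100 * (s:ℝ)^4 ≤ D := by
    rw [hD, le_div_iff₀ (by linarith)]
    calc 100 * (s:ℝ)^4 * (n:ℝ)^2 ≤ 100 * (s:ℝ)^4 * (s:ℝ)^2 := by gcongr
      _ = 100 * (s:ℝ)^6 := by ring
      _ ≤ T := hT
  have hs2 : (1:ℝ) ≤ (s:ℝ)^2 := one_le_pow₀ hs1
  have hs4 : (s:ℝ)^2 ≤ (s:ℝ)^4 := pow_le_pow_right₀ hs1 (by norm_num)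
  have hss2 : (s:ℝ) ≤ (s:ℝ)^2 := by nlinarith
  set T1 := T + δ with hT1
  set T' := T1 + D with hT'
  have hT'eq : nextT n T = T' := rfl
  rw [hT'eq]
  -- random part
  obtain ⟨y, hy, hgood⟩ := exists_good_point s (fun c => idx c T) (fun c => idx c T1) (Real.exp (-T)) a D
    (4 * T) (Real.exp_pos _) (by
      intro c hc
      rw [Real.exp_neg, one_div, inv_inv]; exact exp_le_pow_idx c hc T) (by
      intro c hc
      refine (idx_sub_le c hc T T1 (by linarith) hTpos.le).trans ?_
      linarith) hDpos.le (by
      calc 12 * (s:ℝ)^2 * (4 * T) = 48 * (s:ℝ)^2 * T := by ring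
        _ ≤ 48 * (s:ℝ)^2 * (D * (s:ℝ)^2) := by
          gcongr
          rw [hD, div_mul_eq_mul_div, le_div_iff₀ (by linarith)]
          gcongr
        _ = 48 * (s:ℝ)^4 * D := by ring
        _ ≤ D^2 := by nlinarith)
  -- rounding
  set N := idx b T1 with hN
  have hbN : Real.exp T1 ≤ (b:ℝ)^N := exp_le_pow_idx b hb T1
  have hbNpos : (0:ℝ) < (b:ℝ)^N := by positivity
  have hbNinv : 1 / (b:ℝ)^N ≤ Real.exp (-T1) := by
    rw [Real.exp_neg, ← one_div]
    exact one_div_le_one_div_of_le (Real.exp_pos _) hbN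
  set p : ℤ := ⌈y * (b:ℝ)^N⌉ with hpdef
  set a' : ℝ := p / (b:ℝ)^N with ha'
  have ha'1 : y ≤ a' := by
    rw [ha', le_div_iff₀ hbNpos]; exact Int.le_ceil _
  have ha'2 : a' ≤ y + Real.exp (-T1) := by
    have : a' ≤ y + 1 / (b:ℝ)^N := by
      rw [ha', div_le_iff₀ hbNpos, add_mul, one_div, inv_mul_cancel₀ hbNpos.ne']
      exact (Int.ceil_lt_add_one _).le
    linarith
  have hexp' : Real.exp (-T') ≤ Real.exp (-T1) := Real.exp_le_exp.2 (by linarith)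
  have hexp1 : Real.exp (-T1) ≤ Real.exp (-T) / 4 := by
    have h1 : Real.exp (-T1) = Real.exp (-T) * Real.exp (-δ) := by rw [← Real.exp_add]; congr 1; rw [hT1]; ring
    have h2 : Real.exp (-δ) ≤ 1/4 := by
      rw [Real.exp_neg, ← one_div]
      apply one_div_le_one_div_of_le (by norm_num)
      have := Real.add_one_le_exp δ
      linarith
    rw [h1]
    have := Real.exp_pos (-T)
    nlinarith
  have hxy : ∀ x ∈ Set.Icc a' (a' + Real.exp (-T')), |x - y| ≤ 2 * Real.exp (-T1) := by
    intro x hx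
    rw [abs_le]
    have := hx.1
    have := hx.2
    have := Real.exp_pos (-T1)
    constructor <;> linarith
  refine ⟨a', hy.1.trans ha'1, by have := hy.2; linarith, ⟨N, idx b T' - 1, ?_, ?_, ?_⟩, ?_⟩
  · have h1 := idx_ge b T1
    have h2 := log_le_nat b hb
    have h3 := log_ge_half b hb
    rw [div_le_iff₀ (by linarith)] at h1
    calc T ≤ T1 := by linarith
      _ ≤ N * Real.log b := h1
      _ ≤ N * b := by gcongr
  · have h1 := idx_ge b T'
    have h3 := log_ge_half b hb
    have h2 := log_le_nat b hb
    have h4 := idx_lt b hb T1 (by linarith)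
    have h5 := idx_lt b hb T' (by linarith)
    have hge1 : 1 ≤ idx b T' := by
      have : 0 < T' / Real.log b := by apply div_pos <;> linarith
      unfold idx; exact Nat.one_le_ceil_iff.2 this
    rw [Nat.cast_sub hge1]
    push_cast
    rw [← hN] at h4
    set l := Real.log b with hl
    have h6 : ((idx b T' : ℝ) - 1) / (6 * (n:ℝ)^2) ≤ D / l / 2 := by
      rw [div_le_iff₀ (by positivity)]
      have : T' ≤ 3 * T := by linarith
      have h7 : T' / l ≤ 3 * T / l := by gcongr
      have h8 : D / l / 2 * (6 * (n:ℝ)^2) = 3 * T / l := by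
        rw [hD]; field_simp; norm_num
      linarith
    have h9 : 4 ≤ D / l := by
      rw [le_div_iff₀ (by linarith)]; nlinarith
    have h10 : T' / l = T1 / l + D / l := by rw [hT']; ring
    linarith
  · intro x hx i hi1 hi2
    refine rdigit_zero_run b hb p N i hi1 (x - a') T' x (by linarith [hx.1]) (by linarith [hx.2]) ?_ (by
      rw [← ha']; ring)
    apply Nat.lt_ceil.1
    have : i + 1 < idx b T' := by omega
    exact this
  · intro x hx c hc h hh
    obtain ⟨hc2, hcs⟩ := Finset.mem_Icc.1 hc
    obtain ⟨hh1, hhs⟩ := Finset.mem_Icc.1 hh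
    have hcs' : (c:ℝ) ≤ s + 1 := by exact_mod_cast hcs
    have hhs' : (h:ℝ) ≤ s := by exact_mod_cast hhs
    rw [← Finset.sum_Ico_consecutive _ (idx_mono c hc2 (by linarith : T ≤ T1)) (idx_mono c hc2 (by linarith : T1 ≤ T'))]
    refine (norm_add_le _ _).trans ?_
    have g1 := hgood c hc h hh
    have g2 := sum_ee_lip h c (idx c T) (idx c T1) hc2 x y
    have g3 : 2 * Real.pi * h * (c:ℝ)^(idx c T1) * |x - y| ≤ D := by
      calc 2 * Real.pi * h * (c:ℝ)^(idx c T1) * |x - y| 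
          ≤ 2 * 4 * s * (((s:ℝ)+1) * Real.exp T1) * (2 * Real.exp (-T1)) := by
            have := pow_idx_le c hc2 T1 (by linarith)
            have h2 : (c:ℝ)^(idx c T1) ≤ (((s:ℝ)+1) * Real.exp T1) := this.trans (by gcongr)
            have h3 := hxy x hx
            have h4 := Real.pi_le_four
            gcongr
        _ = 16 * s * (s+1) * (Real.exp T1 * Real.exp (-T1)) := by ring
        _ = 16 * s * (s+1) := by rw [← Real.exp_add]; simp
        _ = 16 * (s:ℝ)^2 + 16 * s := by ring
        _ ≤ D := by linarith
    have g4 : ‖∑ i ∈ Finset.Ico (idx c T1) (idx c T'), ee h c i x‖ ≤ 3 * D := by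
      refine (norm_sum_le _ _).trans ?_
      simp only [ee_norm, Finset.sum_const, Nat.card_Ico, nsmul_eq_mul, mul_one]
      refine (idx_sub_le c hc2 T1 T' (by linarith) (by linarith)).trans ?_
      linarith
    linarith

/-! ### The construction -/

open Classical in
/-- precision at stage `k` -/
noncomputable def sK (k : ℕ) (T : ℝ) : ℕ := max 1 (Nat.findGreatest (fun s => 100 * (s:ℝ)^6 ≤ T) k)

noncomputable def nK (k : ℕ) (T : ℝ) (h : ℕ) : ℕ := min (h+1) (sK k T)

noncomputable def bK (k : ℕ) (T : ℝ) : ℕ :=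
  if (Nat.unpair k).1 + 2 ≤ sK k T + 1 then (Nat.unpair k).1 + 2 else 2

lemma sK_pos (k T) : 1 ≤ sK k T := le_max_left _ _

lemma sK_le (k T) (hT : 100 ≤ T) : 100 * (sK k T:ℝ)^6 ≤ T := by
  classical
  unfold sK
  rcases max_choice 1 (Nat.findGreatest (fun s => 100 * (s:ℝ)^6 ≤ T) k) with h | h
  · rw [h]; simpa using hT
  · rw [h]
    exact Nat.findGreatest_spec (P := fun s : ℕ => 100 * (s:ℝ)^6 ≤ T) (Nat.zero_le k) (by simp; linarith)

lemma le_sK (k m : ℕ) (T : ℝ) (hm : m ≤ k) (hT : 100 * (m:ℝ)^6 ≤ T) : m ≤ sK k T := by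
  classical
  exact (Nat.le_findGreatest (P := fun s : ℕ => 100 * (s:ℝ)^6 ≤ T) hm hT).trans (le_max_right _ _)

lemma nK_pos (k T h) : 1 ≤ nK k T h := le_min (by omega) (sK_pos k T)

lemma nK_le (k T h) : nK k T h ≤ sK k T := min_le_right _ _

lemma bK_two (k T) : 2 ≤ bK k T := by unfold bK; split_ifs <;> omega

lemma bK_le (k T) : bK k T ≤ sK k T + 1 := by
  have := sK_pos k T
  unfold bK; split_ifs <;> omega

/-- What a step has to do. -/
def StepOK (s n b : ℕ) (a T a' : ℝ) : Prop :=
  a ≤ a' ∧ a' + Real.exp (-(nextT n T)) ≤ a + Real.exp (-T) ∧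
      (∃ N N' : ℕ, T ≤ N * b ∧ (N:ℝ) + N' / (6 * (n:ℝ)^2) ≤ N' ∧
        ∀ x ∈ Set.Icc a' (a' + Real.exp (-(nextT n T))), ∀ i, N ≤ i → i < N' → rdigit b x i = 0) ∧
      ∀ x ∈ Set.Icc a' (a' + Real.exp (-(nextT n T))), ∀ c ∈ Finset.Icc 2 (s+1), ∀ h ∈ Finset.Icc 1 s,
        ‖∑ i ∈ Finset.Ico (idx c T) (idx c (nextT n T)), ee h c i x‖ ≤ 5 * (T / (n:ℝ)^2)

open Classical in
noncomputable def stepA (s n b : ℕ) (a T : ℝ) : ℝ :=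
  if H : ∃ a', StepOK s n b a T a' then H.choose else a

noncomputable def st (h : ℕ → ℕ) : ℕ → ℝ × ℝ
  | 0 => (0, 100)
  | k+1 => (stepA (sK k (st h k).2) (nK k (st h k).2 (h k)) (bK k (st h k).2) (st h k).1 (st h k).2,
      nextT (nK k (st h k).2 (h k)) (st h k).2)

lemma nextT_ge (k : ℕ) (T : ℝ) (h : ℕ) (hT : 100 ≤ T) : T + 1 ≤ nextT (nK k T h) T := by
  have h1 := sK_le k T hT
  have h2 : (nK k T h : ℝ) ≤ sK k T := by exact_mod_cast nK_le k T h
  have h3 : (1:ℝ) ≤ nK k T h := by exact_mod_cast nK_pos k T h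
  have h4 : (sK k T:ℝ)^1 ≤ (sK k T:ℝ)^6 := pow_le_pow_right₀ (by linarith) (by norm_num)
  have h5 : 1 ≤ T / nK k T h := by
    rw [le_div_iff₀ (by linarith)]
    rw [pow_one] at h4
    linarith
  have h6 : 0 ≤ T / (nK k T h : ℝ)^2 := by positivity
  unfold nextT
  linarith

lemma st_T_ge (h : ℕ → ℕ) (k : ℕ) : 100 + (k:ℝ) ≤ (st h k).2 := by
  induction k with
  | zero => simp [st]
  | succ k ih =>
    have := nextT_ge k (st h k).2 (h k) (by have : (0:ℝ) ≤ k := Nat.cast_nonneg k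
                                            linarith)
    simp only [st]
    push_cast
    linarith

lemma st_T_ge' (h : ℕ → ℕ) (k : ℕ) : 100 ≤ (st h k).2 := by
  have := st_T_ge h k
  have : (0:ℝ) ≤ k := Nat.cast_nonneg k
  linarith

lemma st_ok (h : ℕ → ℕ) (k : ℕ) : StepOK (sK k (st h k).2) (nK k (st h k).2 (h k)) (bK k (st h k).2)
    (st h k).1 (st h k).2 (st h (k+1)).1 := by
  have H : ∃ a', StepOK (sK k (st h k).2) (nK k (st h k).2 (h k)) (bK k (st h k).2) (st h k).1 (st h k).2 a' :=
    step_s11 _ _ _ (sK_pos _ _) (nK_pos _ _ _) (nK_le _ _ _) (bK_two _ _) (bK_le _ _) _ _ (sK_le _ _ (st_T_ge' h k))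
  have e : (st h (k+1)).1 = H.choose := by
    simp only [st, stepA]
    rw [dif_pos H]
  rw [e]
  exact H.choose_spec

lemma st_congr (h h' : ℕ → ℕ) (k : ℕ) (hh : ∀ i < k, h i = h' i) : st h k = st h' k := by
  induction k with
  | zero => rfl
  | succ k ih =>
    have e := ih (fun i hi => hh i (by omega))
    simp only [st]
    rw [e, hh k (by omega)]

noncomputable def GG (h : ℕ → ℕ) : ℝ := ⨆ k, (st h k).1

lemma st_mono (h : ℕ → ℕ) : Monotone fun k => (st h k).1 :=
  monotone_nat_of_le_succ fun k => (st_ok h k).1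

lemma st_anti (h : ℕ → ℕ) : Antitone fun k => (st h k).1 + Real.exp (-(st h k).2) :=
  antitone_nat_of_succ_le fun k => (st_ok h k).2.1

lemma st_le (h : ℕ → ℕ) (i j : ℕ) : (st h i).1 ≤ (st h j).1 + Real.exp (-(st h j).2) := by
  have h1 := st_mono h (le_max_left i j)
  have h2 := st_anti h (le_max_right i j)
  have := Real.exp_pos (-(st h (max i j)).2)
  simp only at h1 h2
  linarith

lemma GG_mem (h : ℕ → ℕ) (k : ℕ) : GG h ∈ Set.Icc (st h k).1 ((st h k).1 + Real.exp (-(st h k).2)) := by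
  constructor
  · apply le_ciSup (f := fun k => (st h k).1) _ k
    exact ⟨_, by rintro _ ⟨i, rfl⟩; exact st_le h i 0⟩
  · exact ciSup_le fun i => st_le h i k

lemma GG_continuous : Continuous GG := by
  rw [continuous_iff_continuousAt]
  intro h
  rw [ContinuousAt, Metric.tendsto_nhds]
  intro ε hε
  have ht : Tendsto (fun k : ℕ => Real.exp (-(k:ℝ))) atTop (nhds 0) :=
    Real.tendsto_exp_neg_atTop_nhds_zero.comp tendsto_natCast_atTop_atTop
  obtain ⟨k, hk⟩ := ((tendsto_order.1 ht).2 ε hε).exists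
  have hopen : PiNat.cylinder h k ∈ nhds h :=
    (PiNat.isOpen_cylinder _ h k).mem_nhds (PiNat.self_mem_cylinder h k)
  filter_upwards [hopen] with h' hh'
  have e : st h' k = st h k := st_congr _ _ _ (fun i hi => hh' i hi)
  have h1 := GG_mem h k
  have h2 := GG_mem h' k
  rw [e] at h2
  have h3 : Real.exp (-(st h k).2) ≤ Real.exp (-(k:ℝ)) := by
    apply Real.exp_le_exp.2
    have := st_T_ge h k
    linarith
  rw [Real.dist_eq, abs_lt]
  constructor <;> linarith [h1.1, h1.2, h2.1, h2.2]

lemma sK_tendsto (h : ℕ → ℕ) : Tendsto (fun k => sK k (st h k).2) atTop atTop := by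
  rw [tendsto_atTop]
  intro m
  obtain ⟨K, hK⟩ := exists_nat_ge (100 * (m:ℝ)^6)
  filter_upwards [eventually_ge_atTop (max m K)] with k hk
  apply le_sK
  · exact (le_max_left _ _).trans hk
  · have h1 : (K:ℝ) ≤ k := by exact_mod_cast (le_max_right _ _).trans hk
    have := st_T_ge h k
    linarith

/-! ### Abnormality -/

lemma not_simplyNormal_of_runs (b : ℕ) (hb : 2 ≤ b) (x η : ℝ) (hη : 0 < η)
    (H : ∀ K : ℕ, ∃ N ≥ K, ∃ N' : ℕ, (N:ℝ) + η * N' ≤ N' ∧ ∀ i, N ≤ i → i < N' → rdigit b x i = 0) :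
    ¬ SimplyNormal b x := by
  intro hS
  have h0 := hS 0 (by omega)
  have hb2 : (2:ℝ) ≤ b := by exact_mod_cast hb
  have hbi : (1:ℝ) / b ≤ 1/2 := one_div_le_one_div_of_le (by norm_num) hb2
  rw [Metric.tendsto_atTop] at h0
  obtain ⟨K, hK⟩ := h0 (η/8) (by positivity)
  obtain ⟨N, hN, N', hNN, hrun⟩ := H (K+1)
  have hNN0 : (N:ℝ) ≤ N' := by
    have : 0 ≤ η * N' := by positivity
    linarith
  have hNN1 : N ≤ N' := by exact_mod_cast hNN0
  have hNpos : (0:ℝ) < N := by exact_mod_cast (by omega : 0 < N)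
  have h1 := hK N (by omega)
  have h2 := hK N' (by omega)
  have hcount : ((rdigits b x N').count 0 : ℝ) = (rdigits b x N).count 0 + (N' - N) := by
    have : ∀ m, (∀ i, N ≤ i → i < N + m → rdigit b x i = 0) →
        (rdigits b x (N + m)).count 0 = (rdigits b x N).count 0 + m := by
      intro m
      induction m with
      | zero => simp
      | succ m ih =>
        intro hm
        have := ih (fun i h1 h2 => hm i h1 (by omega))
        unfold rdigits at this ⊢
        rw [← add_assoc, List.range_succ, List.map_append, List.count_append, this]
        simp [hm (N+m) (by omega) (by omega)]
        omega
    obtain ⟨m, rfl⟩ := Nat.exists_eq_add_of_le hNN1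
    rw [this m hrun]
    push_cast; ring
  rw [Real.dist_eq, abs_lt] at h1 h2
  have h3 : ((rdigits b x N).count 0 : ℝ) ≥ (1/b - η/8) * N := by
    have := h1.1
    have h4 : 1/b - η/8 ≤ ((rdigits b x N).count 0 : ℝ) / N := by linarith
    rwa [le_div_iff₀ hNpos] at h4
  have h4 : ((rdigits b x N').count 0 : ℝ) ≤ (1/b + η/8) * N' := by
    have h4 : ((rdigits b x N').count 0 : ℝ) / N' ≤ 1/b + η/8 := by linarith
    rwa [div_le_iff₀ (by linarith)] at h4
  have h5 : (1:ℝ)/b * (N' - N) ≤ 1/2 * (N' - N) := by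
    apply mul_le_mul_of_nonneg_right hbi; linarith
  have h6 : 0 < η * N' := by apply mul_pos hη; linarith
  have h7 : η * N ≤ η * N' := by gcongr
  nlinarith

lemma GG_abnormal (h : ℕ → ℕ) (b n : ℕ) (hb : 2 ≤ b)
    (H : ∀ J : ℕ, ∃ j ≥ J, h (Nat.pair (b-2) j) ≤ n) : ¬ SimplyNormal b (GG h) := by
  apply not_simplyNormal_of_runs b hb (GG h) (1 / (6 * ((n:ℝ)+1)^2)) (by positivity)
  intro K
  obtain ⟨k0, hk0⟩ := eventually_atTop.1 ((tendsto_atTop.1 (sK_tendsto h)) b)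
  obtain ⟨j, hj, hjn⟩ := H (max k0 (K * b))
  set k := Nat.pair (b-2) j with hk
  have hkj : j ≤ k := Nat.right_le_pair _ _
  have hs := hk0 k (((le_max_left _ _).trans hj).trans hkj)
  have hbk : bK k (st h k).2 = b := by
    unfold bK
    rw [hk, Nat.unpair_pair, ← hk]
    simp only
    rw [if_pos] <;> omega
  obtain ⟨_, _, ⟨N, N', hN, hNN, hrun⟩, _⟩ := st_ok h k
  rw [hbk] at hN hrun
  refine ⟨N, ?_, N', ?_, fun i h1 h2 => hrun (GG h) (GG_mem h (k+1)) i h1 h2⟩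
  · have h1 := st_T_ge h k
    have h2 : ((K * b : ℕ) : ℝ) ≤ k := by exact_mod_cast ((le_max_right _ _).trans hj).trans hkj
    have h3 : ((K * b : ℕ) : ℝ) ≤ ((N * b : ℕ) : ℝ) := by push_cast at h2 ⊢; linarith
    have h4 : K * b ≤ N * b := by exact_mod_cast h3
    exact Nat.le_of_mul_le_mul_right h4 (by omega)
  · have hn1 : (1:ℝ) ≤ nK k (st h k).2 (h k) := by exact_mod_cast nK_pos _ _ _
    have hn2 : (nK k (st h k).2 (h k) : ℝ) ≤ n + 1 := by
      have : nK k (st h k).2 (h k) ≤ n + 1 := (min_le_left _ _).trans (by omega)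
      exact_mod_cast this
    refine le_trans ?_ hNN
    rw [one_div, mul_comm, ← div_eq_mul_inv]
    gcongr

/-! ### Normality -/

lemma nextT_sub (n : ℕ) (T : ℝ) (hT : 0 ≤ T) (hn : 1 ≤ n) :
    T / n ≤ nextT n T - T ∧ nextT n T - T ≤ 2 * (T / n) := by
  have hn1 : (1:ℝ) ≤ n := by exact_mod_cast hn
  have h1 : 0 ≤ T / (n:ℝ)^2 := by positivity
  have h2 : T / (n:ℝ)^2 ≤ T / n := by
    apply div_le_div_of_nonneg_left hT (by linarith); nlinarith
  unfold nextT
  constructor <;> linarith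

lemma GG_weyl (h : ℕ → ℕ) (hh : Tendsto h atTop atTop) (c : ℕ) (hc : 2 ≤ c) (q : ℕ) (hq : 1 ≤ q) :
    Tendsto (fun L : ℕ => (∑ i ∈ Finset.range L, ee q c i (GG h)) / (L:ℂ)) atTop (nhds 0) := by
  set x := GG h with hx
  set T : ℕ → ℝ := fun k => (st h k).2 with hTdef
  set n : ℕ → ℕ := fun k => nK k (T k) (h k) with hndef
  have hTs : ∀ k, T (k+1) = nextT (n k) (T k) := fun k => rfl
  have hT100 : ∀ k, 100 ≤ T k := fun k => st_T_ge' h k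
  have hTk : ∀ k : ℕ, (k:ℝ) ≤ T k := fun k => by have := st_T_ge h k; simp only [hTdef]; linarith
  have hTtop : Tendsto T atTop atTop := tendsto_atTop_mono hTk tendsto_natCast_atTop_atTop
  have hn1 : ∀ k, 1 ≤ n k := fun k => nK_pos _ _ _
  have hinc : ∀ k, T k / n k ≤ T (k+1) - T k ∧ T (k+1) - T k ≤ 2 * (T k / n k) := fun k => by
    rw [hTs]; exact nextT_sub _ _ (by linarith [hT100 k]) (hn1 k)
  have hTmono : Monotone T := monotone_nat_of_le_succ fun k => by
    have := (hinc k).1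
    have h2 : 0 ≤ T k / n k := div_nonneg (by linarith [hT100 k]) (Nat.cast_nonneg _)
    linarith
  have hntop : Tendsto n atTop atTop := by
    rw [tendsto_atTop]
    intro m
    filter_upwards [(tendsto_atTop.1 hh) m, (tendsto_atTop.1 (sK_tendsto h)) m] with k h1 h2
    exact le_min (by omega) h2
  have hninv : Tendsto (fun k => 1 / (n k : ℝ)) atTop (nhds 0) :=
    tendsto_one_div_atTop_nhds_zero_nat.comp hntop
  set v : ℕ → ℂ := fun k => ∑ i ∈ Finset.Ico (idx c (T k)) (idx c (T (k+1))), ee q c i x with hv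
  have hvb : ∀ᶠ k in atTop, ‖v k‖ ≤ 5 * (1 / (n k : ℝ)) * (T (k+1) - T k) := by
    filter_upwards [(tendsto_atTop.1 (sK_tendsto h)) (max c q)] with k hk
    have h1 := (st_ok h k).2.2.2 x (GG_mem h (k+1)) c (Finset.mem_Icc.2 ⟨hc, by
      have := le_max_left c q; omega⟩) q (Finset.mem_Icc.2 ⟨hq, (le_max_right _ _).trans hk⟩)
    refine h1.trans ?_
    have hn1' : (1:ℝ) ≤ n k := by exact_mod_cast hn1 k
    calc 5 * (T k / (n k:ℝ)^2) = 5 * (1 / (n k : ℝ)) * (T k / n k) := by field_simp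
      _ ≤ _ := by gcongr; exact (hinc k).1
  have hvo : v =o[atTop] (fun k => T (k+1) - T k) := by
    rw [Asymptotics.isLittleO_iff]
    intro ε hε
    filter_upwards [hvb, (tendsto_order.1 hninv).2 (ε/5) (by positivity)] with k h1 h2
    refine h1.trans ?_
    have h3 : 0 ≤ T (k+1) - T k := by linarith [hTmono (Nat.le_succ k)]
    rw [Real.norm_of_nonneg h3]
    gcongr
    linarith
  have hsum : (fun k => ∑ j ∈ Finset.range k, v j) =o[atTop] (fun k => T k - T 0) := by
    have := hvo.sum_range (fun k => sub_nonneg.2 (hTmono (Nat.le_succ k))) (by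
      simp_rw [Finset.sum_range_sub]
      exact tendsto_atTop_add_const_right _ _ hTtop)
    simpa only [Finset.sum_range_sub] using this
  have htel : ∀ k, ∑ i ∈ Finset.range (idx c (T k)), ee q c i x =
      ∑ i ∈ Finset.range (idx c (T 0)), ee q c i x + ∑ j ∈ Finset.range k, v j := by
    intro k
    induction k with
    | zero => simp
    | succ k ih =>
      rw [Finset.sum_range_succ, ← add_assoc, ← ih, hv]
      exact (Finset.sum_range_add_sum_Ico _ (idx_mono c hc (hTmono (Nat.le_succ k)))).symm
  have hE : ∀ ε > 0, ∀ᶠ k in atTop, ‖∑ i ∈ Finset.range (idx c (T k)), ee q c i x‖ ≤ ε * T k := by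
    intro ε hε
    filter_upwards [(Asymptotics.isLittleO_iff.1 hsum) (half_pos hε),
      (tendsto_atTop.1 hTtop) (‖∑ i ∈ Finset.range (idx c (T 0)), ee q c i x‖ / (ε/2))] with k h1 h2
    rw [htel]
    refine (norm_add_le _ _).trans ?_
    rw [div_le_iff₀ (by positivity)] at h2
    rw [Real.norm_of_nonneg (by linarith [hTmono (Nat.zero_le k)])] at h1
    have := hT100 0
    nlinarith
  rw [Metric.tendsto_atTop]
  intro ε0 hε0
  have hcpos : (0:ℝ) < c := by positivity
  set ε := ε0 / (5 * c) with hε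
  have hεpos : 0 < ε := by positivity
  obtain ⟨K, hK⟩ := eventually_atTop.1 ((hE ε hεpos).and (((tendsto_order.1 hninv).2 (ε/2) (by positivity)).and
    ((tendsto_atTop.1 hTtop) (1/ε))))
  refine ⟨idx c (T K) + 1, fun L hL => ?_⟩
  have hidxtop : ∃ k, L < idx c (T k) := by
    obtain ⟨k, hk⟩ := ((tendsto_atTop.1 hTtop) ((L+1) * c)).exists
    refine ⟨k, ?_⟩
    have h1 := idx_ge c (T k)
    have h2 := log_le_nat c hc
    have h3 := log_ge_half c hc
    rw [div_le_iff₀ (by linarith)] at h1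
    have h4 : ((L:ℝ)+1) * c ≤ idx c (T k) * c := by
      refine hk.trans (h1.trans ?_); gcongr
    have h5 := le_of_mul_le_mul_right h4 hcpos
    have h6 : L + 1 ≤ idx c (T k) := by exact_mod_cast h5
    omega
  classical
  obtain ⟨k, hk1, hk2⟩ : ∃ k, idx c (T k) ≤ L ∧ L < idx c (T (k+1)) := by
    have hf := Nat.find_spec hidxtop
    have hne : Nat.find hidxtop ≠ 0 := by
      intro h0
      rw [h0] at hf
      have := idx_mono c hc (hTmono (Nat.zero_le K))
      omega
    refine ⟨Nat.find hidxtop - 1, ?_, ?_⟩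
    · have := Nat.find_min hidxtop (m := Nat.find hidxtop - 1) (by omega)
      omega
    · rwa [Nat.sub_add_cancel (by omega)]
  have hkK : K ≤ k := by
    by_contra hlt
    have := idx_mono c hc (hTmono (show k + 1 ≤ K by omega))
    omega
  obtain ⟨e1, e2, e3⟩ := hK k hkK
  have hTpos : 0 < T k := by linarith [hT100 k]
  have hn1' : (1:ℝ) ≤ n k := by exact_mod_cast hn1 k
  have e4 : T (k+1) - T k ≤ ε * T k := by
    refine (hinc k).2.trans ?_
    have : T k / n k = (1 / (n k:ℝ)) * T k := by ring
    rw [this]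
    nlinarith
  have e5 : ‖∑ i ∈ Finset.Ico (idx c (T k)) L, ee q c i x‖ ≤ 3/2 * (ε * T k) + 1 := by
    refine (norm_sum_le _ _).trans ?_
    simp only [ee_norm, Finset.sum_const, Nat.card_Ico, nsmul_eq_mul, mul_one]
    have h1 := idx_sub_le c hc (T k) (T (k+1)) (hTmono (Nat.le_succ k)) hTpos.le
    have h2 : ((L - idx c (T k) : ℕ):ℝ) ≤ ((idx c (T (k+1)) - idx c (T k) : ℕ) : ℝ) := by
      exact_mod_cast Nat.sub_le_sub_right hk2.le _
    linarith
  have e6 : 1 ≤ ε * T k := by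
    rw [div_le_iff₀ hεpos] at e3; linarith
  have e7 : ‖∑ i ∈ Finset.range L, ee q c i x‖ ≤ 4 * (ε * T k) := by
    rw [← Finset.sum_range_add_sum_Ico _ hk1]
    refine (norm_add_le _ _).trans ?_
    linarith
  have e8 : T k ≤ L * c := by
    have h1 := idx_ge c (T k)
    have h2 := log_le_nat c hc
    have h3 := log_ge_half c hc
    rw [div_le_iff₀ (by linarith)] at h1
    have h4 : (idx c (T k) : ℝ) ≤ L := by exact_mod_cast hk1
    refine h1.trans ?_
    gcongr
  have hLpos : (0:ℝ) < L := by
    by_contra hcon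
    nlinarith
  rw [dist_zero_right, norm_div, Complex.norm_natCast, div_lt_iff₀ hLpos]
  calc _ ≤ 4 * (ε * T k) := e7
    _ ≤ 4 * (ε * (L * c)) := by gcongr
    _ = 4/5 * (ε0 * L) := by rw [hε]; field_simp
    _ < ε0 * L := by
      have : 0 < ε0 * L := by positivity
      linarith

lemma GG_normal (h : ℕ → ℕ) (hh : Tendsto h atTop atTop) : AbsolutelyNormal (GG h) := by
  intro b hb l hl
  have : 2 ≤ b ^ l := hb.trans (Nat.le_self_pow (by omega) b)
  exact simplyNormal_of_weyl _ this _ fun q hq => GG_weyl h hh _ this q hq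


/-! ### Reduction from Baire space -/

open Classical in
/-- how many initial conditions `U n 0, ..., U n m` are confirmed by the first `K` values -/
noncomputable def cc (U : ℕ → ℕ → Set (ℕ → ℕ)) (f : ℕ → ℕ) (n K : ℕ) : ℕ :=
  ((Finset.range K).filter (fun m => ∀ j ≤ m, PiNat.cylinder f K ⊆ U n j)).card

theorem cc_congr (U : ℕ → ℕ → Set (ℕ → ℕ)) {f f' : ℕ → ℕ} {K : ℕ}
    (h : f' ∈ PiNat.cylinder f K) (n : ℕ) : cc U f' n K = cc U f n K := by
  unfold cc
  rw [PiNat.mem_cylinder_iff_eq.1 h]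

theorem cc_mono (U : ℕ → ℕ → Set (ℕ → ℕ)) (f : ℕ → ℕ) (n : ℕ) : Monotone (cc U f n) := by
  classical
  intro K K' h
  unfold cc
  apply Finset.card_le_card
  intro m hm
  simp only [Finset.mem_filter, Finset.mem_range] at hm ⊢
  exact ⟨lt_of_lt_of_le hm.1 h, fun j hj => (PiNat.cylinder_anti f h).trans (hm.2 j hj)⟩

theorem cc_unbounded (U : ℕ → ℕ → Set (ℕ → ℕ)) (hU : ∀ n m, IsOpen (U n m)) (f : ℕ → ℕ) (n : ℕ)
    (hf : ∀ m, f ∈ U n m) (M : ℕ) : ∃ K, M ≤ cc U f n K := by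
  classical
  have h1 : ∀ j, ∃ K, PiNat.cylinder f K ⊆ U n j := by
    intro j
    obtain ⟨s, ⟨x, K, rfl⟩, hfs, hs⟩ :=
      (PiNat.isTopologicalBasis_cylinders (fun _ : ℕ => ℕ)).exists_subset_of_mem_open (hf j) (hU n j)
    refine ⟨K, ?_⟩
    rw [PiNat.mem_cylinder_iff_eq.1 hfs]
    exact hs
  choose κ hκ using h1
  refine ⟨M + ∑ j ∈ Finset.range M, κ j, ?_⟩
  unfold cc
  calc M = (Finset.range M).card := (Finset.card_range M).symm
    _ ≤ _ := by
      apply Finset.card_le_card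
      intro m hm
      simp only [Finset.mem_filter, Finset.mem_range] at hm ⊢
      refine ⟨by omega, fun j hj => (PiNat.cylinder_anti f ?_).trans (hκ j)⟩
      have := Finset.single_le_sum (f := κ) (s := Finset.range M) (fun i _ => Nat.zero_le _)
        (Finset.mem_range.2 (lt_of_le_of_lt hj hm))
      omega

theorem cc_bounded (U : ℕ → ℕ → Set (ℕ → ℕ)) (f : ℕ → ℕ) (n m : ℕ)
    (hf : f ∉ U n m) (K : ℕ) : cc U f n K ≤ m := by
  classical
  unfold cc
  calc _ ≤ (Finset.range m).card := by
        apply Finset.card_le_card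
        intro i hi
        simp only [Finset.mem_filter, Finset.mem_range] at hi ⊢
        by_contra hc
        exact hf (hi.2 m (not_lt.1 hc) (PiNat.self_mem_cylinder f K))
    _ = m := Finset.card_range m

/-- the next stage after `k` treating the same base -/
def nxt (k : ℕ) : ℕ := Nat.pair k.unpair.1 (k.unpair.2 + 1)

theorem le_nxt (k : ℕ) : k ≤ nxt k := by
  conv_lhs => rw [← Nat.pair_unpair k]
  exact (Nat.pair_lt_pair_right _ (Nat.lt_succ_self _)).le

/-- the auxiliary sequence attached to a point of Baire space -/
noncomputable def hh (U : ℕ → ℕ → Set (ℕ → ℕ)) (f : ℕ → ℕ) (k : ℕ) : ℕ :=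
  sInf ({n | cc U f n k < cc U f n (nxt k)} ∪ {k})

theorem hh_continuous (U : ℕ → ℕ → Set (ℕ → ℕ)) : Continuous (hh U) := by
  refine continuous_pi fun k => continuous_iff_continuousAt.2 fun f => ?_
  have hev : (fun f' => hh U f' k) =ᶠ[nhds f] fun _ => hh U f k := by
    filter_upwards [(PiNat.isOpen_cylinder (fun _ : ℕ => ℕ) f (nxt k)).mem_nhds
      (PiNat.self_mem_cylinder f _)] with f' hf'
    unfold hh
    simp only [cc_congr U hf', cc_congr U (PiNat.cylinder_anti f (le_nxt k) hf')]
  exact continuousAt_const.congr hev.symm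

theorem hh_bounded (U : ℕ → ℕ → Set (ℕ → ℕ)) (hU : ∀ n m, IsOpen (U n m)) (f : ℕ → ℕ) (n : ℕ)
    (hf : ∀ m, f ∈ U n m) (β J : ℕ) : ∃ j ≥ J, hh U f (Nat.pair β j) ≤ n := by
  by_contra hc
  push Not at hc
  have h1 : ∀ i, cc U f n (Nat.pair β (J + i)) ≤ cc U f n (Nat.pair β J) := by
    intro i
    induction i with
    | zero => exact le_rfl
    | succ i ih =>
      refine le_trans ?_ ih
      by_contra hlt
      have h2 := hc (J + i) (Nat.le_add_right _ _)
      refine absurd h2 (not_lt.2 (Nat.sInf_le (Or.inl ?_)))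
      simpa [nxt, Nat.unpair_pair, add_assoc] using hlt
  obtain ⟨K, hK⟩ := cc_unbounded U hU f n hf (cc U f n (Nat.pair β J) + 1)
  have h3 := cc_mono U f n (show K ≤ Nat.pair β (J + K) from
    le_trans (Nat.le_add_left _ _) (Nat.right_le_pair _ _))
  have := h1 K
  omega

theorem hh_tendsto (U : ℕ → ℕ → Set (ℕ → ℕ)) (f : ℕ → ℕ)
    (hf : ∀ n, ∃ m, f ∉ U n m) : Tendsto (hh U f) atTop atTop := by
  have h1 : ∀ n, ∃ K, ∀ k ≥ K, cc U f n k = cc U f n K := by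
    intro n
    obtain ⟨m, hm⟩ := hf n
    have hb : (Set.range (cc U f n)).Finite :=
      (Set.finite_Iic m).subset (by rintro _ ⟨K, rfl⟩; exact cc_bounded U f n m hm K)
    obtain ⟨_, ⟨K, rfl⟩, hK⟩ := hb.exists_maximal ⟨_, ⟨0, rfl⟩⟩
    exact ⟨K, fun k hk => le_antisymm (hK ⟨k, rfl⟩ (cc_mono U f n hk)) (cc_mono U f n hk)⟩
  choose κ hκ using h1
  refine tendsto_atTop.2 fun M => ?_
  filter_upwards [eventually_ge_atTop (M + ∑ j ∈ Finset.range M, κ j)] with k hk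
  have hne : ({n | cc U f n k < cc U f n (nxt k)} ∪ {k} : Set ℕ).Nonempty := ⟨k, Or.inr rfl⟩
  rcases Nat.sInf_mem hne with h | h
  · change cc U f (hh U f k) k < cc U f (hh U f k) (nxt k) at h
    by_contra hlt
    have := Finset.single_le_sum (f := κ) (s := Finset.range M) (fun i _ => Nat.zero_le _)
      (Finset.mem_range.2 (not_le.1 hlt))
    have hk' : κ (hh U f k) ≤ k := by omega
    rw [hκ _ k hk', hκ _ _ (hk'.trans (le_nxt k))] at h
    exact lt_irrefl _ h
  · change hh U f k = k at h
    omega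

/-- The set of absolutely abnormal reals is `Σ⁰₃`-hard: for every `Σ⁰₃` subset `A` of
Baire space `ℕ^ℕ` (a countable union of countable intersections of open sets in the
product topology) there is a continuous `g : ℕ^ℕ → ℝ` such that `g` maps members of `A`
to absolutely abnormal reals and non-members to absolutely normal reals. -/
theorem absolutelyAbnormal_sigma03_hard
    (A : Set (ℕ → ℕ)) (U : ℕ → ℕ → Set (ℕ → ℕ))
    (hU : ∀ n m, IsOpen (U n m)) (hA : A = ⋃ n, ⋂ m, U n m) :
    ∃ g : (ℕ → ℕ) → ℝ, Continuous g ∧ ∀ f : ℕ → ℕ,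
      (f ∈ A → AbsolutelyAbnormal (g f)) ∧
      (f ∉ A → AbsolutelyNormal (g f)) := by
  refine ⟨fun f => GG (hh U f), GG_continuous.comp (hh_continuous U), fun f => ⟨fun hf => ?_, fun hf => ?_⟩⟩
  · rw [hA] at hf
    obtain ⟨n, hn⟩ := Set.mem_iUnion.1 hf
    rw [Set.mem_iInter] at hn
    intro b hb hN
    refine GG_abnormal (hh U f) b n hb (fun J => hh_bounded U hU f n hn (b - 2) J) ?_
    simpa using hN 1 le_rfl
  · rw [hA] at hf
    simp only [Set.mem_iUnion, Set.mem_iInter, not_exists, not_forall] at hf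
    exact GG_normal _ (hh_tendsto U f hf)
end
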